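/- arXiv:1709.07264 — 2 statements merged into one kernel-verified Lean document; each statement's English description precedes it below -/
import Mathlib

section
/- Let κ_{n,i} = k_n^{−r} with r > 0 and ε_{n,i} = k_n^{−1}. Let D be a dense subset of (0,∞) and M a measure on (0,∞] with M({∞}) = 0, M((x,∞)) < ∞ for all x ∈ D, and max_{1≤i≤k_n} | ∫_0^1 h_{n,i}·1{h_{n,i} > e^x − 1} dλ − M((x,∞)) | → 0 for every x ∈ D. Then T_n converges in distribution under P_(n) to ξ1 and under Q_(n) to ξ2, where: (a) if r < 1 then ξ1 ≡ 0 and ξ2 ≡ 0; (b) if r = 1 then, for j ∈ {1,2}, ξ_j is infinitely divisible with Lévy–Khintchine triplet (γ_j, 0, η_j), where dη1/dM(x) = 1/(e^x − 1) and dη2/dM(x) = e^x/(e^x − 1) for x > 0, and γ1, γ2 satisfy 0 = γ1 − ∫_{(0,∞)}(1 − e^x + x/(1+x²)) dη1(x) and γ2 = γ1 + ∫_{(0,∞)}(e^x − 1)·x/(1+x²) dη1(x); (c) if r > 1 then ξ1 ≡ −1 and the law of ξ2 is e^{−1}·δ_{−1} + (1 − e^{−1})·δ_{+∞}. -/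
open MeasureTheory Filter Topology

noncomputable section

/-- Mixture `Q = (1-e)·P + e·μ`. -/
def Qmix {α : Type*} [MeasurableSpace α] (P μ : Measure α) (e : ℝ) : Measure α :=
  (ENNReal.ofReal (1 - e)) • P + (ENNReal.ofReal e) • μ

/-- The uniform distribution on `(0,1)`. -/
def unif : Measure ℝ := volume.restrict (Set.Ioo 0 1)

/-- The signal density `x ↦ κ⁻¹ h(x/κ) 1{x ≤ κ} + r(x)` of the nonparametric
p-value model. -/
def sigDens (h : ℕ → ℕ → ℝ → ℝ) (κ : ℕ → ℕ → ℝ) (r : ℕ → ℕ → ℝ → ℝ) (n i : ℕ)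
    (x : ℝ) : ℝ :=
  (1 / κ n i) * h n i (x / κ n i) * (if x ≤ κ n i then 1 else 0) + r n i x

/-- The signal distribution `μ_{n,i}` of the nonparametric p-value model. -/
def sigM (h : ℕ → ℕ → ℝ → ℝ) (κ : ℕ → ℕ → ℝ) (r : ℕ → ℕ → ℝ → ℝ) (n i : ℕ) :
    Measure ℝ :=
  unif.withDensity (fun x => ENNReal.ofReal (sigDens h κ r n i x))

/-- Product null measure (product of uniforms). -/
def PprodU (k : ℕ → ℕ) (n : ℕ) : Measure (Fin (k n) → ℝ) :=
  Measure.pi (fun _ => unif)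

/-- Product alternative measure `Q_(n)` of the nonparametric p-value model. -/
def QprodPV (h : ℕ → ℕ → ℝ → ℝ) (κ : ℕ → ℕ → ℝ) (r : ℕ → ℕ → ℝ → ℝ)
    (ε : ℕ → ℕ → ℝ) (k : ℕ → ℕ) (n : ℕ) : Measure (Fin (k n) → ℝ) :=
  Measure.pi (fun i => Qmix unif (sigM h κ r n i) (ε n i))

/-- Total variation distance `‖P − Q‖ = sup_A |P(A) − Q(A)|`. -/
def tvDist {β : Type*} [MeasurableSpace β] (P Q : Measure β) : ℝ :=
  ⨆ A : {s : Set β // MeasurableSet s}, |(P A.1).toReal - (Q A.1).toReal|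

/-- Extended likelihood ratio `dQ/dP` with values in `[0,∞]`. -/
def elr {α : Type*} [MeasurableSpace α] (Q P : Measure α) (a : α) : ENNReal :=
  Q.rnDeriv (P + Q) a / P.rnDeriv (P + Q) a

/-- Log-likelihood ratio statistic `T_n` of the nonparametric p-value model. -/
def TstatPV (h : ℕ → ℕ → ℝ → ℝ) (κ : ℕ → ℕ → ℝ) (r : ℕ → ℕ → ℝ → ℝ)
    (ε : ℕ → ℕ → ℝ) (k : ℕ → ℕ) (n : ℕ) (y : Fin (k n) → ℝ) : EReal :=
  ∑ i : Fin (k n), ENNReal.log (elr (Qmix unif (sigM h κ r n i) (ε n i)) unif (y i))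

/-- Law of `T_n` under the null. -/
def lawPV_P (h : ℕ → ℕ → ℝ → ℝ) (κ : ℕ → ℕ → ℝ) (r : ℕ → ℕ → ℝ → ℝ)
    (ε : ℕ → ℕ → ℝ) (k : ℕ → ℕ) (n : ℕ) : Measure EReal :=
  (PprodU k n).map (TstatPV h κ r ε k n)

/-- Law of `T_n` under the alternative. -/
def lawPV_Q (h : ℕ → ℕ → ℝ → ℝ) (κ : ℕ → ℕ → ℝ) (r : ℕ → ℕ → ℝ → ℝ)
    (ε : ℕ → ℕ → ℝ) (k : ℕ → ℕ) (n : ℕ) : Measure EReal :=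
  (QprodPV h κ r ε k n).map (TstatPV h κ r ε k n)

/-- Weak convergence of a sequence of measures (convergence in distribution). -/
def WeakLim {β : Type*} [MeasurableSpace β] [TopologicalSpace β]
    (μs : ℕ → Measure β) (ν : Measure β) : Prop :=
  ∀ f : BoundedContinuousFunction β ℝ,
    Tendsto (fun n => ∫ x, f x ∂(μs n)) atTop (nhds (∫ x, f x ∂ν))

end
noncomputable section

/-- A Lévy measure: a measure on `ℝ∖{0}` (mass zero at `0`) with `∫ min(x²,1) dη < ∞`. -/
def IsLevyMeasure (η : Measure ℝ) : Prop :=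
  η {0} = 0 ∧ (∫⁻ x, ENNReal.ofReal (min (x ^ 2) 1) ∂η) ≠ ⊤

/-- Lévy–Khintchine exponent of the triplet `(γ, σ², η)`. -/
def levyExponent (γ σsq : ℝ) (η : Measure ℝ) (t : ℝ) : ℂ :=
  Complex.I * (γ : ℂ) * (t : ℂ) - (σsq : ℂ) * (t : ℂ) ^ 2 / 2 +
    ∫ x : ℝ, (Complex.exp (Complex.I * (t : ℂ) * (x : ℂ)) - 1 -
      Complex.I * (t : ℂ) * (x : ℂ) / (1 + (x : ℂ) ^ 2)) ∂η

/-- `ν` is the (automatically infinitely divisible) probability measure on `ℝ` with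
Lévy–Khintchine triplet `(γ, σ², η)`: its characteristic function is given by the
Lévy–Khintchine formula. -/
def HasLevyTriplet (ν : Measure ℝ) (γ σsq : ℝ) (η : Measure ℝ) : Prop :=
  IsLevyMeasure η ∧
    ∀ t : ℝ, (∫ x : ℝ, Complex.exp (Complex.I * (t : ℂ) * (x : ℂ)) ∂ν) =
      Complex.exp (levyExponent γ σsq η t)

/-- The restriction of a measure on `[−∞,∞]` to its real part, as a measure on `ℝ`. -/
def erealRealPart (ν : Measure EReal) : Measure ℝ :=
  (ν.restrict {x : EReal | x ≠ ⊥ ∧ x ≠ ⊤}).map EReal.toReal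

end
noncomputable section

/-- The zero perturbation. -/
def rzero : ℕ → ℕ → ℝ → ℝ := fun _ _ _ => 0

/-!
Under the null, the law of a log-likelihood ratio `∑ log q_i` has characteristic function
`∏ (1 + ∫ W (q_i))` with `W s = exp (i t log s) - 1`; under the alternative `W s` is replaced by
`s W s`. Write `ε = 1 / k` and `a = 1 / (k κ)`. The ratio of one observation is
`1 - ε + a h (x / κ)` for `x < κ` and `1 - ε` elsewhere. The summands being uniformly `O(ε)`, the
product converges to the exponential of the limit of their sum, and rescaling by `κ` turns that sum,
up to `o(1)`, into `-W' 1 + ∫ W (1 + a u) / (a u) dm_n` with `u = exp x - 1`, where `m_n` is the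
average over `i` of the law of `log (1 + h_i)` under the density `h_i`. The tail condition says that
`m_n` converges weakly to `M`, so only the limit of `a` matters:

* if `a → 0`, the integrand tends to `W' 1`, and the sum vanishes;
* if `a → 1`, the limit is a Lévy–Khintchine exponent, `exp (i t x) - 1` being integrated against
  `dM / (exp x - 1)`, or against `exp x dM / (exp x - 1)` under the alternative;
* if `a → ∞`, the integral vanishes under the null, which leaves `exp (-i t)`, the characteristic
  function of `δ_{-1}`; under the alternative, Le Cam's first lemma sends the missing mass
  `1 - exp (-1)` to `+∞`.
-/

section Products

lemma norm_sum_log_one_add_sub_sum_le {ι : Type*} (s : Finset ι) {z : ι → ℂ} {δ : ℝ}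
    (hδ : δ ≤ 1 / 2) (hz : ∀ i ∈ s, ‖z i‖ ≤ δ) :
    ‖∑ i ∈ s, Complex.log (1 + z i) - ∑ i ∈ s, z i‖ ≤ δ * ∑ i ∈ s, ‖z i‖ := by
  rw [← Finset.sum_sub_distrib, Finset.mul_sum]
  refine norm_sum_le_of_le s fun i hi => ?_
  have hzi : ‖z i‖ ≤ 1 / 2 := (hz i hi).trans hδ
  have hinv : (1 - ‖z i‖)⁻¹ ≤ 2 := by
    rw [inv_le_comm₀ (by linarith) two_pos]
    linarith
  calc ‖Complex.log (1 + z i) - z i‖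
      ≤ ‖z i‖ ^ 2 * (1 - ‖z i‖)⁻¹ / 2 := Complex.norm_log_one_add_sub_self_le (by linarith)
    _ ≤ ‖z i‖ ^ 2 * 2 / 2 := by gcongr
    _ = ‖z i‖ * ‖z i‖ := by ring
    _ ≤ δ * ‖z i‖ := by gcongr; exact hz i hi

/-- The sum of the second-order errors of `log (1 + z) ≈ z` is at most `δ n * C`. -/
lemma tendsto_prod_one_add_of_tendsto_sum {ι : ℕ → Type*} [∀ n, Fintype (ι n)]
    {z : ∀ n, ι n → ℂ} {δ : ℕ → ℝ} {C : ℝ} {L : ℂ} (hδ : Tendsto δ atTop (𝓝 0))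
    (hz : ∀ n i, ‖z n i‖ ≤ δ n) (hC : ∀ n, ∑ i, ‖z n i‖ ≤ C)
    (hL : Tendsto (fun n => ∑ i, z n i) atTop (𝓝 L)) :
    Tendsto (fun n => ∏ i, (1 + z n i)) atTop (𝓝 (Complex.exp L)) := by
  have hsmall : ∀ᶠ n in atTop, |δ n| ≤ 1 / 2 :=
    (tendsto_zero_iff_abs_tendsto_zero δ |>.1 hδ).eventually (eventually_le_nhds (by norm_num))
  have hlog : Tendsto (fun n => ∑ i, Complex.log (1 + z n i)) atTop (𝓝 L) := by
    have hdiff : Tendsto (fun n => ∑ i, Complex.log (1 + z n i) - ∑ i, z n i) atTop (𝓝 0) := by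
      refine squeeze_zero_norm' (a := fun n => |δ n| * C) ?_ (by simpa using hδ.abs.mul_const C)
      filter_upwards [hsmall] with n hn
      refine (norm_sum_log_one_add_sub_sum_le Finset.univ hn
        fun i _ => (hz n i).trans (le_abs_self _)).trans ?_
      gcongr
      exact hC n
    simpa using hdiff.add hL
  refine ((Complex.continuous_exp.tendsto L).comp hlog).congr' ?_
  filter_upwards [hsmall] with n hn
  simp only [Function.comp_apply, Complex.exp_sum]
  refine Finset.prod_congr rfl fun i _ => Complex.exp_log fun h0 => ?_
  have hzi : z n i = -1 := by linear_combination h0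
  have hnorm := (hz n i).trans ((le_abs_self _).trans hn)
  rw [hzi, norm_neg, norm_one] at hnorm
  norm_num at hnorm

end Products

section WeakConvergence

variable {Ω : Type*} [MeasurableSpace Ω] [TopologicalSpace Ω]

lemma weakLim_iff_tendsto_probabilityMeasure [OpensMeasurableSpace Ω] {μs : ℕ → Measure Ω}
    {ν : Measure Ω} [∀ n, IsProbabilityMeasure (μs n)] [IsProbabilityMeasure ν] :
    WeakLim μs ν ↔ Tendsto (β := ProbabilityMeasure Ω) (fun n => ⟨μs n, inferInstance⟩) atTop
      (𝓝 ⟨ν, inferInstance⟩) :=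
  (ProbabilityMeasure.tendsto_iff_forall_integral_tendsto
    (μs := fun n => ⟨μs n, inferInstance⟩) (μ := ⟨ν, inferInstance⟩)).symm

lemma WeakLim.of_shift {μs : ℕ → Measure Ω} {ν : Measure Ω} (N : ℕ)
    (h : WeakLim (fun n => μs (n + N)) ν) : WeakLim μs ν := fun f =>
  (tendsto_add_atTop_iff_nat (f := fun n => ∫ x, f x ∂μs n) N).1 (h f)

lemma WeakLim.map {Ω' : Type*} [MeasurableSpace Ω'] [TopologicalSpace Ω'] [BorelSpace Ω']
    [BorelSpace Ω] {μs : ℕ → Measure Ω} {ν : Measure Ω}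
    (h : WeakLim μs ν) {f : Ω → Ω'} (hf : Continuous f) :
    WeakLim (fun n => (μs n).map f) (ν.map f) := by
  intro g
  have hmap (m : Measure Ω) : ∫ y, g y ∂m.map f = ∫ x, g (f x) ∂m :=
    integral_map hf.aemeasurable g.continuous.aestronglyMeasurable
  simp only [hmap]
  exact h (g.compContinuous ⟨f, hf⟩)

/-- The measures `dirac (a n) ⊗ μs n` converge weakly to `dirac x ⊗ ν`. -/
lemma WeakLim.tendsto_integral_prodMk {X 𝕜 : Type*} [RCLike 𝕜] [TopologicalSpace X]
    [MeasurableSpace X] [OpensMeasurableSpace X] [SecondCountableTopology X]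
    [TopologicalSpace.PseudoMetrizableSpace X] [OpensMeasurableSpace Ω]
    [SecondCountableTopology Ω] [TopologicalSpace.PseudoMetrizableSpace Ω]
    {μs : ℕ → Measure Ω} {ν : Measure Ω} [∀ n, IsProbabilityMeasure (μs n)]
    [IsProbabilityMeasure ν] (h : WeakLim μs ν) {a : ℕ → X} {x : X}
    (ha : Tendsto a atTop (𝓝 x)) {F : X × Ω → 𝕜} (hF : Continuous F) {C : ℝ}
    (hC : ∀ p, ‖F p‖ ≤ C) :
    Tendsto (fun n => ∫ ω, F (a n, ω) ∂μs n) atTop (𝓝 (∫ ω, F (x, ω) ∂ν)) := by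
  have hprod := (ProbabilityMeasure.continuous_prod.tendsto _).comp
    (((continuous_diracProba.tendsto x).comp ha).prodMk_nhds
      (weakLim_iff_tendsto_probabilityMeasure.1 h))
  have hF' := (ProbabilityMeasure.tendsto_iff_forall_integral_rclike_tendsto 𝕜).1 hprod
    (BoundedContinuousFunction.ofNormedAddCommGroup F hF C hC)
  have hint (y : X) (m : Measure Ω) [IsProbabilityMeasure m] :
      ∫ p, F p ∂(Measure.dirac y).prod m = ∫ ω, F (y, ω) ∂m := by
    rw [Measure.dirac_prod, integral_map (by fun_prop) hF.aestronglyMeasurable]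
  rw [← hint x ν]
  simp only [← hint]
  exact hF'

lemma weakLim_of_tendsto_charFun {E : Type*} [NormedAddCommGroup E] [InnerProductSpace ℝ E]
    [FiniteDimensional ℝ E] [MeasurableSpace E] [BorelSpace E] {μs : ℕ → Measure E}
    {ν : Measure E} [∀ n, IsProbabilityMeasure (μs n)] [IsProbabilityMeasure ν]
    (h : ∀ t, Tendsto (fun n => charFun (μs n) t) atTop (𝓝 (charFun ν t))) : WeakLim μs ν :=
  weakLim_iff_tendsto_probabilityMeasure.2 (ProbabilityMeasure.tendsto_of_tendsto_charFun h)

/-- Continuity at `0` gives tightness, and any cluster point has characteristic function `φ`. -/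
lemma exists_weakLim_of_tendsto_charFun {E : Type*} [NormedAddCommGroup E]
    [InnerProductSpace ℝ E] [FiniteDimensional ℝ E] [MeasurableSpace E] [BorelSpace E]
    {μs : ℕ → Measure E} [∀ n, IsProbabilityMeasure (μs n)] {φ : E → ℂ} (hφ : ContinuousAt φ 0)
    (h : ∀ t, Tendsto (fun n => charFun (μs n) t) atTop (𝓝 (φ t))) :
    ∃ ν : Measure E, IsProbabilityMeasure ν ∧ charFun ν = φ ∧ WeakLim μs ν := by
  let P : ℕ → ProbabilityMeasure E := fun n => ⟨μs n, inferInstance⟩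
  have hcompact : IsCompact (closure (Set.range P)) := by
    refine isCompact_closure_of_isTightMeasureSet ?_
    have hrange : {m | ∃ p ∈ Set.range P, (p : Measure E) = m} = Set.range μs := by
      ext m
      exact ⟨fun ⟨_, ⟨n, hn⟩, hm⟩ => ⟨n, hm ▸ hn ▸ rfl⟩, fun ⟨n, hn⟩ => ⟨P n, ⟨n, rfl⟩, hn⟩⟩
    exact hrange ▸ isTightMeasureSet_of_tendsto_charFun hφ h
  obtain ⟨ν, -, hν⟩ := hcompact.exists_mapClusterPt (f := atTop) (u := P)
    (le_principal_iff.2 <| mem_map.2 <| Eventually.of_forall fun n => subset_closure ⟨n, rfl⟩)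
  obtain ⟨U, hU, hUν⟩ := mapClusterPt_iff_ultrafilter.1 hν
  have hcharFun : charFun (ν : Measure E) = φ := by
    funext t
    rw [ProbabilityMeasure.tendsto_iff_forall_integral_rclike_tendsto ℂ] at hUν
    refine tendsto_nhds_unique ?_ ((h t).mono_left hU)
    simp only [charFun_eq_integral_innerProbChar]
    exact hUν (BoundedContinuousFunction.innerProbChar t)
  exact ⟨ν, inferInstance, hcharFun, weakLim_of_tendsto_charFun (by simpa [hcharFun] using h)⟩

end WeakConvergence

section WithDensity

variable {α E : Type*} [MeasurableSpace α] {μ : Measure α} [NormedAddCommGroup E]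
  [NormedSpace ℝ E] {f : α → ℝ}

lemma integral_withDensity_ofReal (hf : Measurable f) (hf0 : 0 ≤ᵐ[μ] f) (g : α → E) :
    ∫ x, g x ∂μ.withDensity (fun x => ENNReal.ofReal (f x)) = ∫ x, f x • g x ∂μ := by
  rw [integral_withDensity_eq_integral_toReal_smul hf.ennreal_ofReal
    (Eventually.of_forall fun _ => ENNReal.ofReal_lt_top)]
  refine integral_congr_ae (hf0.mono fun x hx => ?_)
  simp only [ENNReal.toReal_ofReal hx]

lemma integrable_withDensity_ofReal_iff (hf : Measurable f) (hf0 : 0 ≤ᵐ[μ] f) {g : α → E} :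
    Integrable g (μ.withDensity fun x => ENNReal.ofReal (f x)) ↔
      Integrable (fun x => f x • g x) μ := by
  rw [integrable_withDensity_iff_integrable_smul' hf.ennreal_ofReal
    (Eventually.of_forall fun _ => ENNReal.ofReal_lt_top)]
  refine integrable_congr (hf0.mono fun x hx => ?_)
  simp only [ENNReal.toReal_ofReal hx]

end WithDensity

section Tails

lemma weakLim_of_tendsto_Ioi {α : Type*} [LinearOrder α] [TopologicalSpace α] [OrderTopology α]
    [DenselyOrdered α] [NoMinOrder α] [NoMaxOrder α] [SecondCountableTopology α]
    [MeasurableSpace α] [BorelSpace α] {μs : ℕ → Measure α} {ν : Measure α}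
    [∀ n, IsProbabilityMeasure (μs n)] [IsProbabilityMeasure ν] {D : Set α} (hD : Dense D)
    (h : ∀ x ∈ D, Tendsto (fun n => (μs n).real (Set.Ioi x)) atTop (𝓝 (ν.real (Set.Ioi x)))) :
    WeakLim μs ν := by
  have hIoc (m : Measure α) [IsFiniteMeasure m] {a b : α} (hab : a ≤ b) :
      m.real (Set.Ioc a b) = m.real (Set.Ioi a) - m.real (Set.Ioi b) := by
    rw [← Set.Ioc_union_Ioi_eq_Ioi hab,
      measureReal_union (Set.Ioc_disjoint_Ioi le_rfl) measurableSet_Ioi, add_sub_cancel_right]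
  rw [weakLim_iff_tendsto_probabilityMeasure]
  refine (isPiSystem_Ioc_mem D D).tendsto_probabilityMeasure_of_tendsto_of_mem ?_ ?_ ?_
  · rintro s ⟨a, -, b, -, -, rfl⟩
    exact measurableSet_Ioc
  · intro u hu x hx
    obtain ⟨l, r, ⟨hlx, hxr⟩, hlr⟩ := mem_nhds_iff_exists_Ioo_subset.1 (hu.mem_nhds hx)
    obtain ⟨a, ha, hla, hax⟩ := hD.exists_between hlx
    obtain ⟨b, hb, hxb, hbr⟩ := hD.exists_between hxr
    exact ⟨Set.Ioc a b, ⟨a, ha, b, hb, hax.trans hxb, rfl⟩, Ioc_mem_nhds hax hxb,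
      (Set.Ioc_subset_Ioo_right hbr).trans ((Set.Ioo_subset_Ioo_left hla.le).trans hlr)⟩
  · rintro s ⟨a, ha, b, hb, hab, rfl⟩
    refine NNReal.tendsto_coe.1 ?_
    change Tendsto (fun n => (μs n).real (Set.Ioc a b)) atTop (𝓝 (ν.real (Set.Ioc a b)))
    simpa only [hIoc _ hab.le] using (h a ha).sub (h b hb)

variable {μs : ℕ → Measure ℝ} [∀ n, IsProbabilityMeasure (μs n)] {M : Measure ℝ} {D : Set ℝ}
  {φ : ℝ → ℝ}

lemma isProbabilityMeasure_of_tendsto_Ioi (hD : D ⊆ Set.Ioi 0)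
    (hDdense : Set.Ioi 0 ⊆ closure D) (hM0 : M (Set.Iic 0) = 0)
    (hMfin : ∀ x ∈ D, M (Set.Ioi x) ≠ ⊤)
    (h : ∀ x ∈ D, Tendsto (fun n => (μs n).real (Set.Ioi x)) atTop (𝓝 (M.real (Set.Ioi x))))
    (hφ : Tendsto φ (𝓝[>] 0) (𝓝 0)) (hμφ : ∀ n, ∀ x > 0, (μs n).real (Set.Iic x) ≤ φ x) :
    IsProbabilityMeasure M := by
  have hglb : IsGLB D 0 := isGLB_of_mem_closure (fun x hx => (hD hx).le)
    (closure_minimal hDdense isClosed_closure (by simp [closure_Ioi]))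
  obtain ⟨u, hu_anti, -, hu, huD⟩ := hglb.exists_seq_antitone_tendsto
    (closure_nonempty_iff.1 ⟨1, hDdense (Set.mem_Ioi.2 one_pos)⟩)
  have hu' : Tendsto u atTop (𝓝[>] 0) :=
    tendsto_nhdsWithin_iff.2 ⟨hu, Eventually.of_forall fun n => hD (huD n)⟩
  have hlower (m : ℕ) : 1 - φ (u m) ≤ M.real (Set.Ioi (u m)) :=
    ge_of_tendsto (h _ (huD m)) <| Eventually.of_forall fun n => by
      rw [← Set.compl_Iic, probReal_compl_eq_one_sub measurableSet_Iic]
      exact sub_le_sub_left (hμφ n _ (hD (huD m))) 1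
  have hupper (m : ℕ) : M.real (Set.Ioi (u m)) ≤ 1 :=
    le_of_tendsto (h _ (huD m)) <| Eventually.of_forall fun n => measureReal_le_one
  have hone : Tendsto (fun m => M (Set.Ioi (u m))) atTop (𝓝 1) := by
    rw [← ENNReal.tendsto_toReal_iff (fun m => hMfin _ (huD m)) ENNReal.one_ne_top]
    exact tendsto_of_tendsto_of_tendsto_of_le_of_le
      (by simpa using (hφ.comp hu').const_sub 1) tendsto_const_nhds hlower hupper
  have hunion : Tendsto (fun m => M (Set.Ioi (u m))) atTop (𝓝 (M (Set.Ioi 0))) := by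
    have hrange : IsGLB (Set.range u) 0 := isGLB_of_tendsto_atTop hu_anti hu
    rw [← hrange.iUnion_Ioi_eq]
    exact tendsto_measure_iUnion_atTop fun i j hij => Set.Ioi_subset_Ioi (hu_anti hij)
  refine ⟨?_⟩
  rw [← Set.Iic_union_Ioi (a := (0 : ℝ)), measure_union (Set.Iic_disjoint_Ioi le_rfl)
    measurableSet_Ioi, hM0, zero_add]
  exact tendsto_nhds_unique hunion hone

lemma weakLim_of_tendsto_Ioi_pos [IsProbabilityMeasure M] (hDdense : Set.Ioi 0 ⊆ closure D)
    (hM0 : M (Set.Iic 0) = 0) (hμ0 : ∀ n, μs n (Set.Iic 0) = 0)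
    (h : ∀ x ∈ D, Tendsto (fun n => (μs n).real (Set.Ioi x)) atTop (𝓝 (M.real (Set.Ioi x)))) :
    WeakLim μs M := by
  have hdense : Dense (D ∪ Set.Iic 0) := fun x =>
    (le_or_gt x 0).elim (fun hx => subset_closure (Or.inr hx))
      fun hx => closure_mono Set.subset_union_left (hDdense hx)
  have hone (m : Measure ℝ) [IsProbabilityMeasure m] (hm : m (Set.Iic 0) = 0) {x : ℝ}
      (hx : x ≤ 0) : m.real (Set.Ioi x) = 1 := by
    rw [← Set.compl_Iic, probReal_compl_eq_one_sub measurableSet_Iic, measureReal_def,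
      measure_mono_null (Set.Iic_subset_Iic.2 hx) hm, ENNReal.toReal_zero, sub_zero]
  refine weakLim_of_tendsto_Ioi hdense fun x hx => ?_
  rcases hx with hx | hx
  · exact h x hx
  · simp only [hone _ (hμ0 _) hx, hone M hM0 hx, tendsto_const_nhds]

end Tails

section LeCam

variable {μs : ℕ → Measure ℝ} {ν : Measure ℝ} [∀ n, IsProbabilityMeasure (μs n)]
  [IsProbabilityMeasure ν]

lemma WeakLim.lintegral_le {Ω : Type*} [MeasurableSpace Ω] [TopologicalSpace Ω]
    [HasOuterApproxClosed Ω] [BorelSpace Ω] {μs : ℕ → Measure Ω} {ν : Measure Ω}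
    [∀ n, IsProbabilityMeasure (μs n)] [IsProbabilityMeasure ν] (h : WeakLim μs ν) {w : Ω → ℝ}
    (hw : Continuous w) (hw0 : 0 ≤ w) {c : ENNReal}
    (hc : ∀ n, ∫⁻ x, ENNReal.ofReal (w x) ∂μs n ≤ c) : ∫⁻ x, ENNReal.ofReal (w x) ∂ν ≤ c := by
  have hopen := fun s hs => ProbabilityMeasure.le_liminf_measure_open_of_tendsto
    (weakLim_iff_tendsto_probabilityMeasure.1 h) (G := s) hs
  refine (lintegral_le_liminf_lintegral_of_forall_isOpen_measure_le_liminf_measure hw hw0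
    hopen).trans ?_
  exact liminf_le_of_le (by isBoundedDefault) fun b hb => hb.exists.elim fun n hn => hn.trans (hc n)

/-- The approximant is `exp * softThreshold δ h`, which vanishes near `+∞` as `h` does. -/
lemma exists_boundedContinuous_near_exp_mul {h : ℝ → ℝ} (hc : Continuous h) {B : ℝ}
    (hB : ∀ x, |h x| ≤ B) (h0 : Tendsto h atTop (𝓝 0)) {δ : ℝ} (hδ : 0 < δ) :
    ∃ g : BoundedContinuousFunction ℝ ℝ, ∀ x, |Real.exp x * h x - g x| ≤ δ * Real.exp x := by
  let clip : ℝ → ℝ := fun x => max (-δ) (min δ (h x))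
  have hclip (x : ℝ) : |clip x| ≤ δ :=
    abs_le.2 ⟨le_max_left _ _, max_le (by linarith) (min_le_left _ _)⟩
  obtain ⟨A, hA⟩ := eventually_atTop.1
    (h0.abs.eventually (by simpa using eventually_le_nhds hδ) : ∀ᶠ x in atTop, |h x| ≤ δ)
  have hbound (x : ℝ) : ‖Real.exp x * (h x - clip x)‖ ≤ Real.exp A * (B + δ) := by
    have hBδ : 0 ≤ B + δ := add_nonneg ((abs_nonneg _).trans (hB 0)) hδ.le
    rcases le_total x A with hx | hx
    · rw [norm_mul, Real.norm_eq_abs, Real.abs_exp]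
      gcongr
      exact (norm_sub_le _ _).trans (add_le_add (hB x) (hclip x))
    · have heq : clip x = h x := by
        obtain ⟨hl, hu⟩ := abs_le.1 (hA x hx)
        simp only [clip, min_eq_right hu, max_eq_right hl]
      rw [heq, sub_self, mul_zero, norm_zero]
      positivity
  refine ⟨.ofNormedAddCommGroup (fun x => Real.exp x * (h x - clip x)) (by fun_prop) _ hbound,
    fun x => ?_⟩
  calc |Real.exp x * h x - Real.exp x * (h x - clip x)|
      = |clip x| * Real.exp x := by rw [← mul_sub, sub_sub_cancel, abs_mul, Real.abs_exp, mul_comm]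
    _ ≤ δ * Real.exp x := by gcongr; exact hclip x

lemma integrable_exp_of_lintegral_exp_le_one {m : Measure ℝ}
    (hm : ∫⁻ x, ENNReal.ofReal (Real.exp x) ∂m ≤ 1) : Integrable Real.exp m :=
  ⟨by fun_prop, (hasFiniteIntegral_iff_ofReal
    (Eventually.of_forall fun x => (Real.exp_pos x).le)).2 (hm.trans_lt ENNReal.one_lt_top)⟩

lemma abs_integral_le_of_abs_le_mul_exp {m : Measure ℝ}
    (hm : ∫⁻ x, ENNReal.ofReal (Real.exp x) ∂m ≤ 1) {f : ℝ → ℝ} {δ : ℝ} (hδ : 0 ≤ δ)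
    (hf : ∀ x, |f x| ≤ δ * Real.exp x) : |∫ x, f x ∂m| ≤ δ := by
  have hexp_le : ∫ x, Real.exp x ∂m ≤ 1 := by
    rw [integral_eq_lintegral_of_nonneg_ae (Eventually.of_forall fun x => (Real.exp_pos x).le)
      (by fun_prop)]
    exact ENNReal.toReal_le_of_le_ofReal zero_le_one (by simpa using hm)
  calc |∫ x, f x ∂m| ≤ ∫ x, δ * Real.exp x ∂m :=
        norm_integral_le_of_norm_le (f := f)
          ((integrable_exp_of_lintegral_exp_le_one hm).const_mul δ) (Eventually.of_forall hf)
    _ ≤ δ := by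
        rw [integral_const_mul]
        exact mul_le_of_le_one_right hδ hexp_le

lemma WeakLim.tendsto_integral_exp_mul (hμν : WeakLim μs ν)
    (hμ : ∀ n, ∫⁻ x, ENNReal.ofReal (Real.exp x) ∂μs n ≤ 1) {h : ℝ → ℝ} (hc : Continuous h)
    {B : ℝ} (hB : ∀ x, |h x| ≤ B) (h0 : Tendsto h atTop (𝓝 0)) :
    Tendsto (fun n => ∫ x, Real.exp x * h x ∂μs n) atTop (𝓝 (∫ x, Real.exp x * h x ∂ν)) := by
  have hν : ∫⁻ x, ENNReal.ofReal (Real.exp x) ∂ν ≤ 1 :=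
    hμν.lintegral_le Real.continuous_exp (fun x => (Real.exp_pos x).le) hμ
  refine Metric.tendsto_atTop'.2 fun r hr => ?_
  obtain ⟨g, hg⟩ := exists_boundedContinuous_near_exp_mul hc hB h0 (δ := r / 3) (by positivity)
  have happrox (m : Measure ℝ) [IsProbabilityMeasure m]
      (hm : ∫⁻ x, ENNReal.ofReal (Real.exp x) ∂m ≤ 1) :
      |∫ x, Real.exp x * h x ∂m - ∫ x, g x ∂m| ≤ r / 3 := by
    rw [← integral_sub ((integrable_exp_of_lintegral_exp_le_one hm).mul_bdd
      hc.aestronglyMeasurable (Eventually.of_forall hB)) (g.integrable m)]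
    exact abs_integral_le_of_abs_le_mul_exp hm (by positivity) hg
  obtain ⟨N, hN⟩ := Metric.tendsto_atTop'.1 (hμν g) (r / 3) (by positivity)
  refine ⟨N, fun n hn => ?_⟩
  have hn' := hN n hn
  rw [Real.dist_eq, abs_lt] at hn' ⊢
  obtain ⟨hμl, hμu⟩ := abs_le.1 (happrox (μs n) (hμ n))
  obtain ⟨hνl, hνu⟩ := abs_le.1 (happrox ν hν)
  constructor <;> linarith

lemma integral_map_coe_add_smul_dirac_top {m : Measure ℝ} (hm : m Set.univ ≤ 1)
    (f : BoundedContinuousFunction EReal ℝ) :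
    ∫ y, f y ∂(m.map ((↑) : ℝ → EReal) + (1 - m Set.univ) • Measure.dirac ⊤) =
      ∫ x : ℝ, (f x - f ⊤) ∂m + f ⊤ := by
  have : IsFiniteMeasure m := ⟨hm.trans_lt ENNReal.one_lt_top⟩
  have hc : Continuous fun x : ℝ => f x := f.continuous.comp continuous_coe_real_ereal
  have hint : Integrable (fun x : ℝ => f x) m := .of_bound hc.aestronglyMeasurable ‖f‖
    (Eventually.of_forall fun x => f.norm_coe_le_norm x)
  have hfin : 1 - m Set.univ ≠ ⊤ := (tsub_le_self.trans_lt ENNReal.one_lt_top).ne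
  have : IsFiniteMeasure (m.map ((↑) : ℝ → EReal)) := inferInstance
  rw [integral_add_measure (f.integrable _) ((f.integrable _).smul_measure hfin),
    integral_map measurable_coe_real_ereal.aemeasurable f.continuous.aestronglyMeasurable,
    integral_smul_measure, integral_dirac, integral_sub hint (integrable_const _),
    integral_const, ENNReal.toReal_sub_of_le hm ENNReal.one_ne_top, measureReal_def]
  simp only [ENNReal.toReal_one, smul_eq_mul]
  ring

/-- Le Cam's first lemma: the mass that the exponential tilts of `μs n` lose in the limit escapes
to `+∞`. -/
lemma WeakLim.map_coe_withDensity_exp (hμν : WeakLim μs ν)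
    (hμ : ∀ n, ∫⁻ x, ENNReal.ofReal (Real.exp x) ∂μs n = 1) :
    WeakLim (fun n => ((μs n).withDensity fun x => ENNReal.ofReal (Real.exp x)).map
        ((↑) : ℝ → EReal))
      ((ν.withDensity fun x => ENNReal.ofReal (Real.exp x)).map ((↑) : ℝ → EReal) +
        (1 - ∫⁻ x, ENNReal.ofReal (Real.exp x) ∂ν) • Measure.dirac ⊤) := by
  have hν : ∫⁻ x, ENNReal.ofReal (Real.exp x) ∂ν ≤ 1 :=
    hμν.lintegral_le Real.continuous_exp (fun x => (Real.exp_pos x).le) fun n => (hμ n).le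
  have hmass (m : Measure ℝ) : (m.withDensity fun x => ENNReal.ofReal (Real.exp x)) Set.univ =
      ∫⁻ x, ENNReal.ofReal (Real.exp x) ∂m := by
    rw [withDensity_apply _ MeasurableSet.univ, setLIntegral_univ]
  have hexpand (m : Measure ℝ) (hm : ∫⁻ x, ENNReal.ofReal (Real.exp x) ∂m ≤ 1)
      (f : BoundedContinuousFunction EReal ℝ) :
      ∫ y, f y ∂((m.withDensity fun x => ENNReal.ofReal (Real.exp x)).map ((↑) : ℝ → EReal) +
        (1 - ∫⁻ x, ENNReal.ofReal (Real.exp x) ∂m) • Measure.dirac ⊤) =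
      ∫ x : ℝ, Real.exp x * (f x - f ⊤) ∂m + f ⊤ := by
    rw [← hmass, integral_map_coe_add_smul_dirac_top ((hmass m).trans_le hm),
      integral_withDensity_ofReal Real.measurable_exp (ae_of_all _ fun x => (Real.exp_pos x).le)]
    rfl
  intro f
  have hlim : Tendsto (fun x : ℝ => f x - f ⊤) atTop (𝓝 0) := by
    simpa using ((f.continuous.tendsto ⊤).comp EReal.tendsto_coe_atTop).sub_const (f ⊤)
  have hmain := (hμν.tendsto_integral_exp_mul (fun n => (hμ n).le) (h := fun x => f x - f ⊤)
    ((f.continuous.comp continuous_coe_real_ereal).sub continuous_const)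
    (fun x => (norm_sub_le (f x) (f ⊤)).trans
      (add_le_add (f.norm_coe_le_norm x) (f.norm_coe_le_norm ⊤))) hlim).add_const (f ⊤)
  rw [hexpand ν hν]
  refine hmain.congr fun n => ?_
  rw [← hexpand (μs n) (hμ n).le, hμ n, tsub_self, zero_smul, add_zero]

end LeCam

section LikelihoodRatios

variable {α ι : Type*} [Fintype ι]

/-- The log-likelihood ratio, at the observation `y`, of the product of the densities `q i`. -/
def logLikelihoodRatio (q : ι → α → ℝ) (y : ι → α) : ℝ :=
  ∑ i, Real.log (q i (y i))

lemma exp_logLikelihoodRatio {q : ι → α → ℝ} (hpos : ∀ i x, 0 < q i x) (y : ι → α) :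
    Real.exp (logLikelihoodRatio q y) = ∏ i, q i (y i) := by
  rw [logLikelihoodRatio, Real.exp_sum]
  exact Finset.prod_congr rfl fun i _ => Real.exp_log (hpos i _)

lemma coe_logLikelihoodRatio (q : ι → α → ℝ) (y : ι → α) :
    (logLikelihoodRatio q y : EReal) = ∑ i, (Real.log (q i (y i)) : EReal) :=
  map_sum (⟨⟨Real.toEReal, EReal.coe_zero⟩, EReal.coe_add⟩ : ℝ →+ EReal) _ _

/-- `exp (i t log s) - 1`: its mean at the likelihood ratio `s` under the null is the increment of
the characteristic function of the log-likelihood ratio. -/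
def nullIncrement (t s : ℝ) : ℂ :=
  Complex.exp (t * Real.log s * Complex.I) - 1

/-- `s (exp (i t log s) - 1)`: the same increment under the alternative, written as a mean under
the null. -/
def altIncrement (t s : ℝ) : ℂ :=
  s * nullIncrement t s

variable [MeasurableSpace α]

/-- `q` is a probability density with respect to `P`. Nonnegativity is required everywhere, so that
`Real.log (q x)` never sees a negative argument. -/
structure IsProbDensity (P : Measure α) (q : α → ℝ) : Prop where
  measurable : Measurable q
  nonneg : ∀ x, 0 ≤ q x
  integral_eq_one : ∫ x, q x ∂P = 1

/-- The measure with density `q` with respect to `P`. -/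
def densityMeasure (P : Measure α) (q : α → ℝ) : Measure α :=
  P.withDensity fun x => ENNReal.ofReal (q x)

lemma IsProbDensity.integrable {P : Measure α} {q : α → ℝ} (hq : IsProbDensity P q) :
    Integrable q P := by
  by_contra h
  exact zero_ne_one ((integral_undef h).symm.trans hq.integral_eq_one)

lemma IsProbDensity.isProbabilityMeasure {P : Measure α} {q : α → ℝ} (hq : IsProbDensity P q) :
    IsProbabilityMeasure (densityMeasure P q) := by
  constructor
  rw [densityMeasure, withDensity_apply _ MeasurableSet.univ, setLIntegral_univ,
    ← ofReal_integral_eq_lintegral_ofReal hq.integrable (ae_of_all _ hq.nonneg),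
    hq.integral_eq_one, ENNReal.ofReal_one]

lemma densityMeasure_absolutelyContinuous (P : Measure α) (q : α → ℝ) :
    densityMeasure P q ≪ P :=
  withDensity_absolutelyContinuous _ _

lemma elr_densityMeasure {P : Measure α} [SigmaFinite P] {q : α → ℝ}
    (hq : IsProbDensity P q) :
    elr (densityMeasure P q) P =ᵐ[P] fun x => ENNReal.ofReal (q x) := by
  have := hq.isProbabilityMeasure
  have hP : P ≪ P + densityMeasure P q := Measure.AbsolutelyContinuous.rfl.add_right _
  have hchain := hP.ae_le (Measure.rnDeriv_mul_rnDeriv (κ := P + densityMeasure P q)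
    (densityMeasure_absolutelyContinuous P q))
  have hdens : (densityMeasure P q).rnDeriv P =ᵐ[P] fun x => ENNReal.ofReal (q x) :=
    Measure.rnDeriv_withDensity P hq.measurable.ennreal_ofReal
  filter_upwards [hchain, hdens, Measure.rnDeriv_pos hP,
    hP.ae_le (Measure.rnDeriv_lt_top P _)] with x hx hdens hpos hfin
  rw [elr, ← hx, Pi.mul_apply, hdens]
  exact ENNReal.mul_div_cancel_right hpos.ne' hfin.ne

lemma measurable_logLikelihoodRatio {q : ι → α → ℝ} (hq : ∀ i, Measurable (q i)) :
    Measurable (logLikelihoodRatio q) :=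
  Finset.measurable_sum _ fun i _ =>
    Real.measurable_log.comp ((hq i).comp (measurable_pi_apply i))

lemma sum_log_elr_ae_eq {P : Measure α} [SigmaFinite P] {q : ι → α → ℝ}
    (hq : ∀ i, IsProbDensity P (q i)) (hpos : ∀ i x, 0 < q i x) {ρ : ι → Measure α}
    [∀ i, SigmaFinite (ρ i)] (hρ : ∀ i, ρ i ≪ P) :
    (fun y : ι → α => ∑ i, ENNReal.log (elr (densityMeasure P (q i)) P (y i)))
      =ᵐ[Measure.pi ρ] fun y => (logLikelihoodRatio q y : EReal) := by
  have helr (i : ι) : ∀ᵐ y ∂Measure.pi ρ,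
      elr (densityMeasure P (q i)) P (y i) = ENNReal.ofReal (q i (y i)) :=
    (Measure.quasiMeasurePreserving_eval ρ i).ae ((hρ i).ae_le (elr_densityMeasure (hq i)))
  filter_upwards [ae_all_iff.2 helr] with y hy
  rw [coe_logLikelihoodRatio]
  exact Finset.sum_congr rfl fun i _ => by rw [hy i, ENNReal.log_ofReal_of_pos (hpos i _)]

lemma pi_densityMeasure {P : ι → Measure α} [∀ i, SigmaFinite (P i)] {q : ι → α → ℝ}
    (hq : ∀ i, IsProbDensity (P i) (q i)) :
    Measure.pi (fun i => densityMeasure (P i) (q i)) =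
      densityMeasure (Measure.pi P) fun y => ∏ i, q i (y i) := by
  have := fun i => (hq i).isProbabilityMeasure
  refine Measure.pi_eq fun s hs => ?_
  have hint (i : ι) : Integrable (q i) ((P i).restrict (s i)) := (hq i).integrable.restrict
  rw [densityMeasure, withDensity_apply _ (MeasurableSet.univ_pi hs), Measure.restrict_pi_pi,
    ← ofReal_integral_eq_lintegral_ofReal (Integrable.fintype_prod hint)
      (ae_of_all _ fun y => Finset.prod_nonneg fun i _ => (hq i).nonneg _),
    integral_fintype_prod_eq_prod, ENNReal.ofReal_prod_of_nonneg
      fun i _ => integral_nonneg (hq i).nonneg]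
  refine Finset.prod_congr rfl fun i _ => ?_
  rw [densityMeasure, withDensity_apply _ (hs i),
    ofReal_integral_eq_lintegral_ofReal (hint i) (ae_of_all _ (hq i).nonneg)]

lemma map_withDensity_comp {β : Type*} [MeasurableSpace β] {μ : Measure α} {f : α → β}
    (hf : Measurable f) {w : β → ENNReal} (hw : Measurable w) :
    (μ.withDensity fun x => w (f x)).map f = (μ.map f).withDensity w := by
  ext s hs
  rw [Measure.map_apply hf hs, withDensity_apply _ (hf hs), withDensity_apply _ hs,
    setLIntegral_map hs hw hf]

lemma map_logLikelihoodRatio_alt {P : ι → Measure α} [∀ i, SigmaFinite (P i)]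
    {q : ι → α → ℝ} (hq : ∀ i, IsProbDensity (P i) (q i)) (hpos : ∀ i x, 0 < q i x) :
    (Measure.pi fun i => densityMeasure (P i) (q i)).map (logLikelihoodRatio q) =
      ((Measure.pi P).map (logLikelihoodRatio q)).withDensity
        fun x => ENNReal.ofReal (Real.exp x) := by
  rw [← map_withDensity_comp (measurable_logLikelihoodRatio fun i => (hq i).measurable)
    Real.measurable_exp.ennreal_ofReal, pi_densityMeasure hq]
  simp only [densityMeasure, exp_logLikelihoodRatio hpos]

lemma charFun_map_logLikelihoodRatio {ρ : ι → Measure α} [∀ i, IsProbabilityMeasure (ρ i)]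
    {q : ι → α → ℝ} (hq : ∀ i, Measurable (q i)) (t : ℝ) :
    charFun ((Measure.pi ρ).map (logLikelihoodRatio q)) t =
      ∏ i, (1 + ∫ x, nullIncrement t (q i x) ∂ρ i) := by
  have hexp (y : ι → α) : Complex.exp (t * (logLikelihoodRatio q y : ℝ) * Complex.I) =
      ∏ i, (1 + nullIncrement t (q i (y i))) := by
    simp only [logLikelihoodRatio, nullIncrement, add_sub_cancel, ← Complex.exp_sum,
      Complex.ofReal_sum, Finset.mul_sum, Finset.sum_mul]
  have hint (i : ι) : Integrable (fun x => nullIncrement t (q i x)) (ρ i) := by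
    have := hq i
    refine Integrable.sub (.of_bound (Measurable.aestronglyMeasurable (by fun_prop)) 1
      (ae_of_all _ fun x => ?_)) (integrable_const _)
    rw [← Complex.ofReal_mul, Complex.norm_exp_ofReal_mul_I]
  rw [charFun_apply_real, integral_map (measurable_logLikelihoodRatio hq).aemeasurable
    (by fun_prop)]
  simp only [hexp]
  rw [integral_fintype_prod_eq_prod (f := fun i x => 1 + nullIncrement t (q i x))]
  refine Finset.prod_congr rfl fun i _ => ?_
  rw [integral_add (integrable_const _) (hint i), integral_const, probReal_univ, one_smul]

lemma integral_nullIncrement_densityMeasure {P : Measure α} {q : α → ℝ}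
    (hq : IsProbDensity P q) (t : ℝ) :
    ∫ x, nullIncrement t (q x) ∂densityMeasure P q = ∫ x, altIncrement t (q x) ∂P := by
  rw [densityMeasure, integral_withDensity_ofReal hq.measurable (ae_of_all _ hq.nonneg)]
  simp only [altIncrement, Complex.real_smul]

end LikelihoodRatios

section Mixture

variable {α : Type*} {f : α → ℝ} {ε : ℝ}

/-- The density of `Qmix P μ ε` with respect to `P` when `μ` has density `f`. -/
def mixtureDensity (ε : ℝ) (f : α → ℝ) (x : α) : ℝ :=
  1 - ε + ε * f x

lemma one_sub_le_mixtureDensity (hε0 : 0 ≤ ε) (hf0 : ∀ x, 0 ≤ f x) (x : α) :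
    1 - ε ≤ mixtureDensity ε f x :=
  le_add_of_nonneg_right (mul_nonneg hε0 (hf0 x))

variable [MeasurableSpace α] {P : Measure α}

lemma Qmix_densityMeasure (hf : Measurable f) (hf0 : ∀ x, 0 ≤ f x) (hε0 : 0 ≤ ε) (hε1 : ε ≤ 1) :
    Qmix P (densityMeasure P f) ε = densityMeasure P (mixtureDensity ε f) := by
  rw [Qmix, densityMeasure, densityMeasure, ← withDensity_const,
    ← withDensity_smul _ hf.ennreal_ofReal, ← withDensity_add_left measurable_const]
  congr 1
  ext x
  rw [Pi.add_apply, Pi.smul_apply, smul_eq_mul, ← ENNReal.ofReal_mul hε0,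
    ← ENNReal.ofReal_add (sub_nonneg.2 hε1) (mul_nonneg hε0 (hf0 x)), mixtureDensity]

lemma IsProbDensity.mixtureDensity [IsProbabilityMeasure P] (hf : IsProbDensity P f)
    (hε0 : 0 ≤ ε) (hε1 : ε ≤ 1) : IsProbDensity P (mixtureDensity ε f) where
  measurable := (hf.measurable.const_mul ε).const_add (1 - ε)
  nonneg x := (sub_nonneg.2 hε1).trans (one_sub_le_mixtureDensity hε0 hf.nonneg x)
  integral_eq_one := by
    simp only [_root_.mixtureDensity]
    rw [integral_add (integrable_const _) (hf.integrable.const_mul ε), integral_const,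
      integral_const_mul, hf.integral_eq_one, probReal_univ]
    simp

lemma IsProbDensity.integral_abs_mixtureDensity_sub_one_le [IsProbabilityMeasure P]
    (hf : IsProbDensity P f) (hε0 : 0 ≤ ε) :
    ∫ x, |_root_.mixtureDensity ε f x - 1| ∂P ≤ 2 * ε := by
  have hbound (x : α) : |_root_.mixtureDensity ε f x - 1| ≤ ε * (f x + 1) := by
    rw [show _root_.mixtureDensity ε f x - 1 = ε * (f x - 1) by rw [_root_.mixtureDensity]; ring,
      abs_mul, abs_of_nonneg hε0]
    have := hf.nonneg x
    gcongr
    exact abs_le.2 ⟨by linarith, by linarith⟩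
  calc ∫ x, |_root_.mixtureDensity ε f x - 1| ∂P
      ≤ ∫ x, ε * (f x + 1) ∂P :=
        integral_mono_of_nonneg (ae_of_all _ fun x => abs_nonneg _)
          ((hf.integrable.add (integrable_const 1)).const_mul ε) (ae_of_all _ hbound)
    _ = 2 * ε := by
        rw [integral_const_mul, integral_add hf.integrable (integrable_const 1),
          hf.integral_eq_one, integral_const, probReal_univ]
        simp only [smul_eq_mul]
        ring

end Mixture

section PValueModel

instance isProbabilityMeasure_unif : IsProbabilityMeasure unif :=
  ⟨by simp [unif]⟩

/-- The signal density `x ↦ κ⁻¹ g(x/κ) 1{x ≤ κ}` of the nonparametric p-value model. -/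
def signalDensity (κ : ℝ) (g : ℝ → ℝ) (x : ℝ) : ℝ :=
  κ⁻¹ * if x ≤ κ then g (x / κ) else 0

lemma measurable_signalDensity {κ : ℝ} {g : ℝ → ℝ} (hg : Measurable g) :
    Measurable (signalDensity κ g) :=
  (Measurable.ite measurableSet_Iic (hg.comp (measurable_id.div_const κ))
    measurable_const).const_mul _

variable {κ : ℝ} {g h : ℝ → ℝ} (hκ : 0 < κ) (hκ1 : κ ≤ 1)
include hκ

lemma signalDensity_mul {x : ℝ} (hx : x ≤ 1) : signalDensity κ g (κ * x) = κ⁻¹ * g x := by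
  rw [signalDensity, if_pos (mul_le_of_le_one_right hκ.le hx), mul_div_cancel_left₀ _ hκ.ne']

include hκ1

lemma unif_eq_smul_map_add :
    unif = ENNReal.ofReal κ • unif.map (κ * ·) + volume.restrict (Set.Ioo κ 1) := by
  have hscaled : ENNReal.ofReal κ • unif.map (κ * ·) = volume.restrict (Set.Ioc 0 κ) := by
    have hpre : (κ * ·) ⁻¹' Set.Ioo 0 κ = Set.Ioo 0 1 := by
      rw [Set.preimage_const_mul_Ioo₀ _ _ hκ, zero_div, div_self hκ.ne']
    have hvol : ENNReal.ofReal κ • (volume : Measure ℝ).map (κ * ·) = volume := by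
      simpa only [abs_of_pos hκ] using Real.smul_map_volume_mul_left hκ.ne'
    rw [unif, ← hpre, ← Measure.restrict_map (measurable_const_mul κ) measurableSet_Ioo,
      ← Measure.restrict_smul, hvol, Measure.restrict_congr_set Ioo_ae_eq_Ioc]
  have hdisj : Disjoint (Set.Ioc 0 κ) (Set.Ioo κ 1) :=
    Set.disjoint_left.2 fun x hx hx' => hx'.1.not_ge hx.2
  rw [hscaled, ← Measure.restrict_union hdisj measurableSet_Ioo, unif]
  rcases hκ1.eq_or_lt with rfl | hlt
  · rw [Set.Ioo_self, Set.union_empty, Measure.restrict_congr_set Ioo_ae_eq_Ioc]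
  · rw [Set.Ioc_union_Ioo_eq_Ioo hκ.le hlt]

lemma unif_map_signalDensity (hg : Measurable g) :
    unif.map (signalDensity κ g) =
      ENNReal.ofReal κ • unif.map (fun x => κ⁻¹ * g x) +
        ENNReal.ofReal (1 - κ) • Measure.dirac 0 := by
  have hsig := measurable_signalDensity (κ := κ) hg
  have hbelow : (unif.map (κ * ·)).map (signalDensity κ g) = unif.map fun x => κ⁻¹ * g x := by
    rw [Measure.map_map hsig (measurable_const_mul κ)]
    refine Measure.map_congr ?_
    filter_upwards [ae_restrict_mem measurableSet_Ioo] with x hx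
    exact signalDensity_mul hκ hx.2.le
  have habove : (volume.restrict (Set.Ioo κ 1)).map (signalDensity κ g) =
      ENNReal.ofReal (1 - κ) • Measure.dirac 0 := by
    have hzero : signalDensity κ g =ᵐ[volume.restrict (Set.Ioo κ 1)] fun _ => 0 := by
      filter_upwards [ae_restrict_mem measurableSet_Ioo] with x hx
      rw [signalDensity, if_neg hx.1.not_ge, mul_zero]
    rw [Measure.map_congr hzero, Measure.map_const, Measure.restrict_apply_univ, Real.volume_Ioo]
  conv_lhs => rw [unif_eq_smul_map_add hκ hκ1]
  rw [Measure.map_add _ _ hsig, Measure.map_smul, hbelow, habove]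

lemma integral_comp_signalDensity (hg : Measurable g) {E : Type*} [NormedAddCommGroup E]
    [NormedSpace ℝ E] [CompleteSpace E] {Φ : ℝ → E} (hΦ : StronglyMeasurable Φ)
    (hint : Integrable (fun x => Φ (κ⁻¹ * g x)) unif) :
    ∫ x, Φ (signalDensity κ g x) ∂unif =
      κ • ∫ x, Φ (κ⁻¹ * g x) ∂unif + (1 - κ) • Φ 0 := by
  have hmap : Integrable Φ (ENNReal.ofReal κ • unif.map fun x => κ⁻¹ * g x) :=
    ((integrable_map_measure hΦ.aestronglyMeasurable
      (hg.const_mul _).aemeasurable).2 hint).smul_measure ENNReal.ofReal_ne_top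
  have hdirac : Integrable Φ (ENNReal.ofReal (1 - κ) • Measure.dirac 0) :=
    (integrable_dirac' hΦ enorm_lt_top).smul_measure ENNReal.ofReal_ne_top
  rw [← integral_map (measurable_signalDensity hg).aemeasurable hΦ.aestronglyMeasurable,
    unif_map_signalDensity hκ hκ1 hg, integral_add_measure hmap hdirac, integral_smul_measure,
    integral_smul_measure, integral_map (hg.const_mul _).aemeasurable hΦ.aestronglyMeasurable,
    integral_dirac' _ _ hΦ, ENNReal.toReal_ofReal hκ.le, ENNReal.toReal_ofReal (sub_nonneg.2 hκ1)]

lemma IsProbDensity.signalDensity (hg : IsProbDensity unif g) :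
    IsProbDensity unif (signalDensity κ g) where
  measurable := measurable_signalDensity hg.measurable
  nonneg x := by
    refine mul_nonneg (inv_nonneg.2 hκ.le) ?_
    split_ifs
    exacts [hg.nonneg _, le_rfl]
  integral_eq_one := by
    have h := integral_comp_signalDensity hκ hκ1 hg.measurable stronglyMeasurable_id
      (hg.integrable.const_mul κ⁻¹)
    simp only [id, integral_const_mul, hg.integral_eq_one, smul_eq_mul] at h
    rw [h, mul_one, mul_inv_cancel₀ hκ.ne', mul_zero, add_zero]

lemma signalDensity_congr_ae (hgh : g =ᵐ[unif] h) :
    signalDensity κ g =ᵐ[unif] signalDensity κ h := by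
  rw [EventuallyEq, unif_eq_smul_map_add hκ hκ1, ae_add_measure_iff]
  constructor
  · refine Measure.ae_smul_measure ?_ _
    rw [(measurableEmbedding_mulLeft₀ hκ.ne').ae_map_iff]
    filter_upwards [hgh, ae_restrict_mem measurableSet_Ioo] with x hx hx1
    rw [signalDensity_mul hκ hx1.2.le, signalDensity_mul hκ hx1.2.le, hx]
  · filter_upwards [ae_restrict_mem measurableSet_Ioo] with x hx
    rw [signalDensity, signalDensity, if_neg hx.1.not_ge, if_neg hx.1.not_ge]

end PValueModel

section Laws

lemma exists_isProbDensity_ae_eq {α : Type*} [MeasurableSpace α] {P : Measure α} {f : α → ℝ}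
    (hf0 : 0 ≤ᵐ[P] f) (hf1 : ∫ x, f x ∂P = 1) : ∃ g, IsProbDensity P g ∧ f =ᵐ[P] g := by
  have hint : Integrable f P := by
    by_contra h
    exact zero_ne_one ((integral_undef h).symm.trans hf1)
  have hf := hint.aestronglyMeasurable.aemeasurable
  have hae : f =ᵐ[P] fun x => max 0 (hf.mk f x) := by
    filter_upwards [hf.ae_eq_mk, hf0] with x hx hx0
    rw [← hx, max_eq_right (by simpa using hx0)]
  exact ⟨_, ⟨measurable_const.max hf.measurable_mk, fun x => le_max_left _ _,
    (integral_congr_ae hae).symm.trans hf1⟩, hae⟩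

lemma sigM_rzero (h : ℕ → ℕ → ℝ → ℝ) (κ : ℕ → ℕ → ℝ) (n i : ℕ) :
    sigM h κ rzero n i = densityMeasure unif (signalDensity (κ n i) (h n i)) := by
  rw [sigM, densityMeasure]
  congr! 3 with x
  simp only [sigDens, rzero, signalDensity, mul_ite, mul_one, mul_zero, add_zero, one_div]

variable {h : ℕ → ℕ → ℝ → ℝ} {κ ε : ℕ → ℕ → ℝ} {k : ℕ → ℕ} {n : ℕ} {q : Fin (k n) → ℝ → ℝ}
  (hQ : ∀ i : Fin (k n), Qmix unif (sigM h κ rzero n i) (ε n i) = densityMeasure unif (q i))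
  (hq : ∀ i, IsProbDensity unif (q i)) (hpos : ∀ i x, 0 < q i x)
include hQ hq hpos

lemma map_TstatPV {ρ : Fin (k n) → Measure ℝ} [∀ i, SigmaFinite (ρ i)] (hρ : ∀ i, ρ i ≪ unif) :
    (Measure.pi ρ).map (TstatPV h κ rzero ε k n) =
      ((Measure.pi ρ).map (logLikelihoodRatio q)).map (↑) := by
  rw [Measure.map_map measurable_coe_real_ereal
    (measurable_logLikelihoodRatio fun i => (hq i).measurable)]
  refine Measure.map_congr ?_
  filter_upwards [sum_log_elr_ae_eq hq hpos hρ] with y hy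
  simpa only [TstatPV, hQ, Function.comp_apply] using hy

lemma lawPV_P_eq_map : lawPV_P h κ rzero ε k n =
    ((Measure.pi fun _ => unif).map (logLikelihoodRatio q)).map (↑) :=
  map_TstatPV hQ hq hpos fun _ => Measure.AbsolutelyContinuous.rfl

lemma lawPV_Q_eq_map : lawPV_Q h κ rzero ε k n =
    ((Measure.pi fun i => densityMeasure unif (q i)).map (logLikelihoodRatio q)).map (↑) := by
  have := fun i => (hq i).isProbabilityMeasure
  rw [← map_TstatPV hQ hq hpos fun i => densityMeasure_absolutelyContinuous _ _, lawPV_Q, QprodPV]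
  simp only [hQ]

end Laws

section Increments

/-- The functions of the likelihood ratio that occur as increments of characteristic functions:
they vanish at `1`, are differentiable there, and are `K`-Lipschitz away from `0`. -/
structure IsIncrement (W : ℝ → ℂ) (K : NNReal) : Prop where
  measurable : Measurable W
  apply_one : W 1 = 0
  differentiableAt_one : DifferentiableAt ℝ W 1
  lipschitzOnWith : LipschitzOnWith K W (Set.Ici (1 / 2))

lemma hasDerivAt_nullIncrement (t : ℝ) {s : ℝ} (hs : s ≠ 0) :
    HasDerivAt (nullIncrement t)
      (Complex.exp (t * Real.log s * Complex.I) * (t * (s⁻¹ : ℝ) * Complex.I)) s :=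
  (((Real.hasDerivAt_log hs).ofReal_comp.const_mul (t : ℂ)).mul_const Complex.I).cexp.sub_const 1

lemma hasDerivAt_altIncrement (t : ℝ) {s : ℝ} (hs : s ≠ 0) :
    HasDerivAt (altIncrement t)
      (nullIncrement t s + Complex.exp (t * Real.log s * Complex.I) * (t * Complex.I)) s := by
  refine ((hasDerivAt_id s).ofReal_comp.mul (hasDerivAt_nullIncrement t hs)).congr_deriv ?_
  have hs' : (s : ℂ) ≠ 0 := Complex.ofReal_ne_zero.2 hs
  simp only [id, Complex.ofReal_one, one_mul, Complex.ofReal_inv]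
  field_simp

lemma norm_exp_mul_log_mul_I (t s : ℝ) : ‖Complex.exp (t * Real.log s * Complex.I)‖ = 1 := by
  rw [← Complex.ofReal_mul, Complex.norm_exp_ofReal_mul_I]

lemma norm_nullIncrement_le (t s : ℝ) : ‖nullIncrement t s‖ ≤ 2 := by
  refine (norm_sub_le _ _).trans ?_
  rw [norm_exp_mul_log_mul_I, norm_one]
  norm_num

lemma deriv_nullIncrement_one (t : ℝ) : deriv (nullIncrement t) 1 = t * Complex.I := by
  simp [(hasDerivAt_nullIncrement t one_ne_zero).deriv]

lemma deriv_altIncrement_one (t : ℝ) : deriv (altIncrement t) 1 = t * Complex.I := by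
  simp [(hasDerivAt_altIncrement t one_ne_zero).deriv, nullIncrement]

lemma isIncrement_nullIncrement (t : ℝ) : IsIncrement (nullIncrement t) (2 * ‖t‖₊) where
  measurable := by unfold nullIncrement; fun_prop
  apply_one := by simp [nullIncrement]
  differentiableAt_one := (hasDerivAt_nullIncrement t one_ne_zero).differentiableAt
  lipschitzOnWith := by
    have hpos {s : ℝ} (hs : s ∈ Set.Ici (1 / 2 : ℝ)) : 0 < s := one_half_pos.trans_le hs
    refine (convex_Ici _).lipschitzOnWith_of_nnnorm_hasDerivWithin_le
      (fun s hs => (hasDerivAt_nullIncrement t (hpos hs).ne').hasDerivWithinAt) fun s hs => ?_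
    have hinv : |s⁻¹| ≤ 2 := by
      rw [abs_of_pos (inv_pos.2 (hpos hs)), inv_le_comm₀ (hpos hs) two_pos, ← one_div]
      exact hs
    rw [← NNReal.coe_le_coe]
    simp only [coe_nnnorm, NNReal.coe_mul, NNReal.coe_ofNat, norm_mul, norm_exp_mul_log_mul_I,
      Complex.norm_real, Complex.norm_I, one_mul, mul_one, Real.norm_eq_abs]
    rw [mul_comm]
    gcongr

lemma isIncrement_altIncrement (t : ℝ) : IsIncrement (altIncrement t) (2 + ‖t‖₊) where
  measurable := by unfold altIncrement nullIncrement; fun_prop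
  apply_one := by simp [altIncrement, nullIncrement]
  differentiableAt_one := (hasDerivAt_altIncrement t one_ne_zero).differentiableAt
  lipschitzOnWith := by
    have hne {s : ℝ} (hs : s ∈ Set.Ici (1 / 2 : ℝ)) : s ≠ 0 := (one_half_pos.trans_le hs).ne'
    refine (convex_Ici _).lipschitzOnWith_of_nnnorm_hasDerivWithin_le
      (fun s hs => (hasDerivAt_altIncrement t (hne hs)).hasDerivWithinAt) fun s _ => ?_
    rw [← NNReal.coe_le_coe]
    refine (norm_add_le _ _).trans (add_le_add (norm_nullIncrement_le t s) (le_of_eq ?_))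
    rw [norm_mul, norm_exp_mul_log_mul_I, one_mul, norm_mul, Complex.norm_I, mul_one,
      Complex.norm_real]
    rfl

/-- The difference quotient of `W` between `1` and `1 + a (exp x - 1)`, as a function of `(a, x)`.
Negative `a` and `x` are truncated to `0`, which makes it continuous on the whole plane. -/
def incrementKernel (W : ℝ → ℂ) (p : ℝ × ℝ) : ℂ :=
  dslope W 1 (1 + max p.1 0 * max (Real.exp p.2 - 1) 0)

lemma half_le_incrementKernel_arg (p : ℝ × ℝ) :
    1 / 2 ≤ 1 + max p.1 0 * max (Real.exp p.2 - 1) 0 := by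
  have : 0 ≤ max p.1 0 * max (Real.exp p.2 - 1) 0 := by positivity
  linarith

lemma incrementKernel_zero (W : ℝ → ℂ) (x : ℝ) : incrementKernel W (0, x) = deriv W 1 := by
  rw [incrementKernel, max_self, zero_mul, add_zero, dslope_same]

namespace IsIncrement

variable {W : ℝ → ℂ} {K : NNReal} (hW : IsIncrement W K)
include hW

lemma norm_le {s : ℝ} (hs : 1 / 2 ≤ s) : ‖W s‖ ≤ K * |s - 1| := by
  have hone : (1 : ℝ) ∈ Set.Ici (1 / 2) := Set.mem_Ici.2 one_half_lt_one.le
  simpa [hW.apply_one] using hW.lipschitzOnWith.norm_sub_le (Set.mem_Ici.2 hs) hone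

lemma mul_dslope (s : ℝ) : (s : ℂ) * dslope W 1 (1 + s) = W (1 + s) := by
  simpa [hW.apply_one] using sub_smul_dslope W 1 (1 + s)

lemma continuousOn_dslope : ContinuousOn (dslope W 1) (Set.Ici (1 / 2)) :=
  (_root_.continuousOn_dslope (Ici_mem_nhds (by norm_num))).2
    ⟨hW.lipschitzOnWith.continuousOn, hW.differentiableAt_one⟩

lemma norm_deriv_le : ‖deriv W 1‖ ≤ K :=
  norm_deriv_le_of_lipschitzOn (Ici_mem_nhds (by norm_num)) hW.lipschitzOnWith

lemma norm_dslope_le {s : ℝ} (hs : 1 / 2 ≤ s) : ‖dslope W 1 s‖ ≤ K := by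
  rcases eq_or_ne s 1 with rfl | hne
  · rw [dslope_same]
    exact hW.norm_deriv_le
  · rw [dslope_of_ne _ hne, slope_def_module, hW.apply_one, sub_zero, norm_smul, norm_inv,
      Real.norm_eq_abs, inv_mul_le_iff₀ (abs_pos.2 (sub_ne_zero.2 hne)), mul_comm]
    exact hW.norm_le hs

lemma continuous_incrementKernel : Continuous (incrementKernel W) :=
  hW.continuousOn_dslope.comp_continuous (by fun_prop) fun p => half_le_incrementKernel_arg p

lemma norm_incrementKernel_le (p : ℝ × ℝ) : ‖incrementKernel W p‖ ≤ K :=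
  hW.norm_dslope_le (half_le_incrementKernel_arg p)

lemma mul_incrementKernel {a x : ℝ} (ha : 0 ≤ a) (hx : 0 ≤ x) :
    (a * (Real.exp x - 1) : ℝ) * incrementKernel W (a, x) = W (1 + a * (Real.exp x - 1)) := by
  rw [← hW.mul_dslope, incrementKernel, max_eq_left ha,
    max_eq_left (sub_nonneg.2 (Real.one_le_exp hx))]

end IsIncrement

end Increments

section LogSignalLaw

/-- The law of `log (1 + g)` under the measure with density `g`: the measures that approximate `M`
in the p-value model. -/
def logSignalLaw {α : Type*} [MeasurableSpace α] (P : Measure α) (g : α → ℝ) : Measure ℝ :=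
  (densityMeasure P g).map fun u => Real.log (1 + g u)

variable {α : Type*} [MeasurableSpace α] {P : Measure α} {g : α → ℝ} (hg : IsProbDensity P g)
include hg

lemma measurable_log_one_add : Measurable fun u => Real.log (1 + g u) :=
  Real.measurable_log.comp (hg.measurable.const_add 1)

lemma isProbabilityMeasure_logSignalLaw : IsProbabilityMeasure (logSignalLaw P g) :=
  have := hg.isProbabilityMeasure
  Measure.isProbabilityMeasure_map (measurable_log_one_add hg).aemeasurable

lemma integral_logSignalLaw {E : Type*} [NormedAddCommGroup E] [NormedSpace ℝ E] {F : ℝ → E}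
    (hF : StronglyMeasurable F) :
    ∫ x, F x ∂logSignalLaw P g = ∫ u, g u • F (Real.log (1 + g u)) ∂P := by
  rw [logSignalLaw, integral_map (measurable_log_one_add hg).aemeasurable hF.aestronglyMeasurable,
    densityMeasure, integral_withDensity_ofReal hg.measurable
    (ae_of_all _ hg.nonneg)]

lemma logSignalLaw_real {s : Set ℝ} (hs : MeasurableSet s) :
    (logSignalLaw P g).real s = ∫ u, g u * s.indicator 1 (Real.log (1 + g u)) ∂P := by
  rw [← integral_indicator_one hs, integral_logSignalLaw hg (stronglyMeasurable_one.indicator hs)]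
  simp only [smul_eq_mul]

lemma logSignalLaw_real_Ioi (x : ℝ) :
    (logSignalLaw P g).real (Set.Ioi x) =
      ∫ u, g u * (if Real.exp x - 1 < g u then 1 else 0) ∂P := by
  rw [logSignalLaw_real hg measurableSet_Ioi]
  congr! 3 with u
  have hpos : 0 < 1 + g u := by linarith [hg.nonneg u]
  simp only [Set.indicator_apply, Set.mem_Ioi, Real.lt_log_iff_exp_lt hpos, Pi.one_apply,
    sub_lt_iff_lt_add']

lemma logSignalLaw_real_Iic_le [IsProbabilityMeasure P] {x : ℝ} (hx : 0 ≤ x) :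
    (logSignalLaw P g).real (Set.Iic x) ≤ Real.exp x - 1 := by
  have hbound (u : α) :
      g u * (Set.Iic x).indicator 1 (Real.log (1 + g u)) ≤ Real.exp x - 1 := by
    have hpos : 0 < 1 + g u := by linarith [hg.nonneg u]
    simp only [Set.indicator_apply, Set.mem_Iic, Real.log_le_iff_le_exp hpos, Pi.one_apply]
    split_ifs with h
    · linarith
    · rw [mul_zero, sub_nonneg]
      exact Real.one_le_exp hx
  rw [logSignalLaw_real hg measurableSet_Iic]
  refine (integral_mono_of_nonneg (ae_of_all _ fun u => ?_) (integrable_const _)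
    (ae_of_all _ hbound)).trans_eq ?_
  · exact mul_nonneg (hg.nonneg u) (Set.indicator_nonneg (fun _ _ => zero_le_one) _)
  · rw [integral_const, probReal_univ, one_smul]

lemma logSignalLaw_Iic_zero [IsProbabilityMeasure P] : logSignalLaw P g (Set.Iic 0) = 0 := by
  have := isProbabilityMeasure_logSignalLaw hg
  have hle := logSignalLaw_real_Iic_le hg le_rfl
  rw [Real.exp_zero, sub_self] at hle
  exact (measureReal_eq_zero_iff).1 (hle.antisymm measureReal_nonneg)

lemma IsIncrement.integral_eq_mul_integral_incrementKernel {W : ℝ → ℂ} {K : NNReal}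
    (hW : IsIncrement W K) {a : ℝ} (ha : 0 ≤ a) :
    ∫ u, W (1 + a * g u) ∂P = a * ∫ x, incrementKernel W (a, x) ∂logSignalLaw P g := by
  have hF : Continuous fun x => incrementKernel W (a, x) :=
    hW.continuous_incrementKernel.comp (Continuous.prodMk_right a)
  rw [integral_logSignalLaw hg hF.stronglyMeasurable, ← integral_const_mul]
  refine integral_congr_ae (ae_of_all _ fun u => ?_)
  have hu := hg.nonneg u
  have h := hW.mul_incrementKernel ha (Real.log_nonneg (le_add_of_nonneg_right hu))
  rw [Real.exp_log (by linarith), add_sub_cancel_left] at h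
  simp only [← h, Complex.ofReal_mul, mul_assoc, Complex.real_smul]

end LogSignalLaw

section AverageMeasure

variable {ι α : Type*} [Fintype ι] [MeasurableSpace α]

/-- The average of finitely many measures. -/
def averageMeasure (μ : ι → Measure α) : Measure α :=
  (Fintype.card ι : ENNReal)⁻¹ • ∑ i, μ i

lemma averageMeasure_eq_zero {μ : ι → Measure α} {s : Set α} (h : ∀ i, μ i s = 0) :
    averageMeasure μ s = 0 := by
  simp [averageMeasure, h]

lemma integral_averageMeasure {μ : ι → Measure α} {E : Type*} [NormedAddCommGroup E]
    [NormedSpace ℝ E] {f : α → E} (hf : ∀ i, Integrable f (μ i)) :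
    ∫ x, f x ∂averageMeasure μ = (Fintype.card ι : ℝ)⁻¹ • ∑ i, ∫ x, f x ∂μ i := by
  rw [averageMeasure, integral_smul_measure, integral_finsetSum_measure fun i _ => hf i,
    ENNReal.toReal_inv, ENNReal.toReal_natCast]

lemma norm_integral_averageMeasure_le [Nonempty ι] {μ : ι → Measure α} {E : Type*}
    [NormedAddCommGroup E] [NormedSpace ℝ E] {f : α → E} (hf : ∀ i, Integrable f (μ i)) {C : ℝ}
    (hC : ∀ i, ‖∫ x, f x ∂μ i‖ ≤ C) : ‖∫ x, f x ∂averageMeasure μ‖ ≤ C := by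
  have hcard : (0 : ℝ) < Fintype.card ι := by positivity
  rw [integral_averageMeasure hf, norm_smul, norm_inv, Real.norm_natCast,
    inv_mul_le_iff₀ hcard]
  refine (norm_sum_le_of_le _ fun i _ => hC i).trans_eq ?_
  rw [Finset.sum_const, Finset.card_univ, nsmul_eq_mul]

variable {μ : ι → Measure α} [∀ i, IsProbabilityMeasure (μ i)]

instance isProbabilityMeasure_averageMeasure [Nonempty ι] :
    IsProbabilityMeasure (averageMeasure μ) :=
  ⟨by simp [averageMeasure, ENNReal.inv_mul_cancel]⟩

lemma averageMeasure_real (s : Set α) :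
    (averageMeasure μ).real s = (Fintype.card ι : ℝ)⁻¹ * ∑ i, (μ i).real s := by
  simp [averageMeasure, Measure.real, ENNReal.toReal_sum]

end AverageMeasure

section RowSums

variable {W : ℝ → ℂ} {K : NNReal} (hW : IsIncrement W K) {ε κ : ℝ}
include hW

lemma IsIncrement.integrable_comp {α : Type*} [MeasurableSpace α] {P : Measure α}
    [IsFiniteMeasure P] {f : α → ℝ} (hf : Integrable f P) (hfm : Measurable f)
    (hf2 : ∀ x, 1 / 2 ≤ f x) : Integrable (fun x => W (f x)) P :=
  ((hf.sub (integrable_const 1)).abs.const_mul (K : ℝ)).mono'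
    (hW.measurable.comp hfm).aestronglyMeasurable (ae_of_all _ fun x => hW.norm_le (hf2 x))

lemma IsIncrement.norm_integral_mixtureDensity_le {α : Type*} [MeasurableSpace α] {P : Measure α}
    [IsProbabilityMeasure P] {f : α → ℝ} (hf : IsProbDensity P f) (hε0 : 0 ≤ ε) (hε : ε ≤ 1 / 2) :
    ‖∫ x, W (mixtureDensity ε f x) ∂P‖ ≤ K * (2 * ε) := by
  have hq := hf.mixtureDensity hε0 (hε.trans one_half_lt_one.le)
  calc ‖∫ x, W (mixtureDensity ε f x) ∂P‖
      ≤ ∫ x, K * |mixtureDensity ε f x - 1| ∂P :=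
        norm_integral_le_of_norm_le ((hq.integrable.sub (integrable_const 1)).abs.const_mul _)
          (ae_of_all _ fun x => hW.norm_le <|
            (by linarith : 1 / 2 ≤ 1 - ε).trans (one_sub_le_mixtureDensity hε0 hf.nonneg x))
    _ ≤ K * (2 * ε) := by
        rw [integral_const_mul]
        gcongr
        exact hf.integral_abs_mixtureDensity_sub_one_le hε0

lemma IsIncrement.integral_mixtureDensity_signalDensity {g : ℝ → ℝ} (hg : IsProbDensity unif g)
    (hκ : 0 < κ) (hκ1 : κ ≤ 1) (hε0 : 0 ≤ ε) (hε : ε ≤ 1 / 2) :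
    ∫ x, W (mixtureDensity ε (signalDensity κ g) x) ∂unif =
      κ * ∫ x, W (1 - ε + ε / κ * g x) ∂unif + (1 - κ) * (-ε * dslope W 1 (1 - ε)) := by
  have hscale (x : ℝ) : ε / κ * g x = ε * (κ⁻¹ * g x) := by ring
  have hΦ : StronglyMeasurable fun s => W (1 - ε + ε * s) :=
    (hW.measurable.comp (by fun_prop)).stronglyMeasurable
  have hint : Integrable (fun x => W (1 - ε + ε * (κ⁻¹ * g x))) unif := by
    have hgm := hg.measurable
    refine hW.integrable_comp
      ((integrable_const _).add ((hg.integrable.const_mul κ⁻¹).const_mul ε)) (by fun_prop) ?_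
    intro x
    have : 0 ≤ ε * (κ⁻¹ * g x) := mul_nonneg hε0 (mul_nonneg (inv_nonneg.2 hκ.le) (hg.nonneg x))
    linarith
  have hone := hW.mul_dslope (-ε)
  simp only [mixtureDensity, hscale]
  rw [integral_comp_signalDensity hκ hκ1 hg.measurable hΦ hint, mul_zero, add_zero,
    sub_eq_add_neg 1 ε, ← hone]
  simp only [Complex.real_smul, Complex.ofReal_neg, Complex.ofReal_sub, Complex.ofReal_one]

lemma IsIncrement.norm_integral_sub_integral_le {α : Type*} [MeasurableSpace α] {P : Measure α}
    [IsProbabilityMeasure P] {f : α → ℝ} (hf : Integrable f P) (hfm : Measurable f)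
    (hf0 : ∀ x, 0 ≤ f x) (hε0 : 0 ≤ ε) (hε : ε ≤ 1 / 2) :
    ‖∫ x, W (1 - ε + f x) ∂P - ∫ x, W (1 + f x) ∂P‖ ≤ K * ε := by
  have hleft (x : α) : 1 / 2 ≤ 1 - ε + f x := by linarith [hf0 x]
  have hright (x : α) : 1 / 2 ≤ 1 + f x := by linarith [hf0 x]
  have hint (c : ℝ) (hc : ∀ x, 1 / 2 ≤ c + f x) : Integrable (fun x => W (c + f x)) P :=
    hW.integrable_comp ((integrable_const c).add hf) (by fun_prop) hc
  rw [← integral_sub (hint _ hleft) (hint _ hright)]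
  refine (norm_integral_le_of_norm_le_const (ae_of_all _ fun x => ?_)).trans_eq
    (by rw [probReal_univ, mul_one])
  refine (hW.lipschitzOnWith.norm_sub_le (hleft x) (hright x)).trans_eq ?_
  rw [show 1 - ε + f x - (1 + f x) = -ε by ring, norm_neg, Real.norm_of_nonneg hε0]

lemma IsIncrement.norm_integral_mixtureDensity_signalDensity_sub_le {g : ℝ → ℝ}
    (hg : IsProbDensity unif g) (hκ : 0 < κ) (hκ1 : κ ≤ 1) (hε0 : 0 ≤ ε) (hε : ε ≤ 1 / 2) :
    ‖∫ x, W (mixtureDensity ε (signalDensity κ g) x) ∂unif -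
        ε * (∫ x, incrementKernel W (ε / κ, x) ∂logSignalLaw unif g -
          (1 - κ) * dslope W 1 (1 - ε))‖ ≤ κ * (K * ε) := by
  have ha : 0 ≤ ε / κ := div_nonneg hε0 hκ.le
  have hkernel : ε * ∫ x, incrementKernel W (ε / κ, x) ∂logSignalLaw unif g =
      κ * ∫ x, W (1 + ε / κ * g x) ∂unif := by
    rw [hW.integral_eq_mul_integral_incrementKernel hg ha, ← mul_assoc, ← Complex.ofReal_mul,
      mul_div_cancel₀ _ hκ.ne']
  have hdiff := hW.norm_integral_sub_integral_le (hg.integrable.const_mul (ε / κ))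
    (hg.measurable.const_mul _) (fun x => mul_nonneg ha (hg.nonneg x)) hε0 hε
  rw [mul_sub, hkernel, hW.integral_mixtureDensity_signalDensity hg hκ hκ1 hε0 hε]
  calc _ = ‖κ * (∫ x, W (1 - ε + ε / κ * g x) ∂unif - ∫ x, W (1 + ε / κ * g x) ∂unif)‖ := by
        congr 1
        ring
    _ ≤ κ * (K * ε) := by
        rw [norm_mul, Complex.norm_real, Real.norm_of_nonneg hκ.le]
        gcongr

lemma IsIncrement.norm_sum_integral_sub_le {ι : Type*} [Fintype ι] [Nonempty ι]
    (hι : 2 ≤ Fintype.card ι) {g : ι → ℝ → ℝ} (hg : ∀ i, IsProbDensity unif (g i)) (hκ : 0 < κ)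
    (hκ1 : κ ≤ 1) (hε : ε = (Fintype.card ι : ℝ)⁻¹) :
    ‖∑ i, ∫ x, W (mixtureDensity ε (signalDensity κ (g i)) x) ∂unif -
        (∫ x, incrementKernel W (ε / κ, x) ∂averageMeasure (fun i => logSignalLaw unif (g i)) -
          (1 - κ) * dslope W 1 (1 - ε))‖ ≤ κ * K := by
  have := fun i => isProbabilityMeasure_logSignalLaw (hg i)
  have hcard : (Fintype.card ι : ℝ) * ε = 1 := by
    rw [hε, mul_inv_cancel₀ (by positivity)]
  have hε0 : 0 ≤ ε := by rw [hε]; positivity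
  have hε2 : ε ≤ 1 / 2 := by
    rw [hε, one_div]
    exact inv_anti₀ two_pos (by exact_mod_cast hι)
  have hint (i : ι) :
      Integrable (fun x => incrementKernel W (ε / κ, x)) (logSignalLaw unif (g i)) :=
    .of_bound (hW.continuous_incrementKernel.comp (Continuous.prodMk_right _)).aestronglyMeasurable
      K (ae_of_all _ fun x => hW.norm_incrementKernel_le _)
  have hsum : ∫ x, incrementKernel W (ε / κ, x) ∂averageMeasure (fun i => logSignalLaw unif (g i)) -
      (1 - κ) * dslope W 1 (1 - ε) = ∑ i, ε * (∫ x, incrementKernel W (ε / κ, x)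
        ∂logSignalLaw unif (g i) - (1 - κ) * dslope W 1 (1 - ε)) := by
    have hcard' : (Fintype.card ι : ℂ) * ε = 1 := by exact_mod_cast hcard
    rw [integral_averageMeasure hint, ← hε, ← Finset.mul_sum, Finset.sum_sub_distrib,
      Finset.sum_const, Finset.card_univ, nsmul_eq_mul, Complex.real_smul]
    linear_combination (1 - (κ : ℂ)) * dslope W 1 (1 - ε) * hcard'
  rw [hsum, ← Finset.sum_sub_distrib]
  refine (norm_sum_le_of_le _ fun i _ =>
    hW.norm_integral_mixtureDensity_signalDensity_sub_le (hg i) hκ hκ1 hε0 hε2).trans_eq ?_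
  rw [Finset.sum_const, Finset.card_univ, nsmul_eq_mul]
  linear_combination κ * K * hcard

end RowSums

section FiniteVariation

lemma norm_exp_mul_mul_I_sub_one_le (t x : ℝ) :
    ‖Complex.exp (t * x * Complex.I) - 1‖ ≤ (|t| + 2) * min |x| 1 := by
  rw [mul_comm, ← Complex.ofReal_mul]
  have hle : ‖Complex.exp (Complex.I * (t * x : ℝ)) - 1‖ ≤ |t| * |x| := by
    simpa only [norm_mul, Real.norm_eq_abs] using
      Real.norm_exp_I_mul_ofReal_sub_one_le (x := t * x)
  have hle_two : ‖Complex.exp (Complex.I * (t * x : ℝ)) - 1‖ ≤ 2 := by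
    refine (norm_sub_le _ _).trans ?_
    rw [Complex.norm_exp_I_mul_ofReal, norm_one, one_add_one_eq_two]
  rcases le_total |x| 1 with h | h
  · rw [min_eq_left h]
    linarith [abs_nonneg x]
  · rw [min_eq_right h]
    linarith [abs_nonneg t]

/-- Lévy measures for which small jumps are summable, so that their exponent needs no
compensator. -/
structure IsFiniteVariationLevyMeasure (η : Measure ℝ) : Prop where
  singleton_zero : η {0} = 0
  integrable_min : Integrable (fun x => min |x| 1) η

namespace IsFiniteVariationLevyMeasure

variable {η : Measure ℝ} (hη : IsFiniteVariationLevyMeasure η)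
include hη

lemma isLevyMeasure : IsLevyMeasure η := by
  refine ⟨hη.singleton_zero, ((lintegral_mono fun x => ENNReal.ofReal_le_ofReal ?_).trans_lt
    hη.integrable_min.lintegral_lt_top).ne⟩
  rw [← sq_abs]
  refine le_min ?_ (min_le_right _ _)
  rcases le_total |x| 1 with h | h
  · exact (min_le_left _ _).trans (pow_le_of_le_one (abs_nonneg x) h two_ne_zero)
  · exact (min_le_right _ _).trans h

lemma integrable_div_one_add_sq : Integrable (fun x : ℝ => x / (1 + x ^ 2)) η := by
  refine hη.integrable_min.mono' (Measurable.aestronglyMeasurable (by fun_prop))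
    (ae_of_all _ fun x => ?_)
  rw [Real.norm_eq_abs, abs_div, abs_of_pos (by positivity : 0 < 1 + x ^ 2),
    div_le_iff₀ (by positivity), ← sq_abs x]
  rcases le_total |x| 1 with h | h
  · rw [min_eq_left h]
    nlinarith [abs_nonneg x, sq_nonneg |x|]
  · rw [min_eq_right h]
    nlinarith

lemma integrable_exp_sub_one (t : ℝ) :
    Integrable (fun x : ℝ => Complex.exp (t * x * Complex.I) - 1) η :=
  (hη.integrable_min.const_mul (|t| + 2)).mono' (by fun_prop)
    (ae_of_all _ (norm_exp_mul_mul_I_sub_one_le t))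

lemma continuousAt_integral_exp_sub_one (t₀ : ℝ) :
    ContinuousAt (fun t : ℝ => ∫ x : ℝ, (Complex.exp (t * x * Complex.I) - 1) ∂η) t₀ := by
  refine continuousAt_of_dominated (bound := fun x => (|t₀| + 1 + 2) * min |x| 1)
    (Eventually.of_forall fun t => (hη.integrable_exp_sub_one t).aestronglyMeasurable) ?_
    (hη.integrable_min.const_mul _) (ae_of_all _ fun x => by fun_prop)
  filter_upwards [continuous_abs.continuousAt.eventually_lt_const (lt_add_one |t₀|)] with t ht
  refine ae_of_all _ fun x => (norm_exp_mul_mul_I_sub_one_le t x).trans ?_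
  gcongr

lemma levyExponent_eq (β t : ℝ) :
    levyExponent (β + ∫ x, x / (1 + x ^ 2) ∂η) 0 η t =
      β * t * Complex.I + ∫ x : ℝ, (Complex.exp (t * x * Complex.I) - 1) ∂η := by
  have hterm (x : ℝ) : Complex.exp (Complex.I * t * x) - 1 - Complex.I * t * x / (1 + (x : ℂ) ^ 2) =
      Complex.exp (t * x * Complex.I) - 1 - Complex.I * t * (x / (1 + x ^ 2) : ℝ) := by
    rw [mul_assoc, mul_comm Complex.I (_ * _)]
    push_cast
    ring
  simp only [levyExponent, hterm]
  have hcomp : Integrable (fun x : ℝ => Complex.I * t * (x / (1 + x ^ 2) : ℝ)) η :=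
    hη.integrable_div_one_add_sq.ofReal.const_mul _
  rw [integral_sub (hη.integrable_exp_sub_one t) hcomp, integral_const_mul,
    integral_complex_ofReal]
  push_cast
  ring

lemma hasLevyTriplet_of_charFun {ν : Measure ℝ} {β : ℝ}
    (hν : ∀ t : ℝ, charFun ν t = Complex.exp
      (β * t * Complex.I + ∫ x : ℝ, (Complex.exp (t * x * Complex.I) - 1) ∂η)) :
    HasLevyTriplet ν (β + ∫ x, x / (1 + x ^ 2) ∂η) 0 η := by
  refine ⟨hη.isLevyMeasure, fun t => ?_⟩
  rw [hη.levyExponent_eq, ← hν t, charFun_apply_real]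
  simp only [mul_comm Complex.I, mul_right_comm]

end IsFiniteVariationLevyMeasure

lemma isFiniteVariationLevyMeasure_withDensity {M : Measure ℝ} [IsFiniteMeasure M]
    (hM0 : ∀ᵐ x ∂M, 0 < x) {ρ : ℝ → ℝ} (hρ : Measurable ρ) (hρ0 : ∀ x > 0, 0 ≤ ρ x) {C : ℝ}
    (hC : ∀ x > 0, ρ x * min x 1 ≤ C) :
    IsFiniteVariationLevyMeasure (M.withDensity fun x => ENNReal.ofReal (ρ x)) where
  singleton_zero := withDensity_absolutelyContinuous _ _ <|
    measure_mono_null (fun x hx => (Set.mem_singleton_iff.1 hx).not_gt) (ae_iff.1 hM0)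
  integrable_min := by
    rw [integrable_withDensity_ofReal_iff hρ (hM0.mono hρ0)]
    refine .of_bound (by fun_prop) C (hM0.mono fun x hx => ?_)
    rw [abs_of_pos hx, smul_eq_mul,
      Real.norm_of_nonneg (mul_nonneg (hρ0 x hx) (le_min hx.le zero_le_one))]
    exact hC x hx

end FiniteVariation

section SignalArray

/-- The p-value model with `k n` observations, signal strength `(k n)⁻¹`, scale `κ n` and unscaled
signal densities `g n i`. Requiring `2 ≤ k n` keeps all likelihood ratios above `1 / 2`. -/
structure IsSignalArray (k : ℕ → ℕ) (κ : ℕ → ℝ) (g : ∀ n, Fin (k n) → ℝ → ℝ) : Prop where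
  two_le : ∀ n, 2 ≤ k n
  tendsto_card : Tendsto k atTop atTop
  pos : ∀ n, 0 < κ n
  le_one : ∀ n, κ n ≤ 1
  tendsto_scale : Tendsto κ atTop (𝓝 0)
  isProbDensity : ∀ n i, IsProbDensity unif (g n i)

/-- The likelihood ratio of one observation in the p-value model. -/
def arrayDensity (k : ℕ → ℕ) (κ : ℕ → ℝ) (g : ∀ n, Fin (k n) → ℝ → ℝ) (n : ℕ) (i : Fin (k n)) :
    ℝ → ℝ :=
  mixtureDensity (k n : ℝ)⁻¹ (signalDensity (κ n) (g n i))

/-- The average over the observations of the laws of `log (1 + g)` under the signal `g`; it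
converges to the measure `M`. -/
def meanSignalLaw {k : ℕ → ℕ} (g : ∀ n, Fin (k n) → ℝ → ℝ) (n : ℕ) : Measure ℝ :=
  averageMeasure fun i => logSignalLaw unif (g n i)

/-- The law of the log-likelihood ratio statistic under the null. -/
def nullLaw (k : ℕ → ℕ) (κ : ℕ → ℝ) (g : ∀ n, Fin (k n) → ℝ → ℝ) (n : ℕ) : Measure ℝ :=
  (Measure.pi fun _ => unif).map (logLikelihoodRatio (arrayDensity k κ g n))

/-- The law of the log-likelihood ratio statistic under the alternative. -/
def altLaw (k : ℕ → ℕ) (κ : ℕ → ℝ) (g : ∀ n, Fin (k n) → ℝ → ℝ) (n : ℕ) : Measure ℝ :=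
  (Measure.pi fun i => densityMeasure unif (arrayDensity k κ g n i)).map
    (logLikelihoodRatio (arrayDensity k κ g n))

/-- The characteristic functions of the laws `μs` of the log-likelihood ratio are products over the
observations, with increments `W t`. -/
structure HasIncrements (k : ℕ → ℕ) (κ : ℕ → ℝ) (g : ∀ n, Fin (k n) → ℝ → ℝ)
    (μs : ℕ → Measure ℝ) (W : ℝ → ℝ → ℂ) : Prop where
  isProbabilityMeasure : ∀ n, IsProbabilityMeasure (μs n)
  isIncrement : ∀ t, ∃ K, IsIncrement (W t) K
  deriv_one : ∀ t, deriv (W t) 1 = t * Complex.I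
  charFun_eq : ∀ n t, charFun (μs n) t = ∏ i, (1 + ∫ x, W t (arrayDensity k κ g n i x) ∂unif)

namespace IsSignalArray

variable {k : ℕ → ℕ} {κ : ℕ → ℝ} {g : ∀ n, Fin (k n) → ℝ → ℝ} (A : IsSignalArray k κ g)
include A

lemma nonempty_fin (n : ℕ) : Nonempty (Fin (k n)) :=
  Fin.pos_iff_nonempty.1 (two_pos.trans_le (A.two_le n))

lemma inv_card_le (n : ℕ) : (k n : ℝ)⁻¹ ≤ 1 / 2 := by
  rw [one_div]
  exact inv_anti₀ two_pos (by exact_mod_cast A.two_le n)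

lemma tendsto_inv_card : Tendsto (fun n => (k n : ℝ)⁻¹) atTop (𝓝 0) :=
  tendsto_inv_atTop_zero.comp (tendsto_natCast_atTop_atTop.comp A.tendsto_card)

lemma isProbDensity_arrayDensity (n : ℕ) (i : Fin (k n)) :
    IsProbDensity unif (arrayDensity k κ g n i) :=
  ((A.isProbDensity n i).signalDensity (A.pos n) (A.le_one n)).mixtureDensity (by positivity)
    ((A.inv_card_le n).trans one_half_lt_one.le)

lemma arrayDensity_pos (n : ℕ) (i : Fin (k n)) (x : ℝ) : 0 < arrayDensity k κ g n i x :=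
  (by linarith [A.inv_card_le n] : 0 < 1 - (k n : ℝ)⁻¹).trans_le <|
    one_sub_le_mixtureDensity (by positivity)
      ((A.isProbDensity n i).signalDensity (A.pos n) (A.le_one n)).nonneg x

lemma isProbabilityMeasure_meanSignalLaw (n : ℕ) : IsProbabilityMeasure (meanSignalLaw g n) :=
  have := A.nonempty_fin n
  have := fun i => isProbabilityMeasure_logSignalLaw (A.isProbDensity n i)
  isProbabilityMeasure_averageMeasure

lemma isProbabilityMeasure_nullLaw (n : ℕ) : IsProbabilityMeasure (nullLaw k κ g n) :=
  Measure.isProbabilityMeasure_map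
    (measurable_logLikelihoodRatio fun i =>
      (A.isProbDensity_arrayDensity n i).measurable).aemeasurable

lemma isProbabilityMeasure_altLaw (n : ℕ) : IsProbabilityMeasure (altLaw k κ g n) :=
  have := fun i => (A.isProbDensity_arrayDensity n i).isProbabilityMeasure
  Measure.isProbabilityMeasure_map
    (measurable_logLikelihoodRatio fun i =>
      (A.isProbDensity_arrayDensity n i).measurable).aemeasurable

lemma altLaw_eq_withDensity (n : ℕ) :
    altLaw k κ g n = (nullLaw k κ g n).withDensity fun x => ENNReal.ofReal (Real.exp x) :=
  map_logLikelihoodRatio_alt (A.isProbDensity_arrayDensity n) (A.arrayDensity_pos n)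

lemma hasIncrements_nullLaw : HasIncrements k κ g (nullLaw k κ g) nullIncrement where
  isProbabilityMeasure := A.isProbabilityMeasure_nullLaw
  isIncrement t := ⟨_, isIncrement_nullIncrement t⟩
  deriv_one := deriv_nullIncrement_one
  charFun_eq n := charFun_map_logLikelihoodRatio fun i =>
    (A.isProbDensity_arrayDensity n i).measurable

lemma hasIncrements_altLaw : HasIncrements k κ g (altLaw k κ g) altIncrement where
  isProbabilityMeasure := A.isProbabilityMeasure_altLaw
  isIncrement t := ⟨_, isIncrement_altIncrement t⟩
  deriv_one := deriv_altIncrement_one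
  charFun_eq n t := by
    have := fun i => (A.isProbDensity_arrayDensity n i).isProbabilityMeasure
    rw [altLaw, charFun_map_logLikelihoodRatio fun i =>
      (A.isProbDensity_arrayDensity n i).measurable]
    simp only [integral_nullIncrement_densityMeasure (A.isProbDensity_arrayDensity n _)]

lemma tendsto_sum_integral_increment {W : ℝ → ℂ} {K : NNReal} (hW : IsIncrement W K) {ℓ : ℂ}
    (hℓ : Tendsto (fun n => ∫ x, incrementKernel W ((k n : ℝ)⁻¹ / κ n, x) ∂meanSignalLaw g n) atTop
      (𝓝 ℓ)) :
    Tendsto (fun n => ∑ i, ∫ x, W (arrayDensity k κ g n i x) ∂unif) atTop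
      (𝓝 (ℓ - deriv W 1)) := by
  have hdslope : Tendsto (fun n => dslope W 1 (1 - (k n : ℝ)⁻¹)) atTop (𝓝 (deriv W 1)) := by
    have hcont : ContinuousAt (dslope W 1) (1 - 0) :=
      hW.continuousOn_dslope.continuousAt (Ici_mem_nhds (by norm_num))
    rw [← dslope_same W 1]
    simpa only [sub_zero, Function.comp_def] using
      hcont.tendsto.comp (A.tendsto_inv_card.const_sub 1)
  have hκ : Tendsto (fun n => (1 - κ n : ℂ)) atTop (𝓝 1) := by
    simpa using A.tendsto_scale.ofReal.const_sub 1
  have hlim := hℓ.sub (hκ.mul hdslope)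
  rw [one_mul] at hlim
  refine tendsto_of_tendsto_of_dist hlim (squeeze_zero (fun _ => dist_nonneg) (fun n => ?_)
    (by simpa using A.tendsto_scale.mul_const (K : ℝ)))
  have := A.nonempty_fin n
  rw [dist_comm, dist_eq_norm]
  exact hW.norm_sum_integral_sub_le (by simpa using A.two_le n) (A.isProbDensity n) (A.pos n)
    (A.le_one n) (by rw [Fintype.card_fin])

lemma tendsto_prod_one_add_integral_increment {W : ℝ → ℂ} {K : NNReal} (hW : IsIncrement W K)
    {ℓ : ℂ} (hℓ : Tendsto
      (fun n => ∫ x, incrementKernel W ((k n : ℝ)⁻¹ / κ n, x) ∂meanSignalLaw g n) atTop (𝓝 ℓ)) :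
    Tendsto (fun n => ∏ i, (1 + ∫ x, W (arrayDensity k κ g n i x) ∂unif)) atTop
      (𝓝 (Complex.exp (ℓ - deriv W 1))) := by
  have hbound (n : ℕ) (i : Fin (k n)) :
      ‖∫ x, W (arrayDensity k κ g n i x) ∂unif‖ ≤ K * (2 * (k n : ℝ)⁻¹) :=
    hW.norm_integral_mixtureDensity_le
      ((A.isProbDensity n i).signalDensity (A.pos n) (A.le_one n)) (by positivity)
      (A.inv_card_le n)
  refine tendsto_prod_one_add_of_tendsto_sum (C := K * 2) ?_ hbound (fun n => ?_)
    (A.tendsto_sum_integral_increment hW hℓ)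
  · simpa using (A.tendsto_inv_card.const_mul 2).const_mul (K : ℝ)
  · have hk : (k n : ℝ) ≠ 0 := by exact_mod_cast (two_pos.trans_le (A.two_le n)).ne'
    refine (Finset.sum_le_sum fun i _ => hbound n i).trans_eq ?_
    rw [Finset.sum_const, Finset.card_univ, Fintype.card_fin, nsmul_eq_mul]
    field_simp

end IsSignalArray

end SignalArray

section Limits

lemma exp_sub_one_pos {x : ℝ} (hx : 0 < x) : 0 < Real.exp x - 1 :=
  sub_pos.2 (Real.one_lt_exp_iff.2 hx)

lemma IsIncrement.incrementKernel_one {W : ℝ → ℂ} {K : NNReal} (hW : IsIncrement W K) {x : ℝ}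
    (hx : 0 < x) : incrementKernel W (1, x) = ((Real.exp x - 1 : ℝ) : ℂ)⁻¹ * W (Real.exp x) := by
  have hne : ((Real.exp x - 1 : ℝ) : ℂ) ≠ 0 :=
    Complex.ofReal_ne_zero.2 (exp_sub_one_pos hx).ne'
  have h := hW.mul_incrementKernel zero_le_one hx.le
  rw [one_mul, add_sub_cancel] at h
  rw [← h, inv_mul_cancel_left₀ hne]

namespace IsSignalArray

variable {k : ℕ → ℕ} {κ : ℕ → ℝ} {g : ∀ n, Fin (k n) → ℝ → ℝ} (A : IsSignalArray k κ g)
include A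

section FiniteIntensity

variable {μs : ℕ → Measure ℝ} {W : ℝ → ℝ → ℂ} (hμ : HasIncrements k κ g μs W)
  {M : Measure ℝ} [IsProbabilityMeasure M] (hM : WeakLim (meanSignalLaw g) M)
include hμ hM

lemma tendsto_charFun_of_weakLim_meanSignalLaw {a : ℝ}
    (ha : Tendsto (fun n => (k n : ℝ)⁻¹ / κ n) atTop (𝓝 a)) (t : ℝ) :
    Tendsto (fun n => charFun (μs n) t) atTop
      (𝓝 (Complex.exp (∫ x, incrementKernel (W t) (a, x) ∂M - t * Complex.I))) := by
  have := A.isProbabilityMeasure_meanSignalLaw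
  obtain ⟨K, hW⟩ := hμ.isIncrement t
  simp only [hμ.charFun_eq, ← hμ.deriv_one]
  exact A.tendsto_prod_one_add_integral_increment hW <|
    hM.tendsto_integral_prodMk ha hW.continuous_incrementKernel hW.norm_incrementKernel_le

lemma weakLim_dirac_zero (ha : Tendsto (fun n => (k n : ℝ)⁻¹ / κ n) atTop (𝓝 0)) :
    WeakLim μs (Measure.dirac 0) := by
  have := hμ.isProbabilityMeasure
  refine weakLim_of_tendsto_charFun fun t => ?_
  convert A.tendsto_charFun_of_weakLim_meanSignalLaw hμ hM ha t using 2
  simp [incrementKernel_zero, hμ.deriv_one, charFun_dirac]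

lemma exists_weakLim_hasLevyTriplet (hM0 : ∀ᵐ x ∂M, 0 < x)
    (ha : Tendsto (fun n => (k n : ℝ)⁻¹ / κ n) atTop (𝓝 1)) {ρ : ℝ → ℝ} (hρ : Measurable ρ)
    (hρ0 : ∀ x > 0, 0 ≤ ρ x) {C : ℝ} (hC : ∀ x > 0, ρ x * min x 1 ≤ C)
    (hW : ∀ t : ℝ, ∀ x > 0, W t (Real.exp x) =
      ((Real.exp x - 1) * ρ x : ℝ) * (Complex.exp (t * x * Complex.I) - 1)) :
    ∃ ν : Measure ℝ, IsProbabilityMeasure ν ∧ WeakLim μs ν ∧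
      HasLevyTriplet ν
        (-1 + ∫ x, x / (1 + x ^ 2) ∂M.withDensity fun x => ENNReal.ofReal (ρ x)) 0
        (M.withDensity fun x => ENNReal.ofReal (ρ x)) := by
  have := hμ.isProbabilityMeasure
  set η := M.withDensity fun x => ENNReal.ofReal (ρ x)
  have hη : IsFiniteVariationLevyMeasure η :=
    isFiniteVariationLevyMeasure_withDensity hM0 hρ hρ0 hC
  have hkernel (t : ℝ) : ∫ x, incrementKernel (W t) (1, x) ∂M =
      ∫ x : ℝ, (Complex.exp (t * x * Complex.I) - 1) ∂η := by
    obtain ⟨K, hWt⟩ := hμ.isIncrement t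
    rw [integral_withDensity_ofReal hρ (hM0.mono hρ0)]
    refine integral_congr_ae (hM0.mono fun x hx => ?_)
    have hne : ((Real.exp x - 1 : ℝ) : ℂ) ≠ 0 :=
      Complex.ofReal_ne_zero.2 (exp_sub_one_pos hx).ne'
    simp only [hWt.incrementKernel_one hx, hW t x hx, Complex.ofReal_mul, Complex.real_smul]
    rw [mul_assoc, inv_mul_cancel_left₀ hne]
  have hlim (t : ℝ) := A.tendsto_charFun_of_weakLim_meanSignalLaw hμ hM ha t
  simp only [hkernel] at hlim
  have hcont : ContinuousAt (fun t : ℝ => Complex.exp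
      (∫ x : ℝ, (Complex.exp (t * x * Complex.I) - 1) ∂η - t * Complex.I)) 0 :=
    ((hη.continuousAt_integral_exp_sub_one 0).sub (by fun_prop)).cexp
  obtain ⟨ν, hν, hchar, hweak⟩ := exists_weakLim_of_tendsto_charFun hcont hlim
  refine ⟨ν, hν, hweak, hη.hasLevyTriplet_of_charFun fun t => ?_⟩
  rw [congrFun hchar t]
  congr 1
  push_cast
  ring

end FiniteIntensity

lemma norm_integral_nullIncrement_meanSignalLaw_le (t : ℝ) {a : ℝ} (ha : 0 < a) (n : ℕ) :
    ‖∫ x, incrementKernel (nullIncrement t) (a, x) ∂meanSignalLaw g n‖ ≤ 2 / a := by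
  have hW := isIncrement_nullIncrement t
  have := A.nonempty_fin n
  have := fun i => isProbabilityMeasure_logSignalLaw (A.isProbDensity n i)
  have hterm (i : Fin (k n)) :
      ‖∫ x, incrementKernel (nullIncrement t) (a, x) ∂logSignalLaw unif (g n i)‖ ≤ 2 / a := by
    have hmul : ‖(a : ℂ)‖ * ‖∫ x, incrementKernel (nullIncrement t) (a, x)
        ∂logSignalLaw unif (g n i)‖ ≤ 2 := by
      rw [← norm_mul, ← hW.integral_eq_mul_integral_incrementKernel (A.isProbDensity n i) ha.le]
      simpa only [probReal_univ, mul_one] using norm_integral_le_of_norm_le_const (μ := unif)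
        (ae_of_all _ fun u => norm_nullIncrement_le t (1 + a * g n i u))
    rwa [Complex.norm_of_nonneg ha.le, ← le_div_iff₀' ha] at hmul
  exact norm_integral_averageMeasure_le (fun i => .of_bound
    (hW.continuous_incrementKernel.comp (Continuous.prodMk_right _)).aestronglyMeasurable _
      (ae_of_all _ fun x => hW.norm_incrementKernel_le _)) hterm

lemma weakLim_nullLaw_dirac_neg_one (ha : Tendsto (fun n => (k n : ℝ)⁻¹ / κ n) atTop atTop) :
    WeakLim (nullLaw k κ g) (Measure.dirac (-1)) := by
  have := A.isProbabilityMeasure_nullLaw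
  refine weakLim_of_tendsto_charFun fun t => ?_
  have hzero : Tendsto (fun n => ∫ x, incrementKernel (nullIncrement t) ((k n : ℝ)⁻¹ / κ n, x)
      ∂meanSignalLaw g n) atTop (𝓝 0) :=
    squeeze_zero_norm' ((ha.eventually_gt_atTop 0).mono fun n hn =>
      A.norm_integral_nullIncrement_meanSignalLaw_le t hn n) (ha.const_div_atTop 2)
  simp only [A.hasIncrements_nullLaw.charFun_eq]
  convert A.tendsto_prod_one_add_integral_increment (isIncrement_nullIncrement t) hzero using 2
  simp [deriv_nullIncrement_one, charFun_dirac]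

lemma weakLim_map_coe_altLaw (ha : Tendsto (fun n => (k n : ℝ)⁻¹ / κ n) atTop atTop) :
    WeakLim (fun n => (altLaw k κ g n).map ((↑) : ℝ → EReal))
      (ENNReal.ofReal (Real.exp (-1)) • Measure.dirac ((-1 : ℝ) : EReal) +
        ENNReal.ofReal (1 - Real.exp (-1)) • Measure.dirac ⊤) := by
  have := A.isProbabilityMeasure_nullLaw
  have := A.isProbabilityMeasure_altLaw
  have hmass (n : ℕ) : ∫⁻ x, ENNReal.ofReal (Real.exp x) ∂nullLaw k κ g n = 1 := by
    rw [← setLIntegral_univ, ← withDensity_apply _ MeasurableSet.univ, ← A.altLaw_eq_withDensity,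
      measure_univ]
  have h := (A.weakLim_nullLaw_dirac_neg_one ha).map_coe_withDensity_exp hmass
  simp only [← A.altLaw_eq_withDensity] at h
  rwa [lintegral_dirac, dirac_withDensity, Measure.map_smul,
    Measure.map_dirac' (by fun_prop), ← ENNReal.ofReal_one,
    ← ENNReal.ofReal_sub _ (Real.exp_pos _).le] at h

end IsSignalArray

end Limits

section JumpMeasures

/-- The Lévy measure `η₁` of the limit under the null. -/
def nullJumpMeasure (M : Measure ℝ) : Measure ℝ :=
  M.withDensity fun x => ENNReal.ofReal (Real.exp x - 1)⁻¹

/-- The Lévy measure `η₂` of the limit under the alternative. -/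
def altJumpMeasure (M : Measure ℝ) : Measure ℝ :=
  M.withDensity fun x => ENNReal.ofReal (Real.exp x / (Real.exp x - 1))

lemma exp_div_exp_sub_one {x : ℝ} (hx : 0 < x) :
    Real.exp x / (Real.exp x - 1) = (Real.exp x - 1)⁻¹ + 1 := by
  have := (exp_sub_one_pos hx).ne'
  field_simp
  ring

lemma inv_exp_sub_one_mul_min_le {x : ℝ} (hx : 0 < x) : (Real.exp x - 1)⁻¹ * min x 1 ≤ 1 :=
  (inv_mul_le_iff₀ (exp_sub_one_pos hx)).2 <| by
    linarith [min_le_left x 1, Real.add_one_le_exp x]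

lemma exp_div_exp_sub_one_mul_min_le {x : ℝ} (hx : 0 < x) :
    Real.exp x / (Real.exp x - 1) * min x 1 ≤ 2 := by
  rw [exp_div_exp_sub_one hx, add_one_mul]
  linarith [inv_exp_sub_one_mul_min_le hx, min_le_right x 1]

variable {M : Measure ℝ} (hM0 : ∀ᵐ x ∂M, 0 < x)
include hM0

lemma isFiniteVariationLevyMeasure_nullJumpMeasure [IsFiniteMeasure M] :
    IsFiniteVariationLevyMeasure (nullJumpMeasure M) :=
  isFiniteVariationLevyMeasure_withDensity hM0 (by fun_prop)
    (fun _ hx => (inv_pos.2 (exp_sub_one_pos hx)).le) fun _ => inv_exp_sub_one_mul_min_le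

lemma altJumpMeasure_eq_add : altJumpMeasure M = nullJumpMeasure M + M := by
  have h : (fun x => ENNReal.ofReal (Real.exp x / (Real.exp x - 1))) =ᵐ[M]
      (fun x => ENNReal.ofReal (Real.exp x - 1)⁻¹) + 1 := hM0.mono fun x hx => by
    beta_reduce
    rw [exp_div_exp_sub_one hx, ENNReal.ofReal_add (inv_pos.2 (exp_sub_one_pos hx)).le zero_le_one,
      ENNReal.ofReal_one, Pi.add_apply, Pi.one_apply]
  rw [altJumpMeasure, withDensity_congr_ae h, withDensity_add_right _ measurable_one,
    withDensity_one, nullJumpMeasure]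

lemma restrict_Ioi_nullJumpMeasure :
    (nullJumpMeasure M).restrict (Set.Ioi 0) = nullJumpMeasure M :=
  Measure.restrict_eq_self_of_ae_mem ((withDensity_absolutelyContinuous M _).ae_le hM0)

lemma ae_inv_mul_exp_sub_one_mul (f : ℝ → ℝ) :
    (fun x => (Real.exp x - 1)⁻¹ • ((Real.exp x - 1) * f x)) =ᵐ[M] f :=
  hM0.mono fun _ hx => inv_mul_cancel_left₀ (exp_sub_one_pos hx).ne' _

lemma integral_nullJumpMeasure_exp_sub_one_mul (f : ℝ → ℝ) :
    ∫ x, (Real.exp x - 1) * f x ∂nullJumpMeasure M = ∫ x, f x ∂M := by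
  rw [nullJumpMeasure, integral_withDensity_ofReal (by fun_prop)
    (hM0.mono fun _ hx => (inv_pos.2 (exp_sub_one_pos hx)).le)]
  exact integral_congr_ae (ae_inv_mul_exp_sub_one_mul hM0 f)

lemma integrable_nullJumpMeasure_exp_sub_one_mul {f : ℝ → ℝ} (hf : Integrable f M) :
    Integrable (fun x => (Real.exp x - 1) * f x) (nullJumpMeasure M) := by
  rw [nullJumpMeasure, integrable_withDensity_ofReal_iff (by fun_prop)
    (hM0.mono fun _ hx => (inv_pos.2 (exp_sub_one_pos hx)).le)]
  exact hf.congr (ae_inv_mul_exp_sub_one_mul hM0 f).symm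

lemma setIntegral_nullJumpMeasure_compensator [IsProbabilityMeasure M] :
    ∫ x in Set.Ioi 0, (1 - Real.exp x + x / (1 + x ^ 2)) ∂nullJumpMeasure M =
      -1 + ∫ x, x / (1 + x ^ 2) ∂nullJumpMeasure M := by
  have hsub (x : ℝ) : 1 - Real.exp x = (Real.exp x - 1) * (fun _ => -1) x := by ring
  simp only [restrict_Ioi_nullJumpMeasure hM0, hsub]
  rw [integral_add (integrable_nullJumpMeasure_exp_sub_one_mul hM0 (integrable_const _))
    (isFiniteVariationLevyMeasure_nullJumpMeasure hM0).integrable_div_one_add_sq,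
    integral_nullJumpMeasure_exp_sub_one_mul hM0, integral_const, probReal_univ, one_smul]

lemma integral_altJumpMeasure_div_one_add_sq [IsFiniteMeasure M] :
    ∫ x, x / (1 + x ^ 2) ∂altJumpMeasure M = ∫ x, x / (1 + x ^ 2) ∂nullJumpMeasure M +
      ∫ x in Set.Ioi 0, (Real.exp x - 1) * (x / (1 + x ^ 2)) ∂nullJumpMeasure M := by
  have hM : Integrable (fun x : ℝ => x / (1 + x ^ 2)) M := by
    refine .of_bound (Measurable.aestronglyMeasurable (by fun_prop)) 1 (hM0.mono fun x hx => ?_)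
    rw [Real.norm_of_nonneg (by positivity), div_le_one (by positivity)]
    nlinarith [sq_nonneg (x - 1)]
  rw [altJumpMeasure_eq_add hM0, integral_add_measure
    (isFiniteVariationLevyMeasure_nullJumpMeasure hM0).integrable_div_one_add_sq hM,
    restrict_Ioi_nullJumpMeasure hM0, integral_nullJumpMeasure_exp_sub_one_mul hM0]

namespace IsSignalArray

variable {k : ℕ → ℕ} {κ : ℕ → ℝ} {g : ∀ n, Fin (k n) → ℝ → ℝ} (A : IsSignalArray k κ g)
  [IsProbabilityMeasure M] (hM : WeakLim (meanSignalLaw g) M)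
  (ha : Tendsto (fun n => (k n : ℝ)⁻¹ / κ n) atTop (𝓝 1))
include A hM ha

lemma exists_weakLim_nullLaw : ∃ ν : Measure ℝ, IsProbabilityMeasure ν ∧ WeakLim (nullLaw k κ g) ν ∧
    HasLevyTriplet ν (-1 + ∫ x, x / (1 + x ^ 2) ∂nullJumpMeasure M) 0 (nullJumpMeasure M) := by
  refine A.exists_weakLim_hasLevyTriplet A.hasIncrements_nullLaw hM hM0 ha (by fun_prop)
    (fun _ hx => (inv_pos.2 (exp_sub_one_pos hx)).le) (fun _ => inv_exp_sub_one_mul_min_le)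
    fun t x hx => ?_
  rw [mul_inv_cancel₀ (exp_sub_one_pos hx).ne', nullIncrement, Real.log_exp]
  simp

lemma exists_weakLim_altLaw : ∃ ν : Measure ℝ, IsProbabilityMeasure ν ∧ WeakLim (altLaw k κ g) ν ∧
    HasLevyTriplet ν (-1 + ∫ x, x / (1 + x ^ 2) ∂altJumpMeasure M) 0 (altJumpMeasure M) := by
  refine A.exists_weakLim_hasLevyTriplet A.hasIncrements_altLaw hM hM0 ha (by fun_prop)
    (fun _ hx => (div_pos (Real.exp_pos _) (exp_sub_one_pos hx)).le)
    (fun _ => exp_div_exp_sub_one_mul_min_le) fun t x hx => ?_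
  rw [mul_div_cancel₀ _ (exp_sub_one_pos hx).ne', altIncrement, nullIncrement, Real.log_exp]

end IsSignalArray

end JumpMeasures

section PValueLaws

lemma exists_isSignalArray {k : ℕ → ℕ} {κ : ℕ → ℝ} {h : ℕ → ℕ → ℝ → ℝ}
    (hk : Tendsto k atTop atTop) (hκ : Tendsto κ atTop (𝓝[>] 0))
    (hh : ∀ n i, (∀ x ∈ Set.Ioo (0 : ℝ) 1, 0 ≤ h n i x) ∧
      (∫ x in Set.Ioo (0 : ℝ) 1, h n i x) = 1) :
    ∃ (N : ℕ) (g : ∀ n, Fin (k (n + N)) → ℝ → ℝ),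
      IsSignalArray (fun n => k (n + N)) (fun n => κ (n + N)) g ∧
        ∀ n (i : Fin (k (n + N))), h (n + N) i =ᵐ[unif] g n i := by
  have hκ' := tendsto_nhdsWithin_iff.1 hκ
  obtain ⟨N, hN⟩ := eventually_atTop.1 <| (hk.eventually_ge_atTop 2).and <|
    hκ'.2.and (hκ'.1.eventually_le_const one_pos)
  choose g hg hhg using fun n i =>
    exists_isProbDensity_ae_eq (P := unif) (ae_restrict_of_forall_mem measurableSet_Ioo (hh n i).1)
      (hh n i).2
  have hshift : Tendsto (· + N) atTop atTop := tendsto_add_atTop_nat N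
  exact ⟨N, fun n i => g (n + N) i,
    ⟨fun n => (hN _ (Nat.le_add_left N n)).1, hk.comp hshift,
      fun n => (hN _ (Nat.le_add_left N n)).2.1, fun n => (hN _ (Nat.le_add_left N n)).2.2,
      hκ'.1.comp hshift, fun n i => hg _ i⟩, fun n i => hhg _ i⟩

namespace IsSignalArray

variable {k : ℕ → ℕ} {κ : ℕ → ℝ} {g : ∀ n, Fin (k n) → ℝ → ℝ} (A : IsSignalArray k κ g)
include A

section Laws

variable {h : ℕ → ℕ → ℝ → ℝ} (hg : ∀ n (i : Fin (k n)), h n i =ᵐ[unif] g n i)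
include hg

lemma Qmix_sigM_eq (n : ℕ) (i : Fin (k n)) :
    Qmix unif (sigM h (fun n _ => κ n) rzero n i) (k n : ℝ)⁻¹ =
      densityMeasure unif (arrayDensity k κ g n i) := by
  have hdens := (A.isProbDensity n i).signalDensity (A.pos n) (A.le_one n)
  rw [sigM_rzero, arrayDensity, ← Qmix_densityMeasure hdens.measurable hdens.nonneg (by positivity)
    ((A.inv_card_le n).trans one_half_lt_one.le), densityMeasure, densityMeasure]
  congr 1
  refine withDensity_congr_ae ?_
  exact (signalDensity_congr_ae (A.pos n) (A.le_one n) (hg n i)).fun_comp ENNReal.ofReal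

lemma lawPV_P_eq (n : ℕ) :
    lawPV_P h (fun n _ => κ n) rzero (fun n _ => (k n : ℝ)⁻¹) k n =
      (nullLaw k κ g n).map ((↑) : ℝ → EReal) :=
  lawPV_P_eq_map (A.Qmix_sigM_eq hg n) (A.isProbDensity_arrayDensity n) (A.arrayDensity_pos n)

lemma lawPV_Q_eq (n : ℕ) :
    lawPV_Q h (fun n _ => κ n) rzero (fun n _ => (k n : ℝ)⁻¹) k n =
      (altLaw k κ g n).map ((↑) : ℝ → EReal) :=
  lawPV_Q_eq_map (A.Qmix_sigM_eq hg n) (A.isProbDensity_arrayDensity n) (A.arrayDensity_pos n)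

lemma meanSignalLaw_real_Ioi (n : ℕ) (x : ℝ) :
    (meanSignalLaw g n).real (Set.Ioi x) = (k n : ℝ)⁻¹ * ∑ i : Fin (k n),
      ∫ t in Set.Ioo (0 : ℝ) 1, h n i t * (if Real.exp x - 1 < h n i t then 1 else 0) := by
  have := fun i => isProbabilityMeasure_logSignalLaw (A.isProbDensity n i)
  rw [meanSignalLaw, averageMeasure_real, Fintype.card_fin]
  congr! 2 with i
  rw [logSignalLaw_real_Ioi (A.isProbDensity n i)]
  exact integral_congr_ae ((hg n i).symm.fun_comp fun y => y * if Real.exp x - 1 < y then 1 else 0)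

end Laws

section Tails

variable {D : Set ℝ} {M : Measure ℝ}

lemma meanSignalLaw_Iic_zero (n : ℕ) : meanSignalLaw g n (Set.Iic 0) = 0 :=
  averageMeasure_eq_zero fun i => logSignalLaw_Iic_zero (A.isProbDensity n i)

lemma meanSignalLaw_real_Iic_le (n : ℕ) {x : ℝ} (hx : 0 ≤ x) :
    (meanSignalLaw g n).real (Set.Iic x) ≤ Real.exp x - 1 := by
  have := fun i => isProbabilityMeasure_logSignalLaw (A.isProbDensity n i)
  have := A.nonempty_fin n
  rw [meanSignalLaw, averageMeasure_real, inv_mul_le_iff₀ (by positivity)]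
  refine (Finset.sum_le_sum fun i _ =>
    logSignalLaw_real_Iic_le (A.isProbDensity n i) hx).trans_eq ?_
  rw [Finset.sum_const, Finset.card_univ, nsmul_eq_mul]

variable (hDdense : Set.Ioi 0 ⊆ closure D) (hM0 : M (Set.Iic 0) = 0)
  (htail : ∀ x ∈ D, Tendsto (fun n => (meanSignalLaw g n).real (Set.Ioi x)) atTop
    (𝓝 (M.real (Set.Ioi x))))
include hDdense hM0 htail

lemma isProbabilityMeasure_of_tendsto_meanSignalLaw (hD : D ⊆ Set.Ioi 0)
    (hMfin : ∀ x ∈ D, M (Set.Ioi x) ≠ ⊤) : IsProbabilityMeasure M := by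
  have := A.isProbabilityMeasure_meanSignalLaw
  have hφ : Tendsto (fun x => Real.exp x - 1) (𝓝[>] 0) (𝓝 0) := by
    have : Continuous fun x => Real.exp x - 1 := by fun_prop
    simpa using (this.tendsto 0).mono_left nhdsWithin_le_nhds
  exact isProbabilityMeasure_of_tendsto_Ioi hD hDdense hM0 hMfin htail hφ
    fun n x hx => A.meanSignalLaw_real_Iic_le n hx.le

lemma weakLim_meanSignalLaw [IsProbabilityMeasure M] : WeakLim (meanSignalLaw g) M :=
  have := A.isProbabilityMeasure_meanSignalLaw
  weakLim_of_tendsto_Ioi_pos hDdense hM0 A.meanSignalLaw_Iic_zero htail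

end Tails

end IsSignalArray

end PValueLaws

section Rates

lemma tendsto_rpow_neg_atTop_nhdsGT {r : ℝ} (hr : 0 < r) :
    Tendsto (fun x : ℝ => x ^ (-r)) atTop (𝓝[>] 0) :=
  tendsto_nhdsWithin_iff.2 ⟨tendsto_rpow_neg_atTop hr,
    (eventually_gt_atTop 0).mono fun _ hx => Real.rpow_pos_of_pos hx _⟩

lemma mul_rpow_neg {x : ℝ} (hx : 0 < x) (r : ℝ) : x * x ^ (-r) = x ^ (1 - r) := by
  rw [sub_eq_add_neg, Real.rpow_add hx, Real.rpow_one]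

lemma tendsto_mul_rpow_neg_atTop {r : ℝ} (hr : r < 1) :
    Tendsto (fun x : ℝ => x * x ^ (-r)) atTop atTop :=
  (tendsto_rpow_atTop (sub_pos.2 hr)).congr' <|
    (eventually_gt_atTop 0).mono fun _ hx => (mul_rpow_neg hx r).symm

lemma tendsto_mul_rpow_neg_one :
    Tendsto (fun x : ℝ => x * x ^ (-1 : ℝ)) atTop (𝓝 1) :=
  tendsto_const_nhds.congr' <| (eventually_gt_atTop 0).mono fun x hx => by
    beta_reduce
    rw [mul_rpow_neg hx, sub_self, Real.rpow_zero]

lemma tendsto_mul_rpow_neg_zero {r : ℝ} (hr : 1 < r) :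
    Tendsto (fun x : ℝ => x * x ^ (-r)) atTop (𝓝 0) :=
  (tendsto_rpow_neg_atTop (sub_pos.2 hr)).congr' <|
    (eventually_gt_atTop 0).mono fun x hx => by
    beta_reduce
    rw [mul_rpow_neg hx, neg_sub]

lemma tendsto_inv_mul_sum_of_tendsto_iSup {k : ℕ → ℕ} (hk : Tendsto k atTop atTop)
    {a : ∀ n, Fin (k n) → ℝ} {c : ℝ} (h : Tendsto (fun n => ⨆ i, |a n i - c|) atTop (𝓝 0)) :
    Tendsto (fun n => (k n : ℝ)⁻¹ * ∑ i, a n i) atTop (𝓝 c) := by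
  rw [tendsto_iff_norm_sub_tendsto_zero]
  refine squeeze_zero' (Eventually.of_forall fun _ => norm_nonneg _) ?_ h
  filter_upwards [hk.eventually_gt_atTop 0] with n hn
  have hk0 : (0 : ℝ) < k n := Nat.cast_pos.2 hn
  have hsub : (k n : ℝ)⁻¹ * ∑ i, a n i - c = (k n : ℝ)⁻¹ * ∑ i, (a n i - c) := by
    rw [Finset.sum_sub_distrib, Finset.sum_const, Finset.card_univ, Fintype.card_fin,
      nsmul_eq_mul, mul_sub, inv_mul_cancel_left₀ hk0.ne']
  rw [hsub, norm_mul, norm_inv, Real.norm_of_nonneg hk0.le, inv_mul_le_iff₀ hk0]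
  refine (norm_sum_le_of_le _ fun i _ =>
    le_ciSup (f := fun i => |a n i - c|) (Set.finite_range _).bddAbove i).trans_eq ?_
  rw [Finset.sum_const, Finset.card_univ, Fintype.card_fin, nsmul_eq_mul]

end Rates

section MainTheorem

variable {k : ℕ → ℕ} {κ : ℕ → ℝ} {h : ℕ → ℕ → ℝ → ℝ}

namespace IsSignalArray

variable {N : ℕ} {g : ∀ n, Fin (k (n + N)) → ℝ → ℝ}
  (A : IsSignalArray (fun n => k (n + N)) (fun n => κ (n + N)) g)
  (hg : ∀ n (i : Fin (k (n + N))), h (n + N) i =ᵐ[unif] g n i) {ν : Measure EReal}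
include A hg

lemma weakLim_lawPV_P
    (hν : WeakLim (fun n => (nullLaw (fun n => k (n + N)) (fun n => κ (n + N)) g n).map (↑)) ν) :
    WeakLim (lawPV_P h (fun n _ => κ n) rzero (fun n _ => (k n : ℝ)⁻¹) k) ν := by
  simp only [← A.lawPV_P_eq (h := fun n => h (n + N)) hg] at hν
  exact .of_shift N hν

lemma weakLim_lawPV_Q
    (hν : WeakLim (fun n => (altLaw (fun n => k (n + N)) (fun n => κ (n + N)) g n).map (↑)) ν) :
    WeakLim (lawPV_Q h (fun n _ => κ n) rzero (fun n _ => (k n : ℝ)⁻¹) k) ν := by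
  simp only [← A.lawPV_Q_eq (h := fun n => h (n + N)) hg] at hν
  exact .of_shift N hν

end IsSignalArray

lemma WeakLim.map_coe_of_dirac {μs : ℕ → Measure ℝ} {c : ℝ} (h : WeakLim μs (Measure.dirac c)) :
    WeakLim (fun n => (μs n).map (↑)) (Measure.dirac (c : EReal)) := by
  have hmap := h.map continuous_coe_real_ereal
  rwa [Measure.map_dirac' measurable_coe_real_ereal] at hmap

theorem statement12_general {D : Set ℝ} {M : Measure ℝ}
    (hk : Tendsto k atTop atTop) (hκ : Tendsto κ atTop (𝓝[>] 0))
    (hh : ∀ n i, (∀ x ∈ Set.Ioo (0 : ℝ) 1, 0 ≤ h n i x) ∧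
      (∫ x in Set.Ioo (0 : ℝ) 1, h n i x) = 1)
    (hD : D ⊆ Set.Ioi 0) (hDdense : Set.Ioi (0 : ℝ) ⊆ closure D)
    (hM0 : M (Set.Iic 0) = 0) (hMfin : ∀ x ∈ D, M (Set.Ioi x) ≠ ⊤)
    (hconv : ∀ x ∈ D, Tendsto (fun n => (k n : ℝ)⁻¹ * ∑ i : Fin (k n),
      ∫ t in Set.Ioo (0 : ℝ) 1, h n i t * (if Real.exp x - 1 < h n i t then 1 else 0)) atTop
        (𝓝 (M.real (Set.Ioi x)))) :
    (Tendsto (fun n => k n * κ n) atTop atTop →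
      WeakLim (lawPV_P h (fun n _ => κ n) rzero (fun n _ => (k n : ℝ)⁻¹) k)
        (Measure.dirac ((0 : ℝ) : EReal)) ∧
      WeakLim (lawPV_Q h (fun n _ => κ n) rzero (fun n _ => (k n : ℝ)⁻¹) k)
        (Measure.dirac ((0 : ℝ) : EReal))) ∧
    (Tendsto (fun n => k n * κ n) atTop (𝓝 1) →
      ∃ (ν1 ν2 : Measure ℝ) (γ1 γ2 : ℝ),
        IsProbabilityMeasure ν1 ∧ IsProbabilityMeasure ν2 ∧
        HasLevyTriplet ν1 γ1 0 (nullJumpMeasure M) ∧ HasLevyTriplet ν2 γ2 0 (altJumpMeasure M) ∧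
        0 = γ1 - ∫ x in Set.Ioi 0, (1 - Real.exp x + x / (1 + x ^ 2)) ∂nullJumpMeasure M ∧
        γ2 = γ1 + ∫ x in Set.Ioi 0, (Real.exp x - 1) * (x / (1 + x ^ 2)) ∂nullJumpMeasure M ∧
        WeakLim (lawPV_P h (fun n _ => κ n) rzero (fun n _ => (k n : ℝ)⁻¹) k) (ν1.map (↑)) ∧
        WeakLim (lawPV_Q h (fun n _ => κ n) rzero (fun n _ => (k n : ℝ)⁻¹) k) (ν2.map (↑))) ∧
    (Tendsto (fun n => k n * κ n) atTop (𝓝 0) →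
      WeakLim (lawPV_P h (fun n _ => κ n) rzero (fun n _ => (k n : ℝ)⁻¹) k)
        (Measure.dirac ((-1 : ℝ) : EReal)) ∧
      WeakLim (lawPV_Q h (fun n _ => κ n) rzero (fun n _ => (k n : ℝ)⁻¹) k)
        (ENNReal.ofReal (Real.exp (-1)) • Measure.dirac ((-1 : ℝ) : EReal) +
          ENNReal.ofReal (1 - Real.exp (-1)) • Measure.dirac ⊤)) := by
  obtain ⟨N, g, A, hg⟩ := exists_isSignalArray hk hκ hh
  have htail (x : ℝ) (hx : x ∈ D) : Tendsto (fun n => (meanSignalLaw g n).real (Set.Ioi x)) atTop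
      (𝓝 (M.real (Set.Ioi x))) := by
    simpa only [A.meanSignalLaw_real_Ioi (h := fun n => h (n + N)) hg] using
      (tendsto_add_atTop_iff_nat N).2 (hconv x hx)
  have := A.isProbabilityMeasure_of_tendsto_meanSignalLaw hDdense hM0 htail hD hMfin
  have hM := A.weakLim_meanSignalLaw hDdense hM0 htail
  have hpos : ∀ᵐ x ∂M, 0 < x := by simpa only [ae_iff, not_lt, Set.Iic_def] using hM0
  have hratio {l : Filter ℝ} (hl : Tendsto (fun n => (k n * κ n)⁻¹) atTop l) :
      Tendsto (fun n => (k (n + N) : ℝ)⁻¹ / κ (n + N)) atTop l := by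
    simpa only [mul_inv, ← div_eq_mul_inv] using (tendsto_add_atTop_iff_nat N).2 hl
  refine ⟨fun hkκ => ?_, fun hkκ => ?_, fun hkκ => ?_⟩
  · have ha := hratio (tendsto_inv_atTop_zero.comp hkκ)
    have hnull := A.weakLim_dirac_zero A.hasIncrements_nullLaw hM ha
    have halt := A.weakLim_dirac_zero A.hasIncrements_altLaw hM ha
    exact ⟨A.weakLim_lawPV_P hg hnull.map_coe_of_dirac, A.weakLim_lawPV_Q hg halt.map_coe_of_dirac⟩
  · have ha := hratio (inv_one (G := ℝ) ▸ hkκ.inv₀ one_ne_zero)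
    obtain ⟨ν1, hν1, hnull, hlevy1⟩ := A.exists_weakLim_nullLaw hpos hM ha
    obtain ⟨ν2, hν2, halt, hlevy2⟩ := A.exists_weakLim_altLaw hpos hM ha
    refine ⟨ν1, ν2, _, _, hν1, hν2, hlevy1, hlevy2, ?_, ?_,
      A.weakLim_lawPV_P hg (hnull.map continuous_coe_real_ereal),
      A.weakLim_lawPV_Q hg (halt.map continuous_coe_real_ereal)⟩
    · rw [setIntegral_nullJumpMeasure_compensator hpos, sub_self]
    · rw [integral_altJumpMeasure_div_one_add_sq hpos, add_assoc]
  · have hkκpos : Tendsto (fun n => k n * κ n) atTop (𝓝[>] 0) := tendsto_nhdsWithin_iff.2 ⟨hkκ,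
      ((hk.eventually_gt_atTop 0).and (tendsto_nhdsWithin_iff.1 hκ).2).mono fun n hn =>
        mul_pos (Nat.cast_pos.2 hn.1) (Set.mem_Ioi.1 hn.2)⟩
    have ha := hratio (tendsto_inv_nhdsGT_zero.comp hkκpos)
    exact ⟨A.weakLim_lawPV_P hg (A.weakLim_nullLaw_dirac_neg_one ha).map_coe_of_dirac,
      A.weakLim_lawPV_Q hg (A.weakLim_map_coe_altLaw ha)⟩

end MainTheorem

/-- extreme case `β = 1` in the nonparametric p-value model. -/
theorem statement12
    (k : ℕ → ℕ) (h : ℕ → ℕ → ℝ → ℝ) (κ : ℕ → ℕ → ℝ) (ε : ℕ → ℕ → ℝ)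
    (rr : ℝ) (D : Set ℝ) (M : Measure ℝ)
    (hk : Tendsto k atTop atTop)
    (hrr : 0 < rr)
    (hκ : ∀ n i, κ n i = (k n : ℝ) ^ (-rr))
    (hε : ∀ n i, ε n i = ((k n : ℝ))⁻¹)
    (hh : ∀ n i, (∀ x ∈ Set.Ioo (0 : ℝ) 1, 0 ≤ h n i x) ∧
      (∫ x in Set.Ioo (0 : ℝ) 1, h n i x) = 1)
    -- D dense in (0,∞), M a measure on (0,∞] with no mass at ∞
    (hD : D ⊆ Set.Ioi 0) (hDdense : Set.Ioi (0 : ℝ) ⊆ closure D)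
    (hM0 : M (Set.Iic 0) = 0)
    (hMfin : ∀ x ∈ D, M (Set.Ioi x) ≠ ⊤)
    (hconv : ∀ x ∈ D, Tendsto (fun n => ⨆ i : Fin (k n),
      |(∫ t in Set.Ioo (0 : ℝ) 1,
          h n i t * (if Real.exp x - 1 < h n i t then (1 : ℝ) else 0)) -
        (M (Set.Ioi x)).toReal|) atTop (nhds 0)) :
    -- (a) undetectable case: ξ1 ≡ ξ2 ≡ 0
    (rr < 1 →
      WeakLim (lawPV_P h κ rzero ε k) (Measure.dirac ((0 : ℝ) : EReal)) ∧
      WeakLim (lawPV_Q h κ rzero ε k) (Measure.dirac ((0 : ℝ) : EReal))) ∧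
    -- (b) r = 1: infinitely divisible limits with triplets (γ_j, 0, η_j)
    (rr = 1 →
      ∃ (ν1 ν2 : Measure ℝ) (γ1 γ2 : ℝ),
        IsProbabilityMeasure ν1 ∧ IsProbabilityMeasure ν2 ∧
        HasLevyTriplet ν1 γ1 0
          (M.withDensity (fun x => ENNReal.ofReal ((Real.exp x - 1)⁻¹))) ∧
        HasLevyTriplet ν2 γ2 0
          (M.withDensity (fun x => ENNReal.ofReal (Real.exp x / (Real.exp x - 1)))) ∧
        (0 : ℝ) = γ1 - (∫ x in Set.Ioi (0 : ℝ), (1 - Real.exp x + x / (1 + x ^ 2))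
            ∂(M.withDensity (fun x => ENNReal.ofReal ((Real.exp x - 1)⁻¹)))) ∧
        γ2 = γ1 + (∫ x in Set.Ioi (0 : ℝ), ((Real.exp x - 1) * (x / (1 + x ^ 2)))
            ∂(M.withDensity (fun x => ENNReal.ofReal ((Real.exp x - 1)⁻¹)))) ∧
        WeakLim (lawPV_P h κ rzero ε k) (ν1.map (fun x : ℝ => (x : EReal))) ∧
        WeakLim (lawPV_Q h κ rzero ε k) (ν2.map (fun x : ℝ => (x : EReal)))) ∧
    -- (c) r > 1: ξ1 ≡ −1 and ξ2 ∼ e⁻¹ δ₋₁ + (1−e⁻¹) δ₊∞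
    (1 < rr →
      WeakLim (lawPV_P h κ rzero ε k) (Measure.dirac ((-1 : ℝ) : EReal)) ∧
      WeakLim (lawPV_Q h κ rzero ε k)
        ((ENNReal.ofReal (Real.exp (-1))) • Measure.dirac ((-1 : ℝ) : EReal) +
          (ENNReal.ofReal (1 - Real.exp (-1))) • Measure.dirac (⊤ : EReal))) := by
  obtain rfl : κ = fun n _ => (k n : ℝ) ^ (-rr) := funext₂ hκ
  obtain rfl : ε = fun n _ => (k n : ℝ)⁻¹ := funext₂ hε
  have hkR : Tendsto (fun n => (k n : ℝ)) atTop atTop := tendsto_natCast_atTop_atTop.comp hk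
  obtain ⟨sparse, critical, dense⟩ := statement12_general hk
    ((tendsto_rpow_neg_atTop_nhdsGT hrr).comp hkR) hh hD hDdense hM0 hMfin
    fun x hx => tendsto_inv_mul_sum_of_tendsto_iSup hk (hconv x hx)
  refine ⟨fun hr => sparse ((tendsto_mul_rpow_neg_atTop hr).comp hkR), ?_,
    fun hr => dense ((tendsto_mul_rpow_neg_zero hr).comp hkR)⟩
  rintro rfl
  exact critical (tendsto_mul_rpow_neg_one.comp hkR)

end
end

section
/- In the heteroscedastic normal mixture model with ε_n = n^{−1} and ϑ_n = √(2 r log n): (i) if r < 1, the model is undetectable, i.e. ‖P_(n) − Q_(n)‖ → 0; (ii) if r = 1, then T_n converges in distribution to the constant −1/2 under P_(n), and under Q_(n) the law of T_n converges weakly (on [−∞,∞]) to e^{−1/2}·δ_{−1/2} + (1 − e^{−1/2})·δ_{+∞}; (iii) if r > 1, then T_n converges in distribution to the constant −1 under P_(n), and under Q_(n) the law of T_n converges weakly to e^{−1}·δ_{−1} + (1 − e^{−1})·δ_{+∞}. -/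
open MeasureTheory Filter Topology ProbabilityTheory

noncomputable section

/-- Signal strength `ϑ_n = √(2 r log n)`. -/
def thetaN (r : ℝ) (n : ℕ) : ℝ := Real.sqrt (2 * r * Real.log n)

/-- The single-coordinate alternative
`Q_{n,i} = (1 − n⁻¹)·N(0,1) + n⁻¹·N(ϑ_n, σ₀²)`. -/
def QoneN (r σ0 : ℝ) (n : ℕ) : Measure ℝ :=
  Qmix (gaussianReal 0 1) (gaussianReal (thetaN r n) ⟨σ0 ^ 2, sq_nonneg σ0⟩) ((n : ℝ))⁻¹

/-- The null product measure `P_(n) = ⊗_{i<n} N(0,1)`. -/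
def PprodN (n : ℕ) : Measure (Fin n → ℝ) :=
  Measure.pi (fun _ => gaussianReal 0 1)

/-- The alternative product measure. -/
def QprodN (r σ0 : ℝ) (n : ℕ) : Measure (Fin n → ℝ) :=
  Measure.pi (fun _ => QoneN r σ0 n)

/-- The log-likelihood ratio statistic `T_n`. -/
def TstatN (r σ0 : ℝ) (n : ℕ) (y : Fin n → ℝ) : EReal :=
  ∑ i : Fin n, ENNReal.log (elr (QoneN r σ0 n) (gaussianReal 0 1) (y i))

/-!
Let `g n = dN(ϑ_n, σ₀²)/dN(0, 1)`, so that `R n = ∏ i, (1 - n⁻¹ + n⁻¹ * g n (y i))` is the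
likelihood ratio `dQ_(n)/dP_(n)`. Under the signal law, that is at `ϑ_n + σ₀ * z` with `z` standard
normal, `n⁻¹ * g n` is the exponential of a quadratic polynomial in `√(log n)` with leading
coefficient `r - 1` and, for `r = 1`, linear coefficient a positive multiple of `z`. Hence it tends
to `0` or to `∞`, the latter with probability `p = 0`, `1/2` or `1` for `r < 1`, `r = 1` or `r > 1`.
Truncating `n⁻¹ * g n` at `1` changes `R n` only on a set of vanishing `P_(n)`-probability, and the
first two moments of the truncated product tend to `exp (-p)` and `exp (-2 * p)`, so
`R n → exp (-p)` in `P_(n)`-probability.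

For `p = 0` this gives convergence in total variation by Scheffé's lemma. In general
`∫ f(T_n) dQ_(n) = ∫ R n * f(log (R n)) dP_(n)`; as `R n` has mean `1` but limit `exp (-p)`, the
remaining mass `1 - exp (-p)` sits where `R n` is large, and escapes to `+∞`.
-/

/-- Convergence in probability to a constant along a sequence of probability spaces, the `n`-th
variable living on its own space; `MeasureTheory.TendstoInMeasure` has a single fixed measure. -/
def TendstoInProbability {Ω : ℕ → Type*} [∀ n, MeasurableSpace (Ω n)] (P : ∀ n, Measure (Ω n))
    (X : ∀ n, Ω n → ℝ) (c : ℝ) : Prop :=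
  ∀ δ > 0, Tendsto (fun n => (P n).real {y | δ ≤ |X n y - c|}) atTop (𝓝 0)

section ConvergenceInProbability

variable {Ω : ℕ → Type*} [∀ n, MeasurableSpace (Ω n)] {P : ∀ n, Measure (Ω n)}
  {X Y : ∀ n, Ω n → ℝ} {c : ℝ}

theorem TendstoInProbability.congr_of_tendsto_measure_ne [∀ n, IsFiniteMeasure (P n)]
    (hX : TendstoInProbability P X c)
    (hXY : Tendsto (fun n => (P n).real {y | Y n y ≠ X n y}) atTop (𝓝 0)) :
    TendstoInProbability P Y c := by
  intro δ hδ
  refine squeeze_zero (fun n => measureReal_nonneg) (fun n => ?_)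
    (by simpa only [add_zero] using hXY.add (hX δ hδ))
  refine (measureReal_mono fun y hy => ?_).trans (measureReal_union_le _ _)
  by_cases h : Y n y = X n y
  · exact Or.inr (by simpa only [Set.mem_ofPred_eq, ← h] using hy)
  · exact Or.inl h

variable [∀ n, IsProbabilityMeasure (P n)]

theorem tendstoInProbability_of_tendsto_moments (hX : ∀ n, MemLp (X n) 2 (P n))
    (hmean : Tendsto (fun n => ∫ y, X n y ∂(P n)) atTop (𝓝 c))
    (hsq : Tendsto (fun n => ∫ y, X n y ^ 2 ∂(P n)) atTop (𝓝 (c ^ 2))) :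
    TendstoInProbability P X c := by
  intro δ hδ
  have integral_sq_sub (n : ℕ) : ∫ y, (X n y - c) ^ 2 ∂(P n) =
      ∫ y, X n y ^ 2 ∂(P n) - 2 * c * ∫ y, X n y ∂(P n) + c ^ 2 := by
    have hlin : Integrable (fun y => 2 * c * X n y) (P n) :=
      ((hX n).integrable one_le_two).const_mul _
    calc ∫ y, (X n y - c) ^ 2 ∂(P n)
        = ∫ y, (X n y ^ 2 - 2 * c * X n y + c ^ 2) ∂(P n) := by congr with y; ring
      _ = _ := by
        rw [integral_add ((hX n).integrable_sq.sub' hlin) (integrable_const _),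
          integral_sub (hX n).integrable_sq hlin, integral_const_mul, integral_const,
          probReal_univ, one_smul]
  have hvar : Tendsto (fun n => (∫ y, (X n y - c) ^ 2 ∂(P n)) / δ ^ 2) atTop (𝓝 0) := by
    simp_rw [integral_sq_sub]
    have := ((hsq.sub (hmean.const_mul (2 * c))).add_const (c ^ 2)).div_const (δ ^ 2)
    rwa [show (c ^ 2 - 2 * c * c + c ^ 2) / δ ^ 2 = 0 by ring] at this
  refine squeeze_zero (fun n => measureReal_nonneg) (fun n => ?_) hvar
  have hdev : {y | δ ≤ |X n y - c|} ⊆ {y | δ ^ 2 ≤ (X n y - c) ^ 2} := fun y hy => by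
    simpa only [Set.mem_ofPred_eq, sq_abs] using pow_le_pow_left₀ hδ.le hy 2
  rw [le_div_iff₀' (by positivity)]
  calc δ ^ 2 * (P n).real {y | δ ≤ |X n y - c|}
      ≤ δ ^ 2 * (P n).real {y | δ ^ 2 ≤ (X n y - c) ^ 2} :=
        mul_le_mul_of_nonneg_left (measureReal_mono hdev) (sq_nonneg δ)
    _ ≤ _ := mul_meas_ge_le_integral_of_nonneg (ae_of_all _ fun y => sq_nonneg _)
        ((hX n).sub (memLp_const c)).integrable_sq _

theorem abs_integral_comp_sub_le {Ω : Type*} [MeasurableSpace Ω] {P : Measure Ω}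
    [IsProbabilityMeasure P] {X : Ω → ℝ} (hX : Integrable X P) (hXm : Measurable X)
    (hX_nonneg : ∀ y, 0 ≤ X y) {G : ℝ → ℝ} (hG : Continuous G) {c C ε δ : ℝ} (hε : 0 ≤ ε)
    (hbound : ∀ x, 0 ≤ x → |G x| ≤ C + ε * x) (hnear : ∀ x, |x - c| < δ → |G x - G c| ≤ ε) :
    |∫ y, G (X y) ∂P - G c| ≤
      P.real {y | δ ≤ |X y - c|} * (C + |G c|) + ε * (1 + ∫ y, X y ∂P) := by
  set A : Set Ω := {y | δ ≤ |X y - c|}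
  have hA_meas : MeasurableSet A := measurableSet_le measurable_const (hXm.sub_const c).abs
  have hGX : Integrable (fun y => G (X y)) P :=
    ((integrable_const C).add (hX.const_mul ε)).mono' (hG.measurable.comp hXm).aestronglyMeasurable
      (ae_of_all _ fun y => hbound _ (hX_nonneg y))
  have hA_int : Integrable (A.indicator fun _ => C + |G c|) P :=
    (integrable_const _).indicator hA_meas
  have hlin : Integrable (fun y => ε * (1 + X y)) P := ((integrable_const 1).add hX).const_mul ε
  have hpointwise (y : Ω) :
      |G (X y) - G c| ≤ A.indicator (fun _ => C + |G c|) y + ε * (1 + X y) := by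
    have hεX : 0 ≤ ε * X y := mul_nonneg hε (hX_nonneg y)
    by_cases hy : y ∈ A
    · rw [Set.indicator_of_mem hy]
      linarith [hbound _ (hX_nonneg y), abs_sub (G (X y)) (G c)]
    · rw [Set.indicator_of_notMem hy]
      linarith [hnear (X y) (not_le.1 hy)]
  calc |∫ y, G (X y) ∂P - G c| = |∫ y, (G (X y) - G c) ∂P| := by
        rw [integral_sub hGX (integrable_const _), integral_const, probReal_univ, one_smul]
    _ ≤ ∫ y, |G (X y) - G c| ∂P := abs_integral_le_integral_abs
    _ ≤ ∫ y, (A.indicator (fun _ => C + |G c|) y + ε * (1 + X y)) ∂P :=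
        integral_mono (hGX.sub (integrable_const _)).abs (hA_int.add hlin) hpointwise
    _ = _ := by
        rw [integral_add hA_int hlin, integral_indicator_const _ hA_meas, integral_const_mul,
          integral_add (integrable_const _) hX, integral_const, probReal_univ, one_smul,
          smul_eq_mul]

theorem exists_abs_le_add_mul_of_isLittleO {G : ℝ → ℝ} (hG : Continuous G) (hGo : G =o[atTop] id)
    {ε : ℝ} (hε : 0 < ε) : ∃ C, ∀ x, 0 ≤ x → |G x| ≤ C + ε * x := by
  obtain ⟨K, hK⟩ := eventually_atTop.1 (hGo.bound hε)
  obtain ⟨C, hC⟩ := isCompact_Icc.exists_bound_of_continuousOn (hG.continuousOn (s := Set.Icc 0 K))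
  refine ⟨max C 0, fun x hx => ?_⟩
  rcases le_total K x with h | h
  · calc |G x| ≤ ε * |x| := hK x h
      _ ≤ max C 0 + ε * x := by
        rw [abs_of_nonneg hx]
        exact le_add_of_nonneg_left (le_max_right _ _)
  · calc |G x| ≤ C := hC x ⟨hx, h⟩
      _ ≤ max C 0 + ε * x := le_add_of_le_of_nonneg (le_max_left _ _) (by positivity)

theorem TendstoInProbability.tendsto_integral_comp (hX : TendstoInProbability P X c)
    (hX_int : ∀ n, Integrable (X n) (P n)) (hX_meas : ∀ n, Measurable (X n))
    (hX_nonneg : ∀ n y, 0 ≤ X n y) {M : ℝ} (hM : ∀ n, ∫ y, X n y ∂(P n) ≤ M)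
    {G : ℝ → ℝ} (hG : Continuous G) (hGo : G =o[atTop] id) :
    Tendsto (fun n => ∫ y, G (X n y) ∂(P n)) atTop (𝓝 (G c)) := by
  have hM_nonneg : 0 ≤ M := (integral_nonneg (hX_nonneg 0)).trans (hM 0)
  refine Metric.tendsto_nhds.2 fun e he => ?_
  set ε := e / (M + 2)
  have hε : 0 < ε := by positivity
  have hε_eq : ε * (M + 2) = e := div_mul_cancel₀ _ (by positivity)
  obtain ⟨C, hC⟩ := exists_abs_le_add_mul_of_isLittleO hG hGo hε
  obtain ⟨δ, hδ, hnear⟩ := Metric.continuous_iff.1 hG c ε hε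
  have hsmall : ∀ᶠ n in atTop, (P n).real {y | δ ≤ |X n y - c|} * (C + |G c|) < ε := by
    have := (hX δ hδ).mul_const (C + |G c|)
    rw [zero_mul] at this
    exact this.eventually_lt_const hε
  filter_upwards [hsmall] with n hn
  calc dist (∫ y, G (X n y) ∂(P n)) (G c)
      ≤ (P n).real {y | δ ≤ |X n y - c|} * (C + |G c|) + ε * (1 + ∫ y, X n y ∂(P n)) :=
        abs_integral_comp_sub_le (hX_int n) (hX_meas n) (hX_nonneg n) hG hε.le hC
          fun x hx => (hnear x hx).le
    _ < ε + ε * (1 + M) :=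
        add_lt_add_of_lt_of_le hn (by gcongr; exact hM n)
    _ = e := by rw [← hε_eq]; ring

end ConvergenceInProbability

section TriangularProducts

variable {α : ℕ → Type*} [∀ n, MeasurableSpace (α n)] {P : ∀ n, Measure (α n)}
  [∀ n, IsProbabilityMeasure (P n)]

theorem tendsto_integral_prod_one_add {f : ∀ n, α n → ℝ} (hf : ∀ n, Integrable (f n) (P n)) {m : ℝ}
    (hm : Tendsto (fun n : ℕ => n * ∫ x, f n x ∂(P n)) atTop (𝓝 m)) :
    Tendsto (fun n => ∫ y : Fin n → α n, ∏ i, (1 + f n (y i)) ∂(Measure.pi fun _ => P n)) atTop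
      (𝓝 (Real.exp m)) := by
  refine (Real.tendsto_one_add_pow_exp_of_tendsto hm).congr fun n => ?_
  rw [integral_fintype_prod_eq_pow fun x => 1 + f n x, Fintype.card_fin,
    integral_add (integrable_const 1) (hf n), integral_const, probReal_univ, one_smul]

theorem tendstoInProbability_prod_one_add {f : ∀ n, α n → ℝ} (hf : ∀ n, MemLp (f n) 2 (P n)) {m : ℝ}
    (hm : Tendsto (fun n : ℕ => n * ∫ x, f n x ∂(P n)) atTop (𝓝 m))
    (hsq : Tendsto (fun n : ℕ => n * ∫ x, f n x ^ 2 ∂(P n)) atTop (𝓝 0)) :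
    TendstoInProbability (fun n => Measure.pi fun _ : Fin n => P n)
      (fun n y => ∏ i, (1 + f n (y i))) (Real.exp m) := by
  have hf_int (n : ℕ) : Integrable (f n) (P n) := (hf n).integrable one_le_two
  have hg_int (n : ℕ) : Integrable (fun x => 2 * f n x + f n x ^ 2) (P n) :=
    ((hf_int n).const_mul 2).add (hf n).integrable_sq
  have prod_sq (n : ℕ) (y : Fin n → α n) :
      (∏ i, (1 + f n (y i))) ^ 2 = ∏ i, (1 + (2 * f n (y i) + f n (y i) ^ 2)) := by
    rw [← Finset.prod_pow]
    exact Finset.prod_congr rfl fun i _ => by ring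
  have hprod (n : ℕ) : MemLp (fun y : Fin n → α n => ∏ i, (1 + f n (y i))) 2
      (Measure.pi fun _ => P n) := by
    have h₁ : Integrable (fun x => 1 + f n x) (P n) := (integrable_const 1).add (hf_int n)
    have h₂ : Integrable (fun x => 1 + (2 * f n x + f n x ^ 2)) (P n) :=
      (integrable_const 1).add (hg_int n)
    refine (memLp_two_iff_integrable_sq
      (Integrable.fintype_prod fun _ => h₁).aestronglyMeasurable).2 ?_
    simpa only [prod_sq] using Integrable.fintype_prod fun _ : Fin n => h₂
  refine tendstoInProbability_of_tendsto_moments hprod (tendsto_integral_prod_one_add hf_int hm) ?_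
  have hm_sq : Tendsto (fun n : ℕ => (n : ℝ) * ∫ x, (2 * f n x + f n x ^ 2) ∂(P n)) atTop
      (𝓝 (2 * m)) := by
    have hlim := (hm.const_mul 2).add hsq
    rw [add_zero] at hlim
    refine hlim.congr fun n => ?_
    rw [integral_add ((hf_int n).const_mul 2) (hf n).integrable_sq, integral_const_mul]
    ring
  rw [← Real.exp_nat_mul, Nat.cast_two]
  simpa only [prod_sq] using tendsto_integral_prod_one_add hg_int hm_sq

theorem tendstoInProbability_prod_one_sub_inv_add_of_memLp {f : ∀ n, α n → ℝ}
    (hf : ∀ n, MemLp (f n) 2 (P n)) {m : ℝ}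
    (hm : Tendsto (fun n : ℕ => n * ∫ x, f n x ∂(P n)) atTop (𝓝 m))
    (hsq : Tendsto (fun n : ℕ => n * ∫ x, f n x ^ 2 ∂(P n)) atTop (𝓝 0)) :
    TendstoInProbability (fun n => Measure.pi fun _ : Fin n => P n)
      (fun n y => ∏ i, (1 - (n : ℝ)⁻¹ + f n (y i))) (Real.exp (m - 1)) := by
  have hf_int (n : ℕ) : Integrable (f n) (P n) := (hf n).integrable one_le_two
  have hmean : Tendsto (fun n : ℕ => n * ∫ x, (f n x - (n : ℝ)⁻¹) ∂(P n)) atTop (𝓝 (m - 1)) := by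
    refine (hm.sub_const 1).congr' ?_
    filter_upwards [eventually_ne_atTop 0] with n hn
    rw [integral_sub (hf_int n) (integrable_const _), integral_const, probReal_univ, one_smul,
      mul_sub, mul_inv_cancel₀ (Nat.cast_ne_zero.2 hn)]
  have hmean_sq : Tendsto (fun n : ℕ => n * ∫ x, (f n x - (n : ℝ)⁻¹) ^ 2 ∂(P n)) atTop (𝓝 0) := by
    have hinv : Tendsto (fun n : ℕ => (n : ℝ)⁻¹) atTop (𝓝 0) := tendsto_inv_atTop_nhds_zero_nat
    have hlim := (hsq.sub ((hm.mul hinv).const_mul 2)).add hinv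
    rw [show 0 - 2 * (m * 0) + 0 = (0 : ℝ) by ring] at hlim
    refine hlim.congr' ?_
    filter_upwards [eventually_ne_atTop 0] with n hn
    have hn' : (n : ℝ) ≠ 0 := Nat.cast_ne_zero.2 hn
    have expand (x : α n) : (f n x - (n : ℝ)⁻¹) ^ 2 =
        f n x ^ 2 - 2 * (n : ℝ)⁻¹ * f n x + (n : ℝ)⁻¹ ^ 2 := by ring
    simp_rw [expand]
    rw [integral_add ((hf n).integrable_sq.sub' ((hf_int n).const_mul _)) (integrable_const _),
      integral_sub (hf n).integrable_sq ((hf_int n).const_mul _), integral_const_mul,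
      integral_const, probReal_univ, one_smul]
    field_simp
  simpa only [sub_add_eq_add_sub, add_sub_assoc] using
    tendstoInProbability_prod_one_add (f := fun n x => f n x - (n : ℝ)⁻¹)
      (fun n => (hf n).sub (memLp_const _)) hmean hmean_sq

theorem measureReal_pi_exists_le {ι β : Type*} [Fintype ι] [MeasurableSpace β] (ν : Measure β)
    [IsProbabilityMeasure ν] {s : Set β} (hs : MeasurableSet s) :
    (Measure.pi fun _ : ι => ν).real {y | ∃ i, y i ∈ s} ≤ Fintype.card ι * ν.real s := by
  calc (Measure.pi fun _ : ι => ν).real {y | ∃ i, y i ∈ s}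
      = (Measure.pi fun _ : ι => ν).real (⋃ i, Function.eval i ⁻¹' s) := by
        congr 1
        ext y
        simp only [Set.mem_ofPred_eq, Set.mem_iUnion, Set.mem_preimage, Function.eval]
    _ ≤ ∑ i : ι, (Measure.pi fun _ : ι => ν).real (Function.eval i ⁻¹' s) :=
        measureReal_iUnion_fintype_le _
    _ = Fintype.card ι * ν.real s := by
        simp_rw [(measurePreserving_eval (fun _ : ι => ν) _).measureReal_preimage
          hs.nullMeasurableSet]
        rw [Finset.sum_const, Finset.card_univ, nsmul_eq_mul]

-- Truncating `h` at `1` yields the second moment needed by Chebyshev's inequality, and by Markov's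
-- inequality `n P(1 < h) ≤ n E[min h 1 ^ 2]`, so the truncation is harmless.
theorem tendstoInProbability_prod_one_sub_inv_add {h : ∀ n, α n → ℝ}
    (h_meas : ∀ n, Measurable (h n)) (h_nonneg : ∀ n x, 0 ≤ h n x) {m : ℝ}
    (hm : Tendsto (fun n : ℕ => n * ∫ x, min (h n x) 1 ∂(P n)) atTop (𝓝 m))
    (hsq : Tendsto (fun n : ℕ => n * ∫ x, min (h n x) 1 ^ 2 ∂(P n)) atTop (𝓝 0)) :
    TendstoInProbability (fun n => Measure.pi fun _ : Fin n => P n)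
      (fun n y => ∏ i, (1 - (n : ℝ)⁻¹ + h n (y i))) (Real.exp (m - 1)) := by
  have hk (n : ℕ) : MemLp (fun x => min (h n x) 1) 2 (P n) :=
    MemLp.of_bound ((h_meas n).min measurable_const).aestronglyMeasurable 1 <|
      ae_of_all _ fun x => by
        rw [Real.norm_of_nonneg (le_min (h_nonneg n x) zero_le_one)]
        exact min_le_right _ _
  have htrunc := tendstoInProbability_prod_one_sub_inv_add_of_memLp hk hm hsq
  refine htrunc.congr_of_tendsto_measure_ne
    (squeeze_zero (fun n => measureReal_nonneg) (fun n => ?_) hsq)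
  have hsub : {y : Fin n → α n | ∏ i, (1 - (n : ℝ)⁻¹ + h n (y i)) ≠
      ∏ i, (1 - (n : ℝ)⁻¹ + min (h n (y i)) 1)} ⊆ {y | ∃ i, y i ∈ {x | 1 < h n x}} := by
    intro y hy
    by_contra hle
    refine hy (Finset.prod_congr rfl fun i _ => ?_)
    rw [min_eq_left (not_lt.1 fun hi => hle ⟨i, hi⟩)]
  have hmarkov : (P n).real {x | 1 < h n x} ≤ ∫ x, min (h n x) 1 ^ 2 ∂(P n) :=
    calc (P n).real {x | 1 < h n x} ≤ (P n).real {x | 1 ≤ min (h n x) 1 ^ 2} :=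
          measureReal_mono fun x (hx : 1 < h n x) => by
            simp only [Set.mem_ofPred_eq, min_eq_right hx.le, one_pow, le_refl]
      _ ≤ _ := by
          simpa only [one_mul] using mul_meas_ge_le_integral_of_nonneg
            (ae_of_all _ fun x => sq_nonneg (min (h n x) 1)) (hk n).integrable_sq 1
  calc _ ≤ _ := measureReal_mono hsub
    _ ≤ n * (P n).real {x | 1 < h n x} := by
        simpa only [Fintype.card_fin] using
          measureReal_pi_exists_le (ι := Fin n) (P n) (s := {x | 1 < h n x})
            (measurableSet_lt measurable_const (h_meas n))
    _ ≤ _ := by gcongr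

end TriangularProducts

/-- `R` is an everywhere finite, nonnegative version of the likelihood ratio `dQ/dP`; in
particular `Q ≪ P`. -/
structure IsLikelihoodRatio {α : Type*} [MeasurableSpace α] (P Q : Measure α) (R : α → ℝ) :
    Prop where
  measurable : Measurable R
  nonneg : ∀ x, 0 ≤ R x
  withDensity_eq : P.withDensity (fun x => ENNReal.ofReal (R x)) = Q

namespace IsLikelihoodRatio

variable {α : Type*} [MeasurableSpace α] {P Q : Measure α} {R : α → ℝ}

theorem absolutelyContinuous (h : IsLikelihoodRatio P Q R) : Q ≪ P :=
  h.withDensity_eq ▸ withDensity_absolutelyContinuous _ _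

theorem integrable [IsFiniteMeasure Q] (h : IsLikelihoodRatio P Q R) : Integrable R P := by
  refine ⟨h.measurable.aestronglyMeasurable, ?_⟩
  rw [hasFiniteIntegral_iff_ofReal (ae_of_all _ h.nonneg), ← setLIntegral_univ,
    ← withDensity_apply _ MeasurableSet.univ, h.withDensity_eq]
  exact measure_lt_top Q _

theorem integral_mul (h : IsLikelihoodRatio P Q R) (f : α → ℝ) :
    ∫ x, R x * f x ∂P = ∫ x, f x ∂Q := by
  rw [← h.withDensity_eq, integral_withDensity_eq_integral_toReal_smul
    h.measurable.ennreal_ofReal (ae_of_all _ fun _ => ENNReal.ofReal_lt_top)]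
  simp only [ENNReal.toReal_ofReal (h.nonneg _), smul_eq_mul]

theorem integral_eq_one [IsProbabilityMeasure Q] (h : IsLikelihoodRatio P Q R) :
    ∫ x, R x ∂P = 1 := by
  simpa only [mul_one, integral_const, probReal_univ, one_smul] using h.integral_mul fun _ => 1

theorem ofReal_setIntegral [IsFiniteMeasure Q] (h : IsLikelihoodRatio P Q R) {s : Set α}
    (hs : MeasurableSet s) : ENNReal.ofReal (∫ x in s, R x ∂P) = Q s := by
  rw [ofReal_integral_eq_lintegral_ofReal h.integrable.integrableOn (ae_of_all _ h.nonneg),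
    ← withDensity_apply _ hs, h.withDensity_eq]

theorem setIntegral [IsFiniteMeasure Q] (h : IsLikelihoodRatio P Q R) {s : Set α}
    (hs : MeasurableSet s) : ∫ x in s, R x ∂P = (Q s).toReal := by
  rw [← h.ofReal_setIntegral hs, ENNReal.toReal_ofReal (integral_nonneg h.nonneg)]

theorem qmix (h : IsLikelihoodRatio P Q R) {e : ℝ} (he₀ : 0 ≤ e) (he₁ : e ≤ 1) :
    IsLikelihoodRatio P (Qmix P Q e) (fun x => 1 - e + e * R x) where
  measurable := (h.measurable.const_mul e).const_add (1 - e)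
  nonneg x := add_nonneg (sub_nonneg.2 he₁) (mul_nonneg he₀ (h.nonneg x))
  withDensity_eq := by
    have split : (fun x => ENNReal.ofReal (1 - e + e * R x)) =
        (fun _ => ENNReal.ofReal (1 - e)) +
          ENNReal.ofReal e • fun x => ENNReal.ofReal (R x) := by
      ext x
      rw [ENNReal.ofReal_add (sub_nonneg.2 he₁) (mul_nonneg he₀ (h.nonneg x)),
        ENNReal.ofReal_mul he₀]
      rfl
    rw [split, withDensity_add_left measurable_const, withDensity_const,
      withDensity_smul _ h.measurable.ennreal_ofReal, h.withDensity_eq, Qmix]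

theorem pi {ι : Type*} [Fintype ι] {β : ι → Type*} [∀ i, MeasurableSpace (β i)]
    {P Q : ∀ i, Measure (β i)} [∀ i, SigmaFinite (P i)] [∀ i, IsFiniteMeasure (Q i)]
    {R : ∀ i, β i → ℝ} (h : ∀ i, IsLikelihoodRatio (P i) (Q i) (R i)) :
    IsLikelihoodRatio (Measure.pi P) (Measure.pi Q) (fun y => ∏ i, R i (y i)) where
  measurable := Finset.measurable_prod _ fun i _ => (h i).measurable.comp (measurable_pi_apply i)
  nonneg y := Finset.prod_nonneg fun i _ => (h i).nonneg (y i)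
  withDensity_eq := by
    refine (Measure.pi_eq fun s hs => ?_).symm
    rw [withDensity_apply _ (MeasurableSet.univ_pi hs), Measure.restrict_pi_pi,
      ← ofReal_integral_eq_lintegral_ofReal
        (Integrable.fintype_prod_dep fun i => (h i).integrable.integrableOn)
        (ae_of_all _ fun y => Finset.prod_nonneg fun i _ => (h i).nonneg (y i)),
      integral_fintype_prod_eq_prod,
      ENNReal.ofReal_prod_of_nonneg fun i _ => integral_nonneg (h i).nonneg]
    exact Finset.prod_congr rfl fun i _ => (h i).ofReal_setIntegral (hs i)

theorem elr_ae_eq [SigmaFinite P] [SigmaFinite Q] (h : IsLikelihoodRatio P Q R) :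
    elr Q P =ᵐ[P] fun x => ENNReal.ofReal (R x) := by
  have hderiv := Measure.rnDeriv_withDensity P h.measurable.ennreal_ofReal
  rw [h.withDensity_eq] at hderiv
  filter_upwards [hderiv, Measure.rnDeriv_eq_div_rnDeriv_add Q P] with x hx hdiv
  rw [elr, add_comm, ← hdiv, hx]

end IsLikelihoodRatio

theorem log_prod_eq_sum_log {ι : Type*} (s : Finset ι) (g : ι → ENNReal) :
    ENNReal.log (∏ i ∈ s, g i) = ∑ i ∈ s, ENNReal.log (g i) := by
  classical
  induction s using Finset.induction_on with
  | empty => simp only [Finset.prod_empty, Finset.sum_empty, ENNReal.log_one]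
  | insert a s ha ih =>
    rw [Finset.sum_insert ha, Finset.prod_insert ha, ENNReal.log_mul_add, ih]

theorem IsLikelihoodRatio.sum_log_elr_ae_eq {α ι : Type*} [MeasurableSpace α] [Fintype ι]
    {P Q : Measure α} [SigmaFinite P] [SigmaFinite Q] {R : α → ℝ} (h : IsLikelihoodRatio P Q R) :
    (fun y : ι → α => ∑ i, ENNReal.log (elr Q P (y i))) =ᵐ[Measure.pi fun _ => P]
      fun y => ENNReal.log (ENNReal.ofReal (∏ i, R (y i))) := by
  have hcoord : ∀ᵐ y : ι → α ∂(Measure.pi fun _ => P),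
      ∀ i, elr Q P (y i) = ENNReal.ofReal (R (y i)) :=
    ae_all_iff.2 fun i =>
      (Measure.quasiMeasurePreserving_eval (fun _ : ι => P) i).ae h.elr_ae_eq
  filter_upwards [hcoord] with y hy
  rw [ENNReal.ofReal_prod_of_nonneg fun i _ => h.nonneg _, log_prod_eq_sum_log]
  simp_rw [hy]

section LikelihoodRatioLimits

-- Since `R` has integral `1`, the positive and negative parts of `1 - R` have the same integral;
-- the positive part is bounded, so that convergence in probability controls it.
theorem IsLikelihoodRatio.tvDist_le_integral {α : Type*} [MeasurableSpace α] {P Q : Measure α}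
    [IsProbabilityMeasure P] [IsProbabilityMeasure Q] {R : α → ℝ} (h : IsLikelihoodRatio P Q R) :
    tvDist P Q ≤ 2 * ∫ x, max (1 - R x) 0 ∂P := by
  have h_int : Integrable (fun x => 1 - R x) P := (integrable_const 1).sub h.integrable
  have integral_abs : ∫ x, |1 - R x| ∂P = 2 * ∫ x, max (1 - R x) 0 ∂P := by
    have abs_eq (x : α) : |1 - R x| = 2 * max (1 - R x) 0 - (1 - R x) := by
      rcases le_total (1 - R x) 0 with hx | hx
      · rw [max_eq_right hx, abs_of_nonpos hx]; ring
      · rw [max_eq_left hx, abs_of_nonneg hx]; ring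
    simp_rw [abs_eq]
    rw [integral_sub (h_int.pos_part.const_mul 2) h_int, integral_const_mul,
      integral_sub (integrable_const 1) h.integrable, h.integral_eq_one, integral_const,
      probReal_univ, one_smul, sub_self, sub_zero]
  rw [← integral_abs]
  refine Real.iSup_le (fun ⟨A, hA⟩ => ?_) (integral_nonneg fun _ => abs_nonneg _)
  calc |(P A).toReal - (Q A).toReal| = |∫ x in A, (1 - R x) ∂P| := by
        rw [integral_sub (integrable_const 1).integrableOn h.integrable.integrableOn,
          h.setIntegral hA, setIntegral_const, smul_eq_mul, mul_one, measureReal_def]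
    _ ≤ ∫ x in A, |1 - R x| ∂P := abs_integral_le_integral_abs
    _ ≤ ∫ x, |1 - R x| ∂P := setIntegral_le_integral h_int.abs (ae_of_all _ fun _ => abs_nonneg _)

variable {Ω : ℕ → Type*} [∀ n, MeasurableSpace (Ω n)] {P Q : ∀ n, Measure (Ω n)}
  [∀ n, IsProbabilityMeasure (P n)] [∀ n, IsProbabilityMeasure (Q n)] {R : ∀ n, Ω n → ℝ}

theorem tendsto_integral_comp_likelihoodRatio (hR : ∀ n, IsLikelihoodRatio (P n) (Q n) (R n))
    {c : ℝ} (hc : TendstoInProbability P R c) {G : ℝ → ℝ} (hG : Continuous G)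
    (hGo : G =o[atTop] id) : Tendsto (fun n => ∫ y, G (R n y) ∂(P n)) atTop (𝓝 (G c)) :=
  hc.tendsto_integral_comp (fun n => (hR n).integrable) (fun n => (hR n).measurable)
    (fun n => (hR n).nonneg) (fun n => (hR n).integral_eq_one.le) hG hGo

theorem tendsto_tvDist_of_tendstoInProbability_one
    (hR : ∀ n, IsLikelihoodRatio (P n) (Q n) (R n)) (h1 : TendstoInProbability P R 1) :
    Tendsto (fun n => tvDist (P n) (Q n)) atTop (𝓝 0) := by
  have hG : (fun x : ℝ => max (1 - x) 0) =o[atTop] id := by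
    refine (Asymptotics.isLittleO_zero id atTop).congr' ?_ EventuallyEq.rfl
    filter_upwards [eventually_ge_atTop 1] with x hx
    exact (max_eq_right (sub_nonpos.2 hx)).symm
  have hlim := (tendsto_integral_comp_likelihoodRatio hR h1 (by fun_prop) hG).const_mul 2
  rw [sub_self, max_self, mul_zero] at hlim
  exact squeeze_zero (fun n => Real.iSup_nonneg fun _ => abs_nonneg _)
    (fun n => (hR n).tvDist_le_integral) hlim

theorem continuous_log_ofReal : Continuous fun x : ℝ => ENNReal.log (ENNReal.ofReal x) :=
  ENNReal.continuous_log.comp ENNReal.continuous_ofReal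

theorem tendsto_log_ofReal_atTop :
    Tendsto (fun x : ℝ => ENNReal.log (ENNReal.ofReal x)) atTop (𝓝 ⊤) := by
  rw [← ENNReal.log_top]
  exact (ENNReal.continuous_log.tendsto ⊤).comp ENNReal.tendsto_ofReal_atTop

theorem integral_map_congr_ae {α β : Type*} [MeasurableSpace α] [MeasurableSpace β] {μ : Measure α}
    {T S : α → β} (hS : Measurable S) (hT : T =ᵐ[μ] S) {f : β → ℝ} (hf : StronglyMeasurable f) :
    ∫ z, f z ∂(μ.map T) = ∫ y, f (S y) ∂μ := by
  rw [Measure.map_congr hT, integral_map hS.aemeasurable hf.aestronglyMeasurable]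

theorem integral_ofReal_smul_dirac_add {α : Type*} [TopologicalSpace α] [MeasurableSpace α]
    [OpensMeasurableSpace α] (f : BoundedContinuousFunction α ℝ) {a b : ℝ} (ha : 0 ≤ a) (hb : 0 ≤ b)
    (x y : α) :
    ∫ z, f z ∂(ENNReal.ofReal a • Measure.dirac x + ENNReal.ofReal b • Measure.dirac y) =
      a * f x + b * f y := by
  rw [integral_add_measure ((f.integrable _).smul_measure ENNReal.ofReal_ne_top)
      ((f.integrable _).smul_measure ENNReal.ofReal_ne_top), integral_smul_measure,
    integral_smul_measure, integral_dirac' _ _ f.continuous.stronglyMeasurable,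
    integral_dirac' _ _ f.continuous.stronglyMeasurable, ENNReal.toReal_ofReal ha,
    ENNReal.toReal_ofReal hb, smul_eq_mul, smul_eq_mul]

variable {T : ∀ n, Ω n → EReal} {c : ℝ}

theorem weakLim_map_logLikelihoodRatio_null (hR : ∀ n, IsLikelihoodRatio (P n) (Q n) (R n))
    (hT : ∀ n, T n =ᵐ[P n] fun y => ENNReal.log (ENNReal.ofReal (R n y)))
    (hc : TendstoInProbability P R c) :
    WeakLim (fun n => (P n).map (T n)) (Measure.dirac (ENNReal.log (ENNReal.ofReal c))) := by
  intro f
  have hF : Continuous fun x : ℝ => f (ENNReal.log (ENNReal.ofReal x)) :=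
    f.continuous.comp continuous_log_ofReal
  have hFo : (fun x : ℝ => f (ENNReal.log (ENNReal.ofReal x))) =o[atTop] id :=
    (((f.continuous.tendsto ⊤).comp tendsto_log_ofReal_atTop).isBigO_one ℝ).trans_isLittleO
      (Asymptotics.isLittleO_const_id_atTop (1 : ℝ))
  rw [integral_dirac]
  refine (tendsto_integral_comp_likelihoodRatio hR hc hF hFo).congr fun n => ?_
  exact (integral_map_congr_ae (continuous_log_ofReal.measurable.comp (hR n).measurable) (hT n)
    f.continuous.stronglyMeasurable).symm

-- Under `Q n` the integral of `f` is the integral of `R * f` under `P n`. Subtracting the limit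
-- `f ⊤` makes the integrand `o(R)`; the mass `1 - c` lost by `R` is the mass carried by `⊤`.
theorem weakLim_map_logLikelihoodRatio_alternative
    (hR : ∀ n, IsLikelihoodRatio (P n) (Q n) (R n))
    (hT : ∀ n, T n =ᵐ[P n] fun y => ENNReal.log (ENNReal.ofReal (R n y)))
    (hc : TendstoInProbability P R c) (hc₀ : 0 ≤ c) (hc₁ : c ≤ 1) :
    WeakLim (fun n => (Q n).map (T n))
      (ENNReal.ofReal c • Measure.dirac (ENNReal.log (ENNReal.ofReal c)) +
        ENNReal.ofReal (1 - c) • Measure.dirac ⊤) := by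
  intro f
  set F : ℝ → ℝ := fun x => f (ENNReal.log (ENNReal.ofReal x))
  have hF : Continuous F := f.continuous.comp continuous_log_ofReal
  have hF_top : Tendsto F atTop (𝓝 (f ⊤)) :=
    (f.continuous.tendsto ⊤).comp tendsto_log_ofReal_atTop
  have hG : Continuous fun x => x * (F x - f ⊤) := by fun_prop
  have hGo : (fun x => x * (F x - f ⊤)) =o[atTop] id := by
    have := (Asymptotics.isBigO_refl id atTop).mul_isLittleO
      ((Asymptotics.isLittleO_one_iff ℝ).2 (tendsto_sub_nhds_zero_iff.2 hF_top))
    simpa only [id_eq, mul_one] using! this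
  rw [integral_ofReal_smul_dirac_add f hc₀ (sub_nonneg.2 hc₁),
    show c * F c + (1 - c) * f ⊤ = c * (F c - f ⊤) + f ⊤ by ring]
  refine ((tendsto_integral_comp_likelihoodRatio hR hc hG hGo).add_const (f ⊤)).congr fun n => ?_
  have hS : Measurable fun y => ENNReal.log (ENNReal.ofReal (R n y)) :=
    continuous_log_ofReal.measurable.comp (hR n).measurable
  have hF_int : Integrable (fun y => F (R n y)) (Q n) :=
    Integrable.of_bound (hF.measurable.comp (hR n).measurable).aestronglyMeasurable ‖f‖
      (ae_of_all _ fun y => f.norm_coe_le_norm _)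
  rw [integral_map_congr_ae hS ((hR n).absolutelyContinuous.ae_le (hT n))
      f.continuous.stronglyMeasurable, (hR n).integral_mul fun y => F (R n y) - f ⊤,
    integral_sub hF_int (integrable_const _), integral_const, probReal_univ, one_smul,
    sub_add_cancel]

end LikelihoodRatioLimits

section SparseMixtures

theorem tendsto_integral_comp_of_dichotomy {Z : Type*} [MeasurableSpace Z] {ν : Measure Z}
    [IsFiniteMeasure ν] {u : ℕ → Z → ℝ} (hu_meas : ∀ n, Measurable (u n))
    (hu_nonneg : ∀ n z, 0 ≤ u n z) {D : Set Z} (hD : MeasurableSet D)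
    (hu_zero : ∀ᵐ z ∂ν, z ∉ D → Tendsto (fun n => u n z) atTop (𝓝 0))
    (hu_top : ∀ᵐ z ∂ν, z ∈ D → Tendsto (fun n => u n z) atTop atTop)
    {φ : ℝ → ℝ} (hφ : Continuous φ) {C : ℝ} (hφ_le : ∀ x, 0 ≤ x → |φ x| ≤ C)
    (hφ_top : Tendsto φ atTop (𝓝 0)) :
    Tendsto (fun n => ∫ z, φ (u n z) ∂ν) atTop (𝓝 (ν.real Dᶜ * φ 0)) := by
  rw [← smul_eq_mul, ← integral_indicator_const (φ 0) hD.compl]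
  refine tendsto_integral_of_dominated_convergence (fun _ => C)
    (fun n => (hφ.measurable.comp (hu_meas n)).aestronglyMeasurable) (integrable_const C)
    (fun n => ae_of_all _ fun z => hφ_le _ (hu_nonneg n z)) ?_
  filter_upwards [hu_zero, hu_top] with z hz_zero hz_top
  by_cases hz : z ∈ D
  · rw [Set.indicator_of_notMem (Set.notMem_compl_iff.2 hz)]
    exact hφ_top.comp (hz_top hz)
  · rw [Set.indicator_of_mem (Set.mem_compl hz)]
    exact (hφ.tendsto 0).comp (hz_zero hz)

theorem tendsto_inv_max_one_atTop : Tendsto (fun x : ℝ => (max 1 x)⁻¹) atTop (𝓝 0) :=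
  tendsto_inv_atTop_zero.comp (tendsto_atTop_mono (fun _ => le_max_right _ _) tendsto_id)

theorem mul_inv_max_one (x : ℝ) : x * (max 1 x)⁻¹ = min x 1 := by
  rcases le_total x 1 with h | h
  · rw [max_eq_left h, min_eq_left h, inv_one, mul_one]
  · rw [max_eq_right h, min_eq_right h, mul_inv_cancel₀ (zero_lt_one.trans_le h).ne']

theorem abs_inv_max_one_le_one (x : ℝ) : |(max 1 x)⁻¹| ≤ 1 := by
  rw [abs_of_nonneg (by positivity)]
  exact inv_le_one_of_one_le₀ (le_max_left 1 x)

variable {α : ℕ → Type*} [∀ n, MeasurableSpace (α n)] {P μ : ∀ n, Measure (α n)}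
  {g : ∀ n, α n → ℝ} {Z : Type*} [MeasurableSpace Z] {ν : Measure Z} {X : ∀ n, Z → α n}

theorem IsLikelihoodRatio.mul_integral_inv_mul {α : Type*} [MeasurableSpace α] {P μ : Measure α}
    {g : α → ℝ} (hg : IsLikelihoodRatio P μ g) {X : Z → α} (hX : Measurable X)
    (hμ : ν.map X = μ) {φ : ℝ → ℝ} (hφ : Measurable φ) {a : ℝ} (ha : a ≠ 0) :
    a * ∫ x, a⁻¹ * g x * φ (a⁻¹ * g x) ∂P = ∫ z, φ (a⁻¹ * g (X z)) ∂ν := by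
  calc a * ∫ x, a⁻¹ * g x * φ (a⁻¹ * g x) ∂P = ∫ x, g x * φ (a⁻¹ * g x) ∂P := by
        simp_rw [mul_assoc]
        rw [integral_const_mul, mul_inv_cancel_left₀ ha]
    _ = ∫ x, φ (a⁻¹ * g x) ∂μ := hg.integral_mul _
    _ = ∫ z, φ (a⁻¹ * g (X z)) ∂ν := by
        have hφg : Measurable fun x => φ (a⁻¹ * g x) := hφ.comp (hg.measurable.const_mul _)
        rw [← hμ, integral_map hX.aemeasurable hφg.aestronglyMeasurable]

theorem tendsto_mul_integral_inv_mul_of_dichotomy [IsFiniteMeasure ν]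
    (hg : ∀ n, IsLikelihoodRatio (P n) (μ n) (g n)) (hX : ∀ n, Measurable (X n))
    (hμ : ∀ n, ν.map (X n) = μ n) {D : Set Z} (hD : MeasurableSet D)
    (h_zero : ∀ᵐ z ∂ν, z ∉ D → Tendsto (fun n : ℕ => (n : ℝ)⁻¹ * g n (X n z)) atTop (𝓝 0))
    (h_top : ∀ᵐ z ∂ν, z ∈ D → Tendsto (fun n : ℕ => (n : ℝ)⁻¹ * g n (X n z)) atTop atTop)
    {φ : ℝ → ℝ} (hφ : Continuous φ) {C : ℝ} (hφ_le : ∀ x, 0 ≤ x → |φ x| ≤ C)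
    (hφ_top : Tendsto φ atTop (𝓝 0)) :
    Tendsto (fun n : ℕ => n * ∫ x, (n : ℝ)⁻¹ * g n x * φ ((n : ℝ)⁻¹ * g n x) ∂(P n)) atTop
      (𝓝 (ν.real Dᶜ * φ 0)) := by
  refine (tendsto_integral_comp_of_dichotomy
    (fun n => ((hg n).measurable.comp (hX n)).const_mul (n : ℝ)⁻¹)
    (fun n z => mul_nonneg (by positivity) ((hg n).nonneg _)) hD h_zero h_top hφ hφ_le
    hφ_top).congr' ?_
  filter_upwards [eventually_ne_atTop 0] with n hn
  exact ((hg n).mul_integral_inv_mul (hX n) (hμ n) hφ.measurable (Nat.cast_ne_zero.2 hn)).symm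

theorem tendstoInProbability_sparse_mixture [∀ n, IsProbabilityMeasure (P n)]
    [IsProbabilityMeasure ν]
    (hg : ∀ n, IsLikelihoodRatio (P n) (μ n) (g n)) (hX : ∀ n, Measurable (X n))
    (hμ : ∀ n, ν.map (X n) = μ n) {D : Set Z} (hD : MeasurableSet D)
    (h_zero : ∀ᵐ z ∂ν, z ∉ D → Tendsto (fun n : ℕ => (n : ℝ)⁻¹ * g n (X n z)) atTop (𝓝 0))
    (h_top : ∀ᵐ z ∂ν, z ∈ D → Tendsto (fun n : ℕ => (n : ℝ)⁻¹ * g n (X n z)) atTop atTop) :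
    TendstoInProbability (fun n => Measure.pi fun _ : Fin n => P n)
      (fun n y => ∏ i, (1 - (n : ℝ)⁻¹ + (n : ℝ)⁻¹ * g n (y i))) (Real.exp (-ν.real D)) := by
  have h_nonneg (n : ℕ) (x : α n) : 0 ≤ (n : ℝ)⁻¹ * g n x :=
    mul_nonneg (by positivity) ((hg n).nonneg x)
  have cont_inv : Continuous fun x : ℝ => (max 1 x)⁻¹ :=
    (continuous_const.max continuous_id).inv₀ fun x => by positivity
  have h_mean : Tendsto (fun n : ℕ => n * ∫ x, min ((n : ℝ)⁻¹ * g n x) 1 ∂(P n)) atTop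
      (𝓝 (ν.real Dᶜ)) := by
    simpa only [mul_inv_max_one, max_eq_left zero_le_one, inv_one, mul_one] using
      tendsto_mul_integral_inv_mul_of_dichotomy hg hX hμ hD h_zero h_top cont_inv
        (fun x _ => abs_inv_max_one_le_one x) tendsto_inv_max_one_atTop
  have h_sq : Tendsto (fun n : ℕ => n * ∫ x, min ((n : ℝ)⁻¹ * g n x) 1 ^ 2 ∂(P n)) atTop
      (𝓝 0) := by
    have abs_le (x : ℝ) (hx : 0 ≤ x) : |min x 1 * (max 1 x)⁻¹| ≤ 1 := by
      rw [abs_mul, abs_of_nonneg (le_min hx zero_le_one)]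
      exact mul_le_one₀ (min_le_right x 1) (abs_nonneg _) (abs_inv_max_one_le_one x)
    have cont : Continuous fun x : ℝ => min x 1 * (max 1 x)⁻¹ :=
      (continuous_id.min continuous_const).mul cont_inv
    have tendsto_zero : Tendsto (fun x : ℝ => min x 1 * (max 1 x)⁻¹) atTop (𝓝 0) := by
      refine tendsto_inv_max_one_atTop.congr' ?_
      filter_upwards [eventually_ge_atTop 1] with x hx
      rw [min_eq_right hx, one_mul]
    have mul_eq_sq (x : ℝ) : x * (min x 1 * (max 1 x)⁻¹) = min x 1 ^ 2 := by
      rw [mul_left_comm, mul_inv_max_one, sq]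
    simpa only [mul_eq_sq, min_eq_left zero_le_one, zero_mul, mul_zero] using
      tendsto_mul_integral_inv_mul_of_dichotomy hg hX hμ hD h_zero h_top cont abs_le tendsto_zero
  rw [show -ν.real D = ν.real Dᶜ - 1 by rw [probReal_compl_eq_one_sub hD]; ring]
  exact tendstoInProbability_prod_one_sub_inv_add
    (fun n => (hg n).measurable.const_mul _) h_nonneg h_mean h_sq

end SparseMixtures

section Gaussian

theorem isLikelihoodRatio_gaussianReal (m₀ m : ℝ) {v₀ v : NNReal} (hv₀ : v₀ ≠ 0) (hv : v ≠ 0) :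
    IsLikelihoodRatio (gaussianReal m₀ v₀) (gaussianReal m v)
      (fun x => gaussianPDFReal m v x / gaussianPDFReal m₀ v₀ x) where
  measurable := (measurable_gaussianPDFReal m v).div (measurable_gaussianPDFReal m₀ v₀)
  nonneg x := div_nonneg (gaussianPDFReal_nonneg m v x) (gaussianPDFReal_nonneg m₀ v₀ x)
  withDensity_eq := by
    rw [gaussianReal_of_var_ne_zero m₀ hv₀, gaussianReal_of_var_ne_zero m hv,
      ← withDensity_mul _ (measurable_gaussianPDF m₀ v₀) (by fun_prop)]
    congr with x
    rw [Pi.mul_apply, gaussianPDF_def, gaussianPDF_def,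
      ← ENNReal.ofReal_mul (gaussianPDFReal_nonneg m₀ v₀ x),
      mul_div_cancel₀ _ (gaussianPDFReal_pos m₀ v₀ x hv₀).ne']

theorem gaussianReal_map_affine (m σ : ℝ) :
    (gaussianReal 0 1).map (fun z => m + σ * z) = gaussianReal m (.mk (σ ^ 2) (sq_nonneg σ)) := by
  calc (gaussianReal 0 1).map (fun z => m + σ * z)
      = ((gaussianReal 0 1).map (σ * ·)).map (m + ·) := by
        rw [Measure.map_map (by fun_prop) (by fun_prop)]; rfl
    _ = gaussianReal (σ * 0 + m) (NNReal.mk (σ ^ 2) (sq_nonneg σ) * 1) := by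
        rw [gaussianReal_map_const_mul, gaussianReal_map_const_add]
    _ = _ := by rw [mul_zero, zero_add, mul_one]

theorem gaussianPDFReal_affine_div_standard (m : ℝ) {σ : ℝ} (hσ : 0 < σ) (z : ℝ) :
    gaussianPDFReal m (.mk (σ ^ 2) (sq_nonneg σ)) (m + σ * z) / gaussianPDFReal 0 1 (m + σ * z) =
      σ⁻¹ * Real.exp (((m + σ * z) ^ 2 - z ^ 2) / 2) := by
  have hvar : (NNReal.mk (σ ^ 2) (sq_nonneg σ) : ℝ) = σ ^ 2 := rfl
  have hexp : -(m + σ * z - m) ^ 2 / (2 * σ ^ 2) = -z ^ 2 / 2 := by field_simp; ring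
  simp only [gaussianPDFReal, hvar, hexp, NNReal.coe_one, sub_zero, mul_one]
  rw [Real.sqrt_mul (by positivity), Real.sqrt_sq hσ.le, mul_inv, mul_div_mul_comm,
    mul_div_cancel_left₀ _ (by positivity), ← Real.exp_sub]
  ring_nf

theorem gaussianReal_real_Ioi_mean (m : ℝ) {v : NNReal} (hv : v ≠ 0) :
    (gaussianReal m v).real (Set.Ioi m) = 1 / 2 := by
  have : NullSingletonClass (gaussianReal m v) := nullSingletonClass_gaussianReal hv
  have reflection : (gaussianReal m v).real (Set.Iic m) = (gaussianReal m v).real (Set.Ioi m) := by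
    have hmap : (gaussianReal m v).map (2 * m - ·) = gaussianReal m v := by
      rw [gaussianReal_map_const_sub, two_mul, add_sub_cancel_right]
    rw [measureReal_congr Ioi_ae_eq_Ici]
    conv_lhs => rw [← hmap]
    rw [map_measureReal_apply (by fun_prop) measurableSet_Iic]
    congr 1
    ext x
    simp only [Set.mem_preimage, Set.mem_Iic, Set.mem_Ici]
    constructor <;> intro h <;> linarith
  have := probReal_compl_eq_one_sub (μ := gaussianReal m v) (measurableSet_Ioi (a := m))
  rw [Set.compl_Ioi, reflection] at this
  linarith

end Gaussian

section NormalMixture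

/-- The likelihood ratio `dN(ϑ_n, σ₀²) / dN(0, 1)` of a signal coordinate. -/
def signalRatio (r σ0 : ℝ) (n : ℕ) (x : ℝ) : ℝ :=
  gaussianPDFReal (thetaN r n) (.mk (σ0 ^ 2) (sq_nonneg σ0)) x / gaussianPDFReal 0 1 x

/-- The likelihood ratio `dQ_(n) / dP_(n)`. -/
def prodRatio (r σ0 : ℝ) (n : ℕ) (y : Fin n → ℝ) : ℝ :=
  ∏ i, (1 - (n : ℝ)⁻¹ + (n : ℝ)⁻¹ * signalRatio r σ0 n (y i))

/-- The logarithm of `n⁻¹ * dN(ϑ_n, σ²) / dN(0, 1)` at the signal value `ϑ_n + σ * z`, up to the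
constant `-log σ`, as a polynomial in `s = √(log n)`. -/
def signalExponent (r σ z s : ℝ) : ℝ :=
  (r - 1) * s ^ 2 + √(2 * r) * σ * z * s + (σ ^ 2 - 1) * z ^ 2 / 2

theorem isProbabilityMeasure_qmix {α : Type*} [MeasurableSpace α] (P μ : Measure α)
    [IsProbabilityMeasure P] [IsProbabilityMeasure μ] {e : ℝ} (he₀ : 0 ≤ e) (he₁ : e ≤ 1) :
    IsProbabilityMeasure (Qmix P μ e) := by
  refine ⟨?_⟩
  rw [Qmix, Measure.add_apply, Measure.smul_apply, Measure.smul_apply, measure_univ,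
    measure_univ, smul_eq_mul, smul_eq_mul, mul_one, mul_one,
    ← ENNReal.ofReal_add (sub_nonneg.2 he₁) he₀, sub_add_cancel, ENNReal.ofReal_one]

-- The definition of `QoneN` elaborates the variance in the underlying subtype of `NNReal`;
-- instance search and `rw` need it as an `NNReal`.
theorem qoneN_eq (r σ0 : ℝ) (n : ℕ) :
    QoneN r σ0 n =
      Qmix (gaussianReal 0 1) (gaussianReal (thetaN r n) (.mk (σ0 ^ 2) (sq_nonneg σ0))) (n : ℝ)⁻¹ :=
  rfl

instance isProbabilityMeasure_qoneN (r σ0 : ℝ) (n : ℕ) : IsProbabilityMeasure (QoneN r σ0 n) :=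
  qoneN_eq r σ0 n ▸ isProbabilityMeasure_qmix _ _ (by positivity) (Nat.cast_inv_le_one n)

instance isProbabilityMeasure_pprodN (n : ℕ) : IsProbabilityMeasure (PprodN n) :=
  inferInstanceAs (IsProbabilityMeasure (Measure.pi _))

instance isProbabilityMeasure_qprodN (r σ0 : ℝ) (n : ℕ) : IsProbabilityMeasure (QprodN r σ0 n) :=
  inferInstanceAs (IsProbabilityMeasure (Measure.pi _))

variable {r σ0 : ℝ}

theorem isLikelihoodRatio_signalRatio (hσ0 : σ0 ≠ 0) (n : ℕ) :
    IsLikelihoodRatio (gaussianReal 0 1) (gaussianReal (thetaN r n) (.mk (σ0 ^ 2) (sq_nonneg σ0)))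
      (signalRatio r σ0 n) :=
  isLikelihoodRatio_gaussianReal 0 (thetaN r n) one_ne_zero
    fun h => pow_ne_zero 2 hσ0 (congrArg NNReal.toReal h)

theorem isLikelihoodRatio_qoneN (hσ0 : σ0 ≠ 0) (n : ℕ) :
    IsLikelihoodRatio (gaussianReal 0 1) (QoneN r σ0 n)
      (fun x => 1 - (n : ℝ)⁻¹ + (n : ℝ)⁻¹ * signalRatio r σ0 n x) :=
  qoneN_eq r σ0 n ▸ (isLikelihoodRatio_signalRatio hσ0 n).qmix (by positivity)
    (Nat.cast_inv_le_one n)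

theorem isLikelihoodRatio_prodRatio (hσ0 : σ0 ≠ 0) (n : ℕ) :
    IsLikelihoodRatio (PprodN n) (QprodN r σ0 n) (prodRatio r σ0 n) :=
  IsLikelihoodRatio.pi fun _ => isLikelihoodRatio_qoneN hσ0 n

theorem tstatN_ae_eq (hσ0 : σ0 ≠ 0) (n : ℕ) :
    TstatN r σ0 n =ᵐ[PprodN n] fun y => ENNReal.log (ENNReal.ofReal (prodRatio r σ0 n y)) :=
  (isLikelihoodRatio_qoneN hσ0 n).sum_log_elr_ae_eq

theorem inv_mul_signalRatio (hr : 0 ≤ r) (hσ0 : 0 < σ0) {n : ℕ} (hn : n ≠ 0) (z : ℝ) :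
    (n : ℝ)⁻¹ * signalRatio r σ0 n (thetaN r n + σ0 * z) =
      σ0⁻¹ * Real.exp (signalExponent r σ0 z √(Real.log n)) := by
  have hn' : (0 : ℝ) < n := by positivity
  have log_eq : Real.log n = √(Real.log n) ^ 2 := (Real.sq_sqrt (Real.log_natCast_nonneg n)).symm
  have inv_eq : (n : ℝ)⁻¹ = Real.exp (-√(Real.log n) ^ 2) := by
    rw [← log_eq, Real.exp_neg, Real.exp_log hn']
  have theta_eq : thetaN r n = √(2 * r) * √(Real.log n) := Real.sqrt_mul (by positivity) _
  have hr_sq : √(2 * r) ^ 2 = 2 * r := Real.sq_sqrt (by positivity)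
  rw [signalRatio, gaussianPDFReal_affine_div_standard _ hσ0, inv_eq, theta_eq, mul_left_comm,
    ← Real.exp_add, signalExponent]
  congr 2
  linear_combination √(Real.log n) ^ 2 / 2 * hr_sq

theorem tendsto_quadratic_atTop {a : ℝ} (ha : 0 < a) (b c : ℝ) :
    Tendsto (fun s => a * s ^ 2 + b * s + c) atTop atTop := by
  have h : Tendsto (fun s => s * (a * s + b) + c) atTop atTop :=
    tendsto_atTop_add_const_right _ c <| tendsto_id.atTop_mul_atTop₀ <|
      tendsto_atTop_add_const_right _ b (tendsto_id.const_mul_atTop ha)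
  refine h.congr fun s => ?_
  ring

theorem tendsto_signalExponent_atTop (hr : 1 < r) (σ z : ℝ) :
    Tendsto (signalExponent r σ z) atTop atTop :=
  tendsto_quadratic_atTop (sub_pos.2 hr) _ _

theorem tendsto_signalExponent_atBot (hr : r < 1) (σ z : ℝ) :
    Tendsto (signalExponent r σ z) atTop atBot := by
  refine (tendsto_neg_atTop_atBot.comp (tendsto_quadratic_atTop (sub_pos.2 hr)
    (-(√(2 * r) * σ * z)) (-((σ ^ 2 - 1) * z ^ 2 / 2)))).congr fun s => ?_
  simp only [Function.comp_apply, signalExponent]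
  ring

theorem tendsto_signalExponent_one_atTop {σ z : ℝ} (hσ : 0 < σ) (hz : 0 < z) :
    Tendsto (signalExponent 1 σ z) atTop atTop := by
  unfold signalExponent
  simp only [sub_self, zero_mul, zero_add]
  exact tendsto_atTop_add_const_right _ _ (tendsto_id.const_mul_atTop (by positivity))

theorem tendsto_signalExponent_one_atBot {σ z : ℝ} (hσ : 0 < σ) (hz : z < 0) :
    Tendsto (signalExponent 1 σ z) atTop atBot := by
  unfold signalExponent
  simp only [sub_self, zero_mul, zero_add]
  exact tendsto_atBot_add_const_right _ _
    (tendsto_id.const_mul_atTop_of_neg (mul_neg_of_pos_of_neg (by positivity) hz))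

theorem tendstoInProbability_prodRatio (hr : 0 ≤ r) (hσ0 : 0 < σ0) {D : Set ℝ}
    (hD : MeasurableSet D)
    (h_bot : ∀ᵐ z ∂(gaussianReal 0 1), z ∉ D → Tendsto (signalExponent r σ0 z) atTop atBot)
    (h_top : ∀ᵐ z ∂(gaussianReal 0 1), z ∈ D → Tendsto (signalExponent r σ0 z) atTop atTop) :
    TendstoInProbability PprodN (prodRatio r σ0) (Real.exp (-(gaussianReal 0 1).real D)) := by
  have sqrt_log : Tendsto (fun n : ℕ => √(Real.log n)) atTop atTop :=
    Real.tendsto_sqrt_atTop.comp (Real.tendsto_log_atTop.comp tendsto_natCast_atTop_atTop)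
  have ratio_eq (z : ℝ) : (fun n : ℕ => σ0⁻¹ * Real.exp (signalExponent r σ0 z √(Real.log n)))
      =ᶠ[atTop] fun n => (n : ℝ)⁻¹ * signalRatio r σ0 n (thetaN r n + σ0 * z) := by
    filter_upwards [eventually_ne_atTop 0] with n hn
    exact (inv_mul_signalRatio hr hσ0 hn z).symm
  refine tendstoInProbability_sparse_mixture (isLikelihoodRatio_signalRatio hσ0.ne')
    (fun n => by fun_prop) (fun n => gaussianReal_map_affine (thetaN r n) σ0) hD ?_ ?_
  · filter_upwards [h_bot] with z hz hzD
    have := (Real.tendsto_exp_atBot.comp ((hz hzD).comp sqrt_log)).const_mul σ0⁻¹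
    rw [mul_zero] at this
    exact this.congr' (ratio_eq z)
  · filter_upwards [h_top] with z hz hzD
    exact ((Real.tendsto_exp_atTop.comp ((hz hzD).comp sqrt_log)).const_mul_atTop
      (inv_pos.2 hσ0)).congr' (ratio_eq z)

theorem tendstoInProbability_prodRatio_of_lt_one (hr₀ : 0 ≤ r) (hr : r < 1) (hσ0 : 0 < σ0) :
    TendstoInProbability PprodN (prodRatio r σ0) 1 := by
  simpa only [measureReal_empty, neg_zero, Real.exp_zero] using
    tendstoInProbability_prodRatio hr₀ hσ0 MeasurableSet.empty
      (ae_of_all _ fun z _ => tendsto_signalExponent_atBot hr σ0 z)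
      (ae_of_all _ fun _ hz => hz.elim)

theorem tendstoInProbability_prodRatio_one (hσ0 : 0 < σ0) :
    TendstoInProbability PprodN (prodRatio 1 σ0) (Real.exp (-(1 / 2))) := by
  have : NullSingletonClass (gaussianReal 0 1) := nullSingletonClass_gaussianReal one_ne_zero
  rw [← gaussianReal_real_Ioi_mean 0 one_ne_zero]
  refine tendstoInProbability_prodRatio zero_le_one hσ0 measurableSet_Ioi ?_
    (ae_of_all _ fun z hz => tendsto_signalExponent_one_atTop hσ0 hz)
  filter_upwards [measure_eq_zero_iff_ae_notMem.1 (measure_singleton (0 : ℝ))] with z hz hzD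
  exact tendsto_signalExponent_one_atBot hσ0 (lt_of_le_of_ne (not_lt.1 hzD) hz)

theorem tendstoInProbability_prodRatio_of_one_lt (hr : 1 < r) (hσ0 : 0 < σ0) :
    TendstoInProbability PprodN (prodRatio r σ0) (Real.exp (-1)) := by
  simpa only [probReal_univ] using
    tendstoInProbability_prodRatio (zero_le_one.trans hr.le) hσ0 MeasurableSet.univ
      (ae_of_all _ fun z hz => (hz (Set.mem_univ z)).elim)
      (ae_of_all _ fun z _ => tendsto_signalExponent_atTop hr σ0 z)

theorem weakLim_tstatN (hσ0 : σ0 ≠ 0) {p : ℝ} (hp : 0 ≤ p)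
    (h : TendstoInProbability PprodN (prodRatio r σ0) (Real.exp (-p))) :
    WeakLim (fun n => (PprodN n).map (TstatN r σ0 n)) (Measure.dirac ((-p : ℝ) : EReal)) ∧
      WeakLim (fun n => (QprodN r σ0 n).map (TstatN r σ0 n))
        (ENNReal.ofReal (Real.exp (-p)) • Measure.dirac ((-p : ℝ) : EReal) +
          ENNReal.ofReal (1 - Real.exp (-p)) • Measure.dirac (⊤ : EReal)) := by
  have log_eq : ((-p : ℝ) : EReal) = ENNReal.log (ENNReal.ofReal (Real.exp (-p))) := by
    rw [ENNReal.log_ofReal_of_pos (Real.exp_pos _), Real.log_exp]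
  rw [log_eq]
  have hR := isLikelihoodRatio_prodRatio (r := r) hσ0
  exact ⟨weakLim_map_logLikelihoodRatio_null hR (tstatN_ae_eq hσ0) h,
    weakLim_map_logLikelihoodRatio_alternative hR (tstatN_ae_eq hσ0) h (Real.exp_nonneg _)
      (Real.exp_le_one_iff.2 (neg_nonpos.2 hp))⟩

end NormalMixture

/-- heteroscedastic normal mixture, extension of the detection
boundary to `β = 1`, i.e. `ε_n = n⁻¹`. -/
theorem statement16 (r σ0 : ℝ) (hσ0 : 0 < σ0) (hrpos : 0 < r) :
    -- (i) r < 1: undetectable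
    (r < 1 →
      Tendsto (fun n => tvDist (PprodN n) (QprodN r σ0 n)) atTop (nhds 0)) ∧
    -- (ii) r = 1
    (r = 1 →
      WeakLim (fun n => (PprodN n).map (TstatN r σ0 n))
        (Measure.dirac ((-(1 / 2) : ℝ) : EReal)) ∧
      WeakLim (fun n => (QprodN r σ0 n).map (TstatN r σ0 n))
        ((ENNReal.ofReal (Real.exp (-(1 / 2)))) • Measure.dirac ((-(1 / 2) : ℝ) : EReal) +
          (ENNReal.ofReal (1 - Real.exp (-(1 / 2)))) • Measure.dirac (⊤ : EReal))) ∧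
    -- (iii) r > 1
    (1 < r →
      WeakLim (fun n => (PprodN n).map (TstatN r σ0 n))
        (Measure.dirac ((-1 : ℝ) : EReal)) ∧
      WeakLim (fun n => (QprodN r σ0 n).map (TstatN r σ0 n))
        ((ENNReal.ofReal (Real.exp (-1))) • Measure.dirac ((-1 : ℝ) : EReal) +
          (ENNReal.ofReal (1 - Real.exp (-1))) • Measure.dirac (⊤ : EReal))) := by
  refine ⟨fun hr => ?_, fun hr => ?_, fun hr => ?_⟩
  · exact tendsto_tvDist_of_tendstoInProbability_one (isLikelihoodRatio_prodRatio hσ0.ne')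
      (tendstoInProbability_prodRatio_of_lt_one hrpos.le hr hσ0)
  · subst hr
    exact weakLim_tstatN hσ0.ne' one_half_pos.le (tendstoInProbability_prodRatio_one hσ0)
  · exact weakLim_tstatN hσ0.ne' zero_le_one (tendstoInProbability_prodRatio_of_one_lt hr hσ0)

end
end
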